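/- arXiv:2007.14115 — 3 statements merged into one kernel-verified Lean document; each statement's English description precedes it below -/
import Mathlib

section
/- Let G be an abelian group of finite order v, let p be a prime dividing v with v ≠ p, and suppose the Sylow p-subgroup of G is cyclic. Then G contains no nontrivial regular partial difference set; that is, for any parameters (v,k,λ,μ), every regular (v,k,λ,μ)-partial difference set D in G is trivial. -/
/-- `D` is a `(v,k,λ,μ)` partial difference set in the group `G` (written
multiplicatively): `|G| = v`, `|D| = k`, every non-identity element of `D` is represented
exactly `lam` times as `g * h⁻¹` with `g, h ∈ D`, `g ≠ h`, and every non-identity element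
of `G` not in `D` exactly `mu` times. -/
def IsPDS {G : Type*} [Group G] (D : Set G) (v k lam mu : ℕ) : Prop :=
  Nat.card G = v ∧ D.ncard = k ∧
  (∀ z : G, z ≠ 1 → z ∈ D →
    {p : G × G | p.1 ∈ D ∧ p.2 ∈ D ∧ p.1 ≠ p.2 ∧ p.1 * p.2⁻¹ = z}.ncard = lam) ∧
  (∀ z : G, z ≠ 1 → z ∉ D →
    {p : G × G | p.1 ∈ D ∧ p.2 ∈ D ∧ p.1 ≠ p.2 ∧ p.1 * p.2⁻¹ = z}.ncard = mu)

/-- `D` is regular: it avoids the identity and is closed under inversion. -/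
def IsRegularPDS {G : Type*} [Group G] (D : Set G) : Prop :=
  (1 : G) ∉ D ∧ ∀ g ∈ D, g⁻¹ ∈ D

/-- `D` is a trivial PDS: `D ∪ {1}` or `G \ D` is a subgroup of `G`. -/
def IsTrivialPDS {G : Type*} [Group G] (D : Set G) : Prop :=
  (∃ H : Subgroup G, D ∪ {1} = (H : Set G)) ∨ ∃ H : Subgroup G, Dᶜ = (H : Set G)

open Finset

/-- group ring element with prescribed coefficients -/
noncomputable def mkEl {K G : Type*} [Semiring K] [Fintype G] (f : G → K) : MonoidAlgebra K G :=
  MonoidAlgebra.ofCoeff (Finsupp.equivFunOnFinite.symm f)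

lemma mkEl_coeff {K G : Type*} [Semiring K] [Fintype G] (f : G → K) (x : G) :
    (mkEl f).coeff x = f x := rfl

lemma coeff_mul_fin {K G : Type*} [CommRing K] [CommGroup G] [Fintype G]
    (a b : MonoidAlgebra K G) (x : G) :
    (a * b).coeff x = ∑ g, a.coeff g * b.coeff (g⁻¹ * x) := by
  rw [MonoidAlgebra.coeff_mul_apply_left, Finsupp.sum_fintype]
  intro i; simp

lemma eq_sum_single {K G : Type*} [CommRing K] [CommGroup G] [Fintype G]
    (a : MonoidAlgebra K G) : a = ∑ g, MonoidAlgebra.single g (a.coeff g) := by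
  classical
  ext x
  simp [MonoidAlgebra.coeff_sum]

lemma frob {G : Type*} [CommGroup G] [Fintype G] (p : ℕ) [Fact p.Prime] (M : ℕ)
    (a : MonoidAlgebra (ZMod p) G) :
    a ^ (p ^ M) = ∑ g, MonoidAlgebra.single (g ^ (p ^ M)) (a.coeff g) := by
  have : CharP (MonoidAlgebra (ZMod p) G) p :=
    charP_of_injective_algebraMap (algebraMap (ZMod p) (MonoidAlgebra (ZMod p) G)).injective p
  have : ExpChar (MonoidAlgebra (ZMod p) G) p := ExpChar.prime Fact.out
  conv_lhs => rw [eq_sum_single a]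
  rw [sum_pow_char_pow]
  refine Finset.sum_congr rfl fun g _ => ?_
  rw [MonoidAlgebra.single_pow, ZMod.pow_card_pow]

open Classical in
/-- symmetric set without identity with the PDS equation -/
structure GoodSet {G : Type*} [CommGroup G] [Fintype G] (D : Finset G) (β γ μ : ℤ) : Prop where
  one : (1 : G) ∉ D
  inv : ∀ g ∈ D, g⁻¹ ∈ D
  cnt : ∀ x : G, ((D.filter (fun g => g⁻¹ * x ∈ D)).card : ℤ) =
    β * (if x ∈ D then 1 else 0) + γ * (if x = 1 then 1 else 0) + μ

open Classical in
/-- indicator element -/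
noncomputable def elt {G : Type*} (K : Type*) [CommRing K] [Fintype G] (D : Finset G) :
    MonoidAlgebra K G := mkEl (fun x => if x ∈ D then 1 else 0)

section
open Classical
variable {G : Type*} [CommGroup G] [Fintype G] {D : Finset G} {β γ μ : ℤ}

lemma elt_coeff (K : Type*) [CommRing K] (x : G) :
    (elt K D).coeff x = if x ∈ D then 1 else 0 := rfl

lemma one_coeff (K : Type*) [CommRing K] (x : G) :
    (1 : MonoidAlgebra K G).coeff x = if x = 1 then 1 else 0 := by
  rw [MonoidAlgebra.one_def, MonoidAlgebra.coeff_single, Finsupp.single_apply]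
  simp [eq_comm]

lemma elt_mul_coeff (K : Type*) [CommRing K] (x : G) :
    (elt K D * elt K D).coeff x = ((D.filter (fun g => g⁻¹ * x ∈ D)).card : K) := by
  rw [coeff_mul_fin]
  simp only [elt_coeff]
  simp [Finset.sum_ite, ← ite_and]
  congr 2
  ext; simp [and_comm]

lemma elt_sq (h : GoodSet D β γ μ) (K : Type*) [CommRing K] :
    elt K D * elt K D = (β : K) • elt K D + (γ : K) • (1 : MonoidAlgebra K G)
      + (μ : K) • elt K univ := by
  ext x
  have := congrArg (Int.cast : ℤ → K) (h.cnt x)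
  rw [elt_mul_coeff]
  simp only [MonoidAlgebra.coeff_add, MonoidAlgebra.coeff_smul, Finsupp.add_apply,
    Finsupp.smul_apply, elt_coeff, one_coeff, smul_eq_mul, mem_univ, if_true]
  push_cast at this
  rw [mul_one, ← this]

lemma elt_mul_univ (K : Type*) [CommRing K] :
    elt K D * elt K univ = (D.card : K) • elt K univ := by
  ext x
  rw [coeff_mul_fin]
  simp [elt_coeff]

lemma pow_form (h : GoodSet D β γ μ) (K : Type*) [CommRing K] (n : ℕ) :
    ∃ a b : K, (∃ c : K, elt K D ^ n = a • elt K D + b • (1 : MonoidAlgebra K G) + c • elt K univ) ∧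
      ∀ E : MonoidAlgebra K G, E * E = (β : K) • E + (γ : K) • (1 : MonoidAlgebra K G) →
        E ^ n = a • E + b • (1 : MonoidAlgebra K G) := by
  induction n with
  | zero => exact ⟨0, 1, ⟨0, by simp⟩, fun E _ => by simp⟩
  | succ n ih =>
    obtain ⟨a, b, ⟨c, hc⟩, hE⟩ := ih
    refine ⟨a * β + b, a * γ, ⟨a * μ + c * D.card, ?_⟩, fun E hEE => ?_⟩
    · rw [pow_succ, hc, add_mul, add_mul, smul_mul_assoc, smul_mul_assoc, smul_mul_assoc,
        elt_sq h, mul_comm (elt K univ), elt_mul_univ, one_mul]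
      module
    · rw [pow_succ, hE E hEE, add_mul, smul_mul_assoc, smul_mul_assoc, hEE, one_mul]
      module

lemma mult_prime (h : GoodSet D β γ μ) (hD : ∃ x ∈ D, ∃ y, y ≠ 1 ∧ y ∉ D)
    (r : ℕ) (hr : r.Prime) (hc : (Nat.card G).Coprime r) (x y : G) (hx : x ≠ 1) (hy : y ≠ 1) :
    (x ∈ D ↔ y ∈ D) ↔ (x ^ r ∈ D ↔ y ^ r ∈ D) := by
  have : Fact r.Prime := ⟨hr⟩
  obtain ⟨a, b, ⟨c, hc'⟩, -⟩ := pow_form h (ZMod r) r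
  have inj : Function.Injective (fun g : G => g ^ r) := hc.pow_left_bijective.injective
  have key : ∀ w : G, w ≠ 1 → (if w ∈ D then (1 : ZMod r) else 0) =
      a * (if w ^ r ∈ D then 1 else 0) + c := by
    intro w hw
    have h1 := frob r 1 (elt (ZMod r) D)
    rw [pow_one] at h1
    rw [h1] at hc'
    have h2 := congrArg (fun q => q.coeff (w ^ r)) hc'
    simp only [MonoidAlgebra.coeff_add, MonoidAlgebra.coeff_smul, Finsupp.add_apply,
      Finsupp.smul_apply, elt_coeff, one_coeff, smul_eq_mul, mem_univ, if_true,
      MonoidAlgebra.coeff_sum, MonoidAlgebra.coeff_single, Finsupp.finsetSum_apply,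
      Finsupp.single_apply] at h2
    have hw' : w ^ r ≠ 1 := fun e => hw (inj (by simpa using e))
    rw [if_neg hw'] at h2
    have h3 : ∀ g : G, (g ^ r = w ^ r) = (g = w) := fun g => by
      rw [eq_iff_iff]; exact inj.eq_iff (a := g) (b := w)
    simp only [h3] at h2
    simpa using h2
  have ha : a ≠ 0 := by
    rintro rfl
    obtain ⟨d, hd, e, he, heD⟩ := hD
    have h1 := key d (fun e => h.one (e ▸ hd))
    have h2 := key e he
    simp only [hd, heD, if_true, if_false, zero_mul, zero_add] at h1 h2
    rw [← h2] at h1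
    exact one_ne_zero h1
  have hx' := key x hx
  have hy' := key y hy
  have h01 : ∀ (P Q : Prop) [Decidable P] [Decidable Q], (P ↔ Q) ↔ (if P then (1 : ZMod r) else 0) = if Q then 1 else 0 := by
    intro P Q _ _
    by_cases P <;> by_cases Q <;> simp [*]
  rw [h01 (x ∈ D), h01 (x ^ r ∈ D), hx', hy', add_left_inj, mul_right_inj' ha]

lemma mult_all (h : GoodSet D β γ μ) (hD : ∃ x ∈ D, ∃ y, y ≠ 1 ∧ y ∉ D)
    (t : ℕ) : (Nat.card G).Coprime t → ∀ (x y : G) (_ : x ≠ 1) (_ : y ≠ 1),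
    ((x ∈ D ↔ y ∈ D) ↔ (x ^ t ∈ D ↔ y ^ t ∈ D)) := by
  induction t using Nat.recOnMul with
  | zero =>
    intro hc x y hx hy
    rw [Nat.coprime_zero_right, Nat.card_eq_one_iff_unique] at hc
    exact absurd (hc.1.elim x 1) hx
  | one => intro hc x y hx hy; simp
  | prime r hr => exact fun hc x y hx hy => mult_prime h hD r hr hc x y hx hy
  | mul a b ha hb =>
    intro hc x y hx hy
    have hca := Nat.Coprime.coprime_mul_right_right hc
    have hcb := Nat.Coprime.coprime_mul_left_right hc
    rw [ha hca x y hx hy, pow_mul, pow_mul]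
    have inj := hca.pow_left_bijective.injective
    exact hb hcb _ _ (fun e => hx (inj (by simpa using e))) (fun e => hy (inj (by simpa using e)))

lemma triv_mu0 (h : GoodSet D β γ μ) (h0 : μ = 0) : IsTrivialPDS (D : Set G) := by
  left
  refine ⟨{ carrier := (D : Set G) ∪ {1}, mul_mem' := ?_, one_mem' := by simp, inv_mem' := ?_ }, rfl⟩
  · intro a b ha hb
    simp only [Set.mem_union, mem_coe, Set.mem_singleton_iff] at *
    rcases ha with ha | rfl
    · rcases hb with hb | rfl
      · by_contra hc
        push Not at hc
        have := h.cnt (a * b)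
        rw [if_neg hc.1, if_neg hc.2, h0] at this
        simp only [mul_zero, add_zero, Nat.cast_eq_zero, Finset.card_eq_zero] at this
        have hm : a ∈ D.filter (fun g => g⁻¹ * (a * b) ∈ D) := by simp [ha, hb]
        rw [this] at hm
        simp at hm
      · simp [ha]
    · simpa using hb
  · intro a ha
    simp only [Set.mem_union, mem_coe, Set.mem_singleton_iff] at *
    rcases ha with ha | rfl
    · exact Or.inl (h.inv a ha)
    · simp

lemma triv_inv (h : GoodSet D β γ μ) (z : G) (hz1 : z ≠ 1) (hzD : z ∉ D)
    (hz : ∀ x, x * z ∈ D ↔ x ∈ D) : IsTrivialPDS (D : Set G) := by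
  right
  have hinv : ∀ g, g⁻¹ ∈ D ↔ g ∈ D := fun g =>
    ⟨fun hg => by simpa using h.inv _ hg, h.inv g⟩
  have hmu : μ = D.card := by
    have := h.cnt z
    rw [if_neg hz1, if_neg hzD] at this
    simp only [hz, hinv] at this
    simpa using this.symm
  -- every element outside `D` stabilises `D`
  have hst : ∀ x, x ∉ D → ∀ g ∈ D, g * x ∈ D := by
    intro x hx g hg
    by_cases hx1 : x = 1
    · simpa [hx1] using hg
    have := h.cnt x
    rw [if_neg hx1, if_neg hx, hmu] at this
    have h2 : (D.filter (fun g => g⁻¹ * x ∈ D)).card = D.card := by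
      have : ((D.filter (fun g => g⁻¹ * x ∈ D)).card : ℤ) = D.card := by linarith
      exact_mod_cast this
    have h3 := Finset.filter_card_eq h2 g⁻¹ (h.inv g hg)
    simpa using h3
  refine ⟨{ carrier := (D : Set G)ᶜ, mul_mem' := ?_, one_mem' := by simpa using h.one, inv_mem' := ?_ }, rfl⟩
  · intro a b ha hb
    simp only [Set.mem_compl_iff, mem_coe] at *
    intro hc
    have := hst b⁻¹ (by rwa [hinv]) _ hc
    simp at this
    exact ha this
  · intro a ha
    simp only [Set.mem_compl_iff, mem_coe] at *
    rwa [hinv]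

lemma compl_good (h : GoodSet D β γ μ) :
    ∃ β' γ' μ' : ℤ, GoodSet (univ.filter (fun x => x ≠ 1 ∧ x ∉ D)) β' γ' μ' := by
  refine ⟨-(β + 2), γ - β - 1, (univ : Finset G).card - 2 * D.card + μ + β, ?_, ?_, ?_⟩
  · simp
  · intro g hg
    simp only [mem_filter, mem_univ, true_and] at *
    refine ⟨by simpa using hg.1, fun hc => hg.2 (by simpa using h.inv _ hc)⟩
  · intro x
    have e : elt ℤ (univ.filter (fun x => x ≠ 1 ∧ x ∉ D)) = elt ℤ univ - 1 - elt ℤ D := by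
      ext y
      simp only [MonoidAlgebra.coeff_sub, Finsupp.sub_apply, elt_coeff, one_coeff]
      have := h.one
      by_cases h1 : y = 1
      · subst h1; simp [this]
      · by_cases h2 : y ∈ D <;> simp [h1, h2]
    have h1 := elt_sq h ℤ
    have h2 := elt_mul_univ (D := D) ℤ
    have h3 := elt_mul_univ (D := (univ : Finset G)) ℤ
    have h4 : elt ℤ (univ.filter (fun x => x ≠ 1 ∧ x ∉ D)) * elt ℤ (univ.filter (fun x => x ≠ 1 ∧ x ∉ D))
      = (-(β + 2)) • elt ℤ (univ.filter (fun x => x ≠ 1 ∧ x ∉ D)) + (γ - β - 1) • (1 : MonoidAlgebra ℤ G)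
        + ((univ : Finset G).card - 2 * D.card + μ + β : ℤ) • elt ℤ univ := by
      rw [e]
      have : (elt ℤ univ - 1 - elt ℤ D) * (elt ℤ univ - 1 - elt ℤ D) =
        elt ℤ (univ : Finset G) * elt ℤ univ + 1 + elt ℤ D * elt ℤ D - elt ℤ univ - elt ℤ univ
          - elt ℤ D * elt ℤ univ - elt ℤ D * elt ℤ univ + elt ℤ D + elt ℤ D := by ring
      rw [this, h1, h2, h3]
      simp only [Int.cast_id]
      module
    have h5 := congrArg (fun q => q.coeff x) h4
    simp only [elt_mul_coeff, MonoidAlgebra.coeff_add, MonoidAlgebra.coeff_smul, Finsupp.add_apply,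
      Finsupp.smul_apply, elt_coeff, one_coeff, smul_eq_mul] at h5
    simpa using h5

lemma triv_of_compl (h1 : (1 : G) ∉ D)
    (h : IsTrivialPDS ((univ.filter (fun x => x ≠ 1 ∧ x ∉ D) : Finset G) : Set G)) :
    IsTrivialPDS (D : Set G) := by
  rcases h with ⟨H, hH⟩ | ⟨H, hH⟩
  · right
    refine ⟨H, ?_⟩
    rw [← hH]
    ext x
    by_cases hx : x = 1
    · subst hx; simp [h1]
    · simp [hx]
  · left
    refine ⟨H, ?_⟩
    rw [← hH]
    ext x
    by_cases hx : x = 1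
    · subst hx; simp
    · simp [hx]

lemma card_torsion (p : ℕ) (hp : p.Prime) (hcyc : ∀ P : Sylow p G, IsCyclic P) :
    (univ.filter (fun x : G => x ^ p = 1)).card ≤ p := by
  have hK : IsPGroup p (powMonoidHom p : G →* G).ker := by
    intro x
    refine ⟨1, ?_⟩
    have := x.2
    rw [MonoidHom.mem_ker, powMonoidHom_apply] at this
    ext
    simpa using this
  obtain ⟨P, hP⟩ := hK.exists_le_sylow
  have := hcyc P
  have h1 := IsCyclic.card_pow_eq_one_le (α := P) hp.pos
  refine le_trans (le_trans (Finset.card_le_card ?_)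
    (Finset.card_image_le (f := fun a : P => (a : G)))) h1
  intro x hx
  simp only [mem_filter, mem_univ, true_and] at hx
  have hxP : x ∈ (P : Subgroup G) := hP (by simpa [MonoidHom.mem_ker] using hx)
  simp only [mem_image, mem_filter, mem_univ, true_and]
  exact ⟨⟨x, hxP⟩, by ext; simpa using hx, rfl⟩

lemma exists_pow_of_torsion (p : ℕ) (hp : p.Prime)
    (ht : (univ.filter (fun x : G => x ^ p = 1)).card ≤ p) (w u : G) (hw : orderOf w = p)
    (hu : u ^ p = 1) : ∃ c : ℕ, u = w ^ c := by
  have hsub : (range p).image (fun i => w ^ i) ⊆ univ.filter (fun x : G => x ^ p = 1) := by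
    intro y hy
    obtain ⟨i, -, rfl⟩ := mem_image.1 hy
    simp only [mem_filter, mem_univ, true_and]
    rw [← pow_mul, mul_comm, pow_mul, ← hw, pow_orderOf_eq_one, one_pow]
  have hcard : ((range p).image (fun i => w ^ i)).card = p := by
    rw [Finset.card_image_of_injOn, card_range]
    intro i hi j hj hij
    simp only [coe_range, Set.mem_Iio] at hi hj
    exact pow_injOn_Iio_orderOf (by simpa [hw] using hi) (by simpa [hw] using hj) hij
  have heq := Finset.eq_of_subset_of_card_le hsub (by rw [hcard]; exact ht)
  have : u ∈ univ.filter (fun x : G => x ^ p = 1) := by simp [hu]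
  rw [← heq] at this
  obtain ⟨c, -, hc⟩ := mem_image.1 this
  exact ⟨c, hc.symm⟩

lemma keyT (p n m : ℕ) (hp : p.Prime) (hcard : Nat.card G = p ^ n * m)
    (ht : (univ.filter (fun x : G => x ^ p = 1)).card ≤ p) (x u : G) (hx : x ^ m ≠ 1)
    (hxu : (x * u) ^ m ≠ 1) (hu : u ^ p = 1) :
    ∃ t, (Nat.card G).Coprime t ∧ (∃ s, t = 1 + m * s) ∧ x ^ t = x * u ∧
      (x ^ (m * p) ≠ 1 → ∃ s, t = 1 + p * s) := by
  have hy : (x ^ m) ^ (p ^ n) = 1 := by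
    rw [← pow_mul, mul_comm m, ← hcard, pow_card_eq_one']
  obtain ⟨j, -, hj⟩ := (Nat.dvd_prime_pow hp).1 (orderOf_dvd_of_pow_eq_one hy)
  rcases j with _ | j
  · rw [pow_zero, orderOf_eq_one_iff] at hj
    exact absurd hj hx
  have hw : orderOf ((x ^ m) ^ (p ^ j)) = p := by
    rw [orderOf_pow_of_dvd (pow_ne_zero _ hp.ne_zero) (by rw [hj]; exact pow_dvd_pow _ (by omega)),
      hj, pow_succ, Nat.mul_div_cancel_left _ (pow_pos hp.pos _)]
  obtain ⟨c, hc⟩ := exists_pow_of_torsion p hp ht _ u hw hu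
  have hxt : x ^ (1 + m * (p ^ j * c)) = x * u := by
    rw [pow_add, pow_one, hc, ← pow_mul, ← pow_mul]
  have hpt : ¬ p ∣ 1 + m * (p ^ j * c) := by
    rcases j with _ | j
    · rintro ⟨s, hs⟩
      apply hxu
      rw [← hxt, hs, ← pow_mul, show p * s * m = m * p * s by ring, pow_mul, pow_mul]
      rw [zero_add, pow_one] at hj
      rw [← hj, pow_orderOf_eq_one, one_pow]
    · intro hd
      have : p ∣ m * (p ^ (j + 1) * c) := ⟨m * (p ^ j * c), by ring⟩
      exact hp.one_lt.ne' (Nat.dvd_one.1 ((Nat.dvd_add_left this).1 hd))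
  refine ⟨1 + m * (p ^ j * c), ?_, ⟨_, rfl⟩, hxt, ?_⟩
  · rw [hcard]
    refine Nat.Coprime.mul_left (Nat.Coprime.pow_left _ ((Nat.Prime.coprime_iff_not_dvd hp).2 hpt)) ?_
    simp
  · intro hne
    rcases j with _ | j
    · exfalso
      apply hne
      rw [zero_add, pow_one] at hj
      rw [pow_mul, ← hj, pow_orderOf_eq_one]
    · exact ⟨m * (p ^ j * c), by ring⟩

/-- conference-type case is impossible -/
lemma no_flip (h : GoodSet D β γ μ) (p n : ℕ) (hp : p.Prime) (hn : 2 ≤ n)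
    (hcard : Nat.card G = p ^ n)
    (ht : (univ.filter (fun x : G => x ^ p = 1)).card ≤ p) (z : G) (hz : orderOf z = p)
    (hQ : ∀ x u : G, x ^ p ≠ 1 → u ^ p = 1 → (x * u ∈ D ↔ x ∈ D))
    (t : ℕ) (htc : (Nat.card G).Coprime t) (hfl : ∀ x : G, x ≠ 1 → (x ^ t ∈ D ↔ x ∉ D)) : False := by
  have inj : Function.Injective (fun g : G => g ^ t) := htc.pow_left_bijective.injective
  have hz1 : z ≠ 1 := by
    rintro rfl
    rw [orderOf_one] at hz
    exact hp.one_lt.ne hz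
  have hzp : z ^ p = 1 := hz ▸ pow_orderOf_eq_one z
  have hzt1 : z ^ t ≠ 1 := fun e => hz1 (inj (by simpa using e))
  have hztp : (z ^ t) ^ p = 1 := by rw [← pow_mul, mul_comm, pow_mul, hzp, one_pow]
  -- size of `D`
  have hD' : (univ.filter (fun x => x ≠ 1 ∧ x ∉ D)).card + D.card + 1 = Nat.card G := by
    have e : (univ : Finset G) = insert 1 (univ.filter (fun x => x ≠ 1 ∧ x ∉ D) ∪ D) := by
      ext x
      simp only [mem_univ, mem_insert, mem_union, mem_filter, true_and, true_iff]
      tauto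
    have e2 := congrArg Finset.card e
    rw [Finset.card_univ, card_insert_of_notMem, card_union_of_disjoint] at e2
    · rw [Nat.card_eq_fintype_card, e2]
    · rw [disjoint_left]
      intro x hx
      simp only [mem_filter] at hx
      exact hx.2.2
    · simp [h.one]
  have hk : D.card ≤ (univ.filter (fun x => x ≠ 1 ∧ x ∉ D)).card := by
    refine Finset.card_le_card_of_injOn (fun g => g ^ t) ?_ inj.injOn
    intro x hx
    have hx1 : x ≠ 1 := fun e => h.one (e ▸ hx)
    simp only [coe_filter, mem_univ, true_and, Set.mem_ofPred_eq]
    exact ⟨fun e => hx1 (inj (by simpa using e)), fun hc => (hfl x hx1).1 hc hx⟩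
  have hk' : (univ.filter (fun x => x ≠ 1 ∧ x ∉ D)).card ≤ D.card := by
    refine Finset.card_le_card_of_injOn (fun g => g ^ t) ?_ inj.injOn
    intro x hx
    simp only [coe_filter, mem_univ, true_and, Set.mem_ofPred_eq] at hx
    exact (hfl x hx.1).2 hx.2
  -- lower bound for the counts
  have hlow : ∀ u : G, u ^ p = 1 → D.card + 1 ≤ (D.filter (fun g => g⁻¹ * u ∈ D)).card + p := by
    intro u hu
    have h1 : (D.filter (fun g => g ^ p ≠ 1)).card ≤ (D.filter (fun g => g⁻¹ * u ∈ D)).card := by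
      apply Finset.card_le_card
      intro g hg
      simp only [mem_filter] at *
      refine ⟨hg.1, (hQ _ _ ?_ hu).2 (h.inv g hg.1)⟩
      rw [inv_pow, ne_eq, inv_eq_one]
      exact hg.2
    have h2 : (D.filter (fun g => g ^ p = 1)).card + (D.filter (fun g => ¬ g ^ p = 1)).card = D.card :=
      Finset.card_filter_add_card_filter_not _
    have h3 : (D.filter (fun g => g ^ p = 1)).card < (univ.filter (fun x : G => x ^ p = 1)).card := by
      apply Finset.card_lt_card
      rw [Finset.ssubset_iff_of_subset (Finset.filter_subset_filter _ (subset_univ _))]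
      exact ⟨1, by simp, by simp [h.one]⟩
    simp only [ne_eq] at h1
    omega
  -- the sum of the counts
  have hsum : (D.card : ℤ) * D.card = β * D.card + γ + μ * Nat.card G := by
    have e1 := congrArg (fun q => (q * elt ℤ (univ : Finset G)).coeff 1) (elt_sq h ℤ)
    simp only [add_mul, smul_mul_assoc, one_mul, mul_assoc, elt_mul_univ, mul_smul_comm] at e1
    simp only [MonoidAlgebra.coeff_add, MonoidAlgebra.coeff_smul, Finsupp.add_apply,
      Finsupp.smul_apply, elt_coeff, smul_eq_mul] at e1
    simpa [Nat.card_eq_fintype_card] using e1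
  have hone : (D.card : ℤ) = γ + μ := by
    have := h.cnt 1
    rw [if_neg h.one, if_pos rfl, Finset.filter_true_of_mem] at this
    · linarith
    · intro g hg; simpa using h.inv g hg
  have hkpos : 0 < D.card := by
    by_cases hzD : z ∈ D
    · exact Finset.card_pos.2 ⟨z, hzD⟩
    · exact Finset.card_pos.2 ⟨_, (hfl z hz1).2 hzD⟩
  have hcv : (Nat.card G : ℤ) = 2 * D.card + 1 := by
    have : Nat.card G = 2 * D.card + 1 := by omega
    exact_mod_cast this
  have hk3 : (D.card : ℤ) = β + 1 + 2 * μ := by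
    have : (D.card : ℤ) * (D.card - (β + 1 + 2 * μ)) = 0 := by
      rw [hcv] at hsum
      linear_combination hsum - hone
    rcases mul_eq_zero.1 this with h0 | h0
    · exfalso; have : (0 : ℤ) < D.card := by exact_mod_cast hkpos
      omega
    · linarith
  have hcc : ((D.filter (fun g => g⁻¹ * z ∈ D)).card : ℤ) +
      (D.filter (fun g => g⁻¹ * z ^ t ∈ D)).card = β + 2 * μ := by
    rw [h.cnt z, h.cnt (z ^ t), if_neg hz1, if_neg hzt1]
    have := hfl z hz1
    by_cases hzD : z ∈ D
    · rw [if_pos hzD, if_neg (fun hc => this.1 hc hzD)]; ring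
    · rw [if_neg hzD, if_pos (this.2 hzD)]; ring
  have l1 := hlow z hzp
  have l2 := hlow _ hztp
  have hb : D.card + 3 ≤ 2 * p := by omega
  have hpn : p ^ 2 ≤ Nat.card G := by
    rw [hcard]; exact Nat.pow_le_pow_right hp.pos hn
  have : Nat.card G = 2 * D.card + 1 := by omega
  nlinarith [sq_nonneg ((p : ℤ) - 2), hp.two_le, sq_nonneg (p - 2)]

lemma star_case (h : GoodSet D β γ μ) (p n m : ℕ) (hp : p.Prime) (hn : 1 ≤ n)
    (hcard : Nat.card G = p ^ n * m) (hpm : ¬ p ∣ m)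
    (z : G) (hz : orderOf z = p) (hzD : z ∉ D)
    (star : ∀ x u : G, x ^ m ≠ 1 → (x * u) ^ m ≠ 1 → u ^ p = 1 → (x * u ∈ D ↔ x ∈ D)) :
    IsTrivialPDS (D : Set G) := by
  have : Fact p.Prime := ⟨hp⟩
  have hz1 : z ≠ 1 := by
    rintro rfl
    rw [orderOf_one] at hz
    exact hp.one_lt.ne hz
  have hzp : z ^ p = 1 := hz ▸ pow_orderOf_eq_one z
  have hzm : z ^ m ≠ 1 := fun e => hpm (hz ▸ orderOf_dvd_of_pow_eq_one e)
  have hmpos : 0 < m := Nat.pos_of_ne_zero (by rintro rfl; simp at hpm)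
  -- the exponent
  have hcop : p.Coprime m := (Nat.Prime.coprime_iff_not_dvd hp).2 hpm
  obtain ⟨M, hM1, hM2⟩ : ∃ M, n ≤ M ∧ p ^ M ≡ 1 [MOD m] := by
    refine ⟨m.totient * n, ?_, ?_⟩
    · exact Nat.le_mul_of_pos_left _ (Nat.totient_pos.2 hmpos)
    · rw [pow_mul]
      simpa using (Nat.ModEq.pow_totient hcop).pow n
  have hH1 : ∀ g : G, g ^ m = 1 → g ^ (p ^ M) = g := by
    intro g hg
    have := pow_eq_pow_iff_modEq (x := g) (n := p ^ M) (m := 1)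
    rw [pow_one] at this
    exact this.2 (hM2.of_dvd (orderOf_dvd_of_pow_eq_one hg))
  have hH2 : ∀ g : G, (g ^ (p ^ M)) ^ m = 1 := by
    intro g
    obtain ⟨e, rfl⟩ := Nat.exists_eq_add_of_le hM1
    rw [← pow_mul, pow_add, mul_right_comm, ← hcard, pow_mul, pow_card_eq_one', one_pow]
  -- the elements
  set E : MonoidAlgebra (ZMod p) G := mkEl (fun x => if x ^ m = 1 then
    (if x ∈ D then 1 else 0) - (if x * z ∈ D then 1 else 0) else 0) with hE
  have hEc : ∀ x, E.coeff x = if x ^ m = 1 then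
    (if x ∈ D then 1 else 0) - (if x * z ∈ D then 1 else 0) else 0 := fun x => rfl
  set N : MonoidAlgebra (ZMod p) G := elt (ZMod p) D - E with hN
  have hNc : ∀ x, N.coeff x = if x ^ m = 1 then (if x * z ∈ D then 1 else 0)
      else (if x ∈ D then 1 else 0) := by
    intro x
    rw [hN, MonoidAlgebra.coeff_sub, Finsupp.sub_apply, hEc, elt_coeff]
    split_ifs <;> simp
  have hNz : ∀ x, N.coeff (x * z) = N.coeff x := by
    intro x
    rw [hNc, hNc]
    by_cases hx : x ^ m = 1
    · have : (x * z) ^ m ≠ 1 := by rw [mul_pow, hx, one_mul]; exact hzm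
      rw [if_pos hx, if_neg this]
    · by_cases hxz : (x * z) ^ m = 1
      · have h3 : (x * (z * z)) ^ m ≠ 1 := by
          rw [← mul_assoc, mul_pow, hxz, one_mul]; exact hzm
        have := star x (z * z) hx h3 (by rw [mul_pow, hzp, one_mul])
        rw [if_neg hx, if_pos hxz, mul_assoc]
        simp only [this]
      · rw [if_neg hx, if_neg hxz]
        simp only [star x z hx hxz hzp]
  have hzN : MonoidAlgebra.single z (1 : ZMod p) * N = N := by
    ext x
    rw [MonoidAlgebra.coeff_single_mul_apply, one_mul, ← hNz, mul_comm z⁻¹, inv_mul_cancel_right]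
  have hzJ : MonoidAlgebra.single z (1 : ZMod p) * elt (ZMod p) (univ : Finset G)
      = elt (ZMod p) univ := by
    ext x
    rw [MonoidAlgebra.coeff_single_mul_apply, one_mul, elt_coeff, elt_coeff]
    simp
  have hEE : E * E = (β : ZMod p) • E + (γ : ZMod p) • (1 : MonoidAlgebra (ZMod p) G) := by
    rw [← sub_eq_zero]
    set S := E * E - ((β : ZMod p) • E + (γ : ZMod p) • (1 : MonoidAlgebra (ZMod p) G)) with hS
    have hS2 : S = (μ : ZMod p) • elt (ZMod p) (univ : Finset G) - 2 * elt (ZMod p) D * N + N * N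
        + (β : ZMod p) • N := by
      have hED : E = elt (ZMod p) D - N := by rw [hN]; abel
      have e1 : E * E = elt (ZMod p) D * elt (ZMod p) D - 2 * elt (ZMod p) D * N + N * N := by
        rw [hED]; ring
      rw [hS, e1, elt_sq h, hED, smul_sub]
      abel
    have hzS : MonoidAlgebra.single z (1 : ZMod p) * S = S := by
      have e1 : MonoidAlgebra.single z (1 : ZMod p) * (2 * elt (ZMod p) D * N) =
        2 * elt (ZMod p) D * N := by rw [mul_left_comm, hzN]
      have e2 : MonoidAlgebra.single z (1 : ZMod p) * (N * N) = N * N := by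
        rw [← mul_assoc, hzN]
      rw [hS2, mul_add, mul_add, mul_sub, mul_smul_comm, mul_smul_comm, hzJ, e1, e2, hzN]
    have hsupp : ∀ x : G, x ^ m ≠ 1 → S.coeff x = 0 := by
      intro x hx
      have hx1 : x ≠ 1 := by rintro rfl; simp at hx
      have e1 : (E * E).coeff x = 0 := by
        rw [coeff_mul_fin]
        refine Finset.sum_eq_zero fun g _ => ?_
        by_cases hg : g ^ m = 1
        · have : (g⁻¹ * x) ^ m ≠ 1 := by rw [mul_pow, inv_pow, hg, inv_one, one_mul]; exact hx
          rw [hEc (g⁻¹ * x), if_neg this, mul_zero]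
        · rw [hEc g, if_neg hg, zero_mul]
      simp only [hS, MonoidAlgebra.coeff_sub, MonoidAlgebra.coeff_add, MonoidAlgebra.coeff_smul,
        Finsupp.sub_apply, Finsupp.add_apply, Finsupp.smul_apply, e1, hEc x, if_neg hx, one_coeff,
        if_neg hx1, smul_zero, add_zero, sub_zero]
    ext x
    rw [MonoidAlgebra.coeff_zero, Finsupp.zero_apply]
    by_cases hx : x ^ m = 1
    · have e1 := congrArg (fun q => q.coeff (z * x)) hzS
      simp only [MonoidAlgebra.coeff_single_mul_apply, one_mul, inv_mul_cancel_left] at e1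
      rw [e1]
      apply hsupp
      rw [mul_pow, hx, mul_one]
      exact hzm
    · exact hsupp x hx
  have hEq : E ^ (p ^ M) = E := by
    rw [frob]
    conv_rhs => rw [eq_sum_single E]
    refine Finset.sum_congr rfl fun g _ => ?_
    by_cases hg : g ^ m = 1
    · rw [hH1 g hg]
    · rw [hEc, if_neg hg]; simp
  obtain ⟨a, b, ⟨c, hc⟩, hab⟩ := pow_form h (ZMod p) (p ^ M)
  have hoff : ∀ x : G, x ^ m ≠ 1 → a * (if x ∈ D then 1 else 0) + c = 0 := by
    intro x hx
    have hx1 : x ≠ 1 := by rintro rfl; simp at hx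
    rw [frob] at hc
    have h2 := congrArg (fun q => q.coeff x) hc
    simp only [MonoidAlgebra.coeff_add, MonoidAlgebra.coeff_smul, Finsupp.add_apply,
      Finsupp.smul_apply, elt_coeff, one_coeff, smul_eq_mul, mem_univ, if_true, if_neg hx1,
      MonoidAlgebra.coeff_sum, MonoidAlgebra.coeff_single, Finsupp.finsetSum_apply,
      Finsupp.single_apply] at h2
    rw [Finset.sum_eq_zero] at h2
    · linear_combination -h2
    · intro g _
      rw [if_neg]
      rintro rfl
      exact hx (hH2 g)
  by_cases ha : a = 0
  · -- `D` is invariant under `z`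
    have hEb : E = b • (1 : MonoidAlgebra (ZMod p) G) := by
      have := hab E hEE
      rwa [hEq, ha, zero_smul, zero_add] at this
    have hHz : ∀ x : G, x ^ m = 1 → (x * z ∈ D ↔ x ∈ D) := by
      intro x hx
      by_cases hx1 : x = 1
      · subst hx1
        simp [hzD, h.one]
      have h1 := hEc x
      rw [hEb, MonoidAlgebra.coeff_smul, Finsupp.smul_apply, one_coeff, if_neg hx1, if_pos hx,
        smul_zero] at h1
      by_cases h2 : x ∈ D <;> by_cases h3 : x * z ∈ D <;> simp [h2, h3] at h1 ⊢
    have hE0 : E = 0 := by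
      ext x
      rw [hEc, MonoidAlgebra.coeff_zero, Finsupp.zero_apply]
      split_ifs with h1 h2 h3 h3
      · simp
      · exact absurd ((hHz x h1).2 h2) h3
      · exact absurd ((hHz x h1).1 h3) h2
      · simp
      · rfl
    have hND : N = elt (ZMod p) D := by rw [hN, hE0, sub_zero]
    refine triv_inv h z hz1 hzD fun x => ?_
    have := hNz x
    rw [hND, elt_coeff, elt_coeff] at this
    by_cases h2 : x ∈ D <;> by_cases h3 : x * z ∈ D <;> simp [h2, h3] at this ⊢
  · -- `D` is contained in `H`
    apply triv_mu0 h
    have hc0 : c = 0 := by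
      have := hoff z hzm
      simpa [hzD] using this
    have hDH : ∀ x ∈ D, x ^ m = 1 := by
      intro x hx
      by_contra hne
      have := hoff x hne
      rw [if_pos hx, hc0] at this
      simp at this
      exact ha this
    have := h.cnt z
    rw [if_neg hz1, if_neg hzD, Finset.filter_false_of_mem] at this
    · simpa using this.symm
    · intro g hg hc
      have h1 := hDH _ hc
      rw [mul_pow, inv_pow, hDH g hg, inv_one, one_mul] at h1
      exact hzm h1

lemma core (h : GoodSet D β γ μ) (p n m : ℕ) (hp : p.Prime) (hn : 1 ≤ n)
    (hcard : Nat.card G = p ^ n * m) (hpm : ¬ p ∣ m) (hne : Nat.card G ≠ p)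
    (ht : (univ.filter (fun x : G => x ^ p = 1)).card ≤ p)
    (z : G) (hz : orderOf z = p) (hzD : z ∉ D) : IsTrivialPDS (D : Set G) := by
  have hz1 : z ≠ 1 := by
    rintro rfl
    rw [orderOf_one] at hz
    exact hp.one_lt.ne hz
  have hzp : z ^ p = 1 := hz ▸ pow_orderOf_eq_one z
  rcases D.eq_empty_or_nonempty with rfl | ⟨d, hd⟩
  · left
    exact ⟨⊥, by simp⟩
  have hD : ∃ x ∈ D, ∃ y, y ≠ 1 ∧ y ∉ D := ⟨d, hd, z, hz1, hzD⟩
  by_cases star : ∀ x u : G, x ^ m ≠ 1 → (x * u) ^ m ≠ 1 → u ^ p = 1 → (x * u ∈ D ↔ x ∈ D)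
  · exact star_case h p n m hp hn hcard hpm z hz hzD star
  exfalso
  push Not at star
  obtain ⟨x, u, hx, hxu, hu, hbad⟩ := star
  obtain ⟨t, htc, ⟨s, hs⟩, hxt, -⟩ := keyT p n m hp hcard ht x u hx hxu hu
  have hx1 : x ≠ 1 := by rintro rfl; simp at hx
  have hfl : ∀ y : G, y ≠ 1 → (y ^ t ∈ D ↔ y ∉ D) := by
    intro y hy
    have := mult_all h hD t htc x y hx1 hy
    rw [hxt] at this
    tauto
  have hm1 : m = 1 := by
    by_contra hm
    obtain ⟨q, hq, hqm⟩ := Nat.exists_prime_and_dvd hm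
    have : Fact q.Prime := ⟨hq⟩
    obtain ⟨y, hy⟩ := exists_prime_orderOf_dvd_card (G := G) q (by
      rw [← Nat.card_eq_fintype_card, hcard]; exact hqm.mul_left _)
    have hy1 : y ≠ 1 := by
      rintro rfl
      rw [orderOf_one] at hy
      exact hq.one_lt.ne hy
    have hym : y ^ m = 1 := orderOf_dvd_iff_pow_eq_one.1 (hy ▸ hqm)
    have := hfl y hy1
    rw [hs, pow_add, pow_one, pow_mul, hym, one_pow, mul_one] at this
    tauto
  subst hm1
  rw [mul_one] at hcard
  have hn2 : 2 ≤ n := by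
    by_contra hn2
    have : n = 1 := by omega
    subst this
    exact hne (by rw [hcard, pow_one])
  refine no_flip h p n hp hn2 hcard ht z hz ?_ t htc hfl
  intro y w hy hw
  obtain ⟨t', htc', -, hyt, hp'⟩ := keyT p n 1 hp (by rw [hcard, mul_one]) ht y w
    (by rw [pow_one]; rintro rfl; simp at hy)
    (by
      rw [pow_one]; intro hc
      apply hy
      rw [eq_inv_of_mul_eq_one_left hc, inv_pow, hw, inv_one]) hw
  obtain ⟨s', hs'⟩ := hp' (by rwa [one_mul])
  have hzt : z ^ t' = z := by rw [hs', pow_add, pow_one, pow_mul, hzp, one_pow, mul_one]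
  have := mult_all h hD t' htc' y z (by rintro rfl; simp at hy) hz1
  rw [hzt, hyt] at this
  tauto

lemma good_of_pds (D : Set G) (v k lam mu : ℕ) (hpds : IsPDS D v k lam mu)
    (hreg : IsRegularPDS D) :
    GoodSet D.toFinset ((lam : ℤ) - mu) ((k : ℤ) - mu) mu := by
  obtain ⟨-, hk, hl, hm⟩ := hpds
  have hcount : ∀ x : G, x ≠ 1 → (D.toFinset.filter (fun g => g⁻¹ * x ∈ D.toFinset)).card =
      {p : G × G | p.1 ∈ D ∧ p.2 ∈ D ∧ p.1 ≠ p.2 ∧ p.1 * p.2⁻¹ = x}.ncard := by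
    intro x hx
    rw [← Set.ncard_coe_finset]
    refine Set.ncard_congr (fun g _ => (g, g * x⁻¹)) ?_ ?_ ?_
    · intro g hg
      simp only [coe_filter, Set.mem_toFinset, Set.mem_ofPred_eq] at hg ⊢
      refine ⟨hg.1, ?_, ?_, ?_⟩
      · have := hreg.2 _ hg.2
        simpa [mul_comm] using this
      · intro e
        apply hx
        simpa using e
      · simp
    · intro a b _ _ hab
      exact (Prod.mk.inj hab).1
    · rintro ⟨a, b⟩ hab
      simp only [Set.mem_ofPred_eq] at hab
      obtain ⟨ha, hb, hne, rfl⟩ := hab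
      refine ⟨a, ?_, ?_⟩
      · simp only [coe_filter, Set.mem_toFinset, Set.mem_ofPred_eq]
        exact ⟨ha, by simpa using hreg.2 _ hb⟩
      · simp
  refine ⟨by simpa using hreg.1, fun g hg => by simpa using hreg.2 g (by simpa using hg), ?_⟩
  intro x
  by_cases hx1 : x = 1
  · subst hx1
    rw [if_neg (by simpa using hreg.1), if_pos rfl, Finset.filter_true_of_mem]
    · rw [Set.ncard_eq_toFinset_card'] at hk
      rw [hk]; ring
    · intro g hg
      simpa using hreg.2 g (by simpa using hg)
  · rw [hcount x hx1, if_neg hx1]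
    by_cases hx : x ∈ D
    · rw [hl x hx1 hx, if_pos (by simpa using hx)]; ring
    · rw [hm x hx1 hx, if_neg (by simpa using hx)]; ring

end

/-- Ma: if the abelian group `G` of order `v` has a cyclic Sylow
`p`-subgroup for some prime `p ∣ v` with `v ≠ p`, then every regular partial difference
set in `G` is trivial. -/
theorem no_nontrivial_pds_of_cyclic_sylow
    (G : Type*) [CommGroup G] [Fintype G] (v : ℕ) (hv : Fintype.card G = v)
    (p : ℕ) (hp : p.Prime) (hpv : p ∣ v) (hvp : v ≠ p)
    (hcyc : ∀ P : Sylow p G, IsCyclic P)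
    (k lam mu : ℕ) (D : Set G)
    (hpds : IsPDS D v k lam mu) (hreg : IsRegularPDS D) :
    IsTrivialPDS D := by
  classical
  have : Fact p.Prime := ⟨hp⟩
  have h := good_of_pds D v k lam mu hpds hreg
  have ht := card_torsion (G := G) p hp hcyc
  obtain ⟨z, hz⟩ := exists_prime_orderOf_dvd_card (G := G) p (hv ▸ hpv)
  have hcv : Nat.card G = v := by rw [Nat.card_eq_fintype_card, hv]
  have hv0 : v ≠ 0 := by rw [← hcv]; exact Nat.card_pos.ne'
  obtain ⟨n, m, hpm, hnm⟩ := Nat.exists_eq_pow_mul_and_not_dvd hv0 p hp.ne_one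
  have hn : 1 ≤ n := by
    rcases Nat.eq_zero_or_pos n with rfl | hn
    · rw [pow_zero, one_mul] at hnm
      exact absurd (hnm ▸ hpv) hpm
    · exact hn
  have key : IsTrivialPDS ((D.toFinset : Finset G) : Set G) := by
    by_cases hzD : z ∈ D.toFinset
    · obtain ⟨β', γ', μ', h'⟩ := compl_good h
      apply triv_of_compl h.one
      refine core h' p n m hp hn (hcv.trans hnm) hpm (hcv ▸ hvp) (by convert ht) z hz ?_
      simp only [mem_filter, mem_univ, true_and, not_and, not_not]
      exact fun _ => hzD
    · exact core h p n m hp hn (hcv.trans hnm) hpm (hcv ▸ hvp) (by convert ht) z hz hzD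
  rwa [Set.coe_toFinset] at key
end

section
/- Let G be an abelian group of finite order v and let p be a prime such that the Sylow p-subgroup of G is isomorphic to ℤ_{p^a} × ℤ_{p^b} with a ≠ b (a, b ≥ 1). Then G contains no nontrivial regular partial difference set; that is, for any parameters (v,k,λ,μ), every regular (v,k,λ,μ)-partial difference set D in G is trivial. -/
section
open Finset Polynomial

lemma telescoping_kappa (p M : ℕ) (κ : ℕ → ℤ) (hκ : ∀ e, κ (e + p * M) = κ e) (j : ℕ) :
    ∑ i ∈ range p, (κ (j + i * M) - κ (j + (i + 1) * M)) = 0 := by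
  rw [Finset.sum_range_sub' (fun i => κ (j + i * M))]
  simp [hκ]

lemma root_lemma {E : Type*} [Field E] [CharZero E] {p a : ℕ} (hp : p.Prime) (ha : 1 ≤ a)
    {ζ : E} (hζ : IsPrimitiveRoot ζ (p ^ a)) (c : ℕ → ℤ) (N : ℤ) (hN : N ≠ 0) (t : E)
    (ht : IsIntegral ℤ t)
    (hu : ∑ j ∈ range (p ^ a), (c j : E) * ζ ^ j = (N : E) * t) :
    N ∣ c (p ^ (a - 1)) - c 0 := by
  obtain ⟨k, rfl⟩ : ∃ k, a = k + 1 := ⟨a - 1, by omega⟩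
  simp only [Nat.add_sub_cancel]
  have : Fact p.Prime := ⟨hp⟩
  have hppos : 0 < p ^ (k+1) := pow_pos hp.pos _
  have : NeZero (p ^ (k+1)) := ⟨hppos.ne'⟩
  have : IsCyclotomicExtension {p ^ (k+1)} ℚ (IntermediateField.adjoin ℚ {ζ}) :=
    (IntermediateField.isCyclotomicExtension_singleton_iff_eq_adjoin _ _ _ _ hζ).2 rfl
  set K := IntermediateField.adjoin ℚ {ζ} with hK
  have hζK : ζ ∈ K := IntermediateField.mem_adjoin_simple_self ℚ ζ
  have hNE : (N : E) ≠ 0 := by exact_mod_cast hN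
  have htK : t ∈ K := by
    have : t = (N : E)⁻¹ * ∑ j ∈ range (p ^ (k+1)), (c j : E) * ζ ^ j := by
      rw [hu]; field_simp
    rw [this]
    refine K.mul_mem (K.inv_mem (intCast_mem K N)) (K.sum_mem fun j _ => ?_)
    exact K.mul_mem (intCast_mem K _) (pow_mem hζK j)
  let ζ' : K := ⟨ζ, hζK⟩
  let t' : K := ⟨t, htK⟩
  have hζ' : IsPrimitiveRoot ζ' (p ^ (k+1)) := by
    refine IsPrimitiveRoot.of_map_of_injective (f := algebraMap K E) ?_ (algebraMap K E).injective
    exact hζ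
  have ht' : IsIntegral ℤ t' := by
    refine (isIntegral_algebraMap_iff (A := K) (B := E) (algebraMap K E).injective).1 ?_
    exact ht
  have hic := IsCyclotomicExtension.Rat.isIntegralClosure_adjoin_singleton_of_prime_pow hζ'
  obtain ⟨y, hy⟩ := (hic.isIntegral_iff (x := t')).1 ht'
  have hy2 : t' ∈ Algebra.adjoin ℤ {ζ'} := by rw [← hy]; exact y.2
  rw [Algebra.adjoin_singleton_eq_range_aeval] at hy2
  obtain ⟨g, hg⟩ := hy2
  have hg2 : aeval ζ g = t := by
    have := congrArg (algebraMap K E) hg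
    have h2 : algebraMap K E (aeval ζ' g) = aeval ζ g := by
      rw [← aeval_algebraMap_apply]; rfl
    rw [← h2]; exact this
  set Q : ℤ[X] := ∑ j ∈ range (p ^ (k+1)), C (c j) * X ^ j - C N * g with hQ
  have hQ0 : aeval ζ Q = 0 := by
    simp only [hQ, map_sub, map_sum, map_mul, aeval_X, map_pow, hg2, aeval_C]
    simp [hu]
  have hdvd : cyclotomic (p ^ (k+1)) ℤ ∣ Q := by
    rw [cyclotomic_eq_minpoly hζ hppos]
    exact minpoly.isIntegrallyClosed_dvd (hζ.isIntegral hppos) hQ0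
  obtain ⟨Y, hY⟩ := hdvd
  set M := p ^ k with hM
  have hpM : p ^ (k+1) = p * M := by rw [hM, pow_succ, mul_comm]
  let κ : ℕ → ℤ := fun e => if (e : ZMod (p * M)) = M then 1 else 0
  have hκ : ∀ e, κ (e + p * M) = κ e := by
    intro e
    have : ((p : ZMod (p * M)) * (M : ZMod (p*M))) = 0 := by
      have := ZMod.natCast_self (p * M); push_cast at this; exact this
    simp [κ, this]
  let ι : ℕ → ℤ := fun e => κ e - κ (e + M)
  let L : ℤ[X] →ₗ[ℤ] ℤ := Polynomial.lsum (fun e => (ι e) • (LinearMap.id : ℤ →ₗ[ℤ] ℤ))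
  have hLm : ∀ e (x : ℤ), L (monomial e x) = ι e * x := by
    intro e x
    simp [L, Polynomial.lsum_apply, Polynomial.sum_monomial_index]
  have hLY : ∀ Y : ℤ[X], L (cyclotomic (p ^ (k+1)) ℤ * Y) = 0 := by
    intro Y
    induction Y using Polynomial.induction_on' with
    | add f g hf hg => rw [mul_add, map_add, hf, hg, add_zero]
    | monomial j x =>
      rw [cyclotomic_prime_pow_eq_geom_sum hp, Finset.sum_mul, map_sum]
      have : ∀ i ∈ range p, L ((X ^ p ^ k) ^ i * (monomial j) x) =
          (κ (j + i * M) - κ (j + (i + 1) * M)) * x := by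
        intro i _
        rw [← pow_mul, X_pow_mul_monomial, hLm]
        simp only [ι]
        congr 3 <;> ring
      rw [Finset.sum_congr rfl this, ← Finset.sum_mul, telescoping_kappa p M κ hκ, zero_mul]
  have hLQ : L Q = 0 := by rw [hY, hLY]
  have hLF : L (∑ j ∈ range (p ^ (k+1)), C (c j) * X ^ j) = c M - c 0 := by
    rw [map_sum]
    have h1 : ∀ j ∈ range (p ^ (k+1)), L (C (c j) * X ^ j) =
        (if j = M then c j else 0) - (if j = 0 then c j else 0) := by
      intro j hj
      rw [C_mul_X_pow_eq_monomial, hLm]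
      rw [mem_range, hpM] at hj
      have hMlt : M < p * M := by
        have : 0 < M := pow_pos hp.pos _
        nlinarith [hp.two_le]
      have e1 : ((j : ZMod (p * M)) = M) ↔ j = M := by
        rw [ZMod.natCast_eq_natCast_iff, Nat.ModEq, Nat.mod_eq_of_lt hj, Nat.mod_eq_of_lt hMlt]
      have e2 : (((j + M : ℕ) : ZMod (p * M)) = M) ↔ j = 0 := by
        rw [Nat.cast_add, add_eq_right, ZMod.natCast_eq_zero_iff]
        exact ⟨fun h => Nat.eq_zero_of_dvd_of_lt h hj, fun h => h ▸ dvd_zero _⟩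
      simp only [ι, κ, e1, e2]
      split_ifs <;> simp
    rw [Finset.sum_congr rfl h1, Finset.sum_sub_distrib, Finset.sum_ite_eq', Finset.sum_ite_eq']
    have hMlt : M < p * M := by
        have : 0 < M := pow_pos hp.pos _
        nlinarith [hp.two_le]
    rw [if_pos (by rw [mem_range, hpM]; exact hMlt), if_pos (by rw [mem_range]; exact hppos)]
  rw [hQ, map_sub, hLF] at hLQ
  have : L (C N * g) = N * L g := by
    rw [← smul_eq_C_mul, map_smul, smul_eq_mul]
  exact ⟨L g, by linarith⟩

end

section
open Finset

/-- A nondegenerate bicharacter on `G` with values in `E`. -/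
structure BiChar (G : Type*) [CommGroup G] (E : Type*) [Field E] where
  B : G → G → E
  ml : ∀ x y h, B (x * y) h = B x h * B y h
  mr : ∀ x h k, B x (h * k) = B x h * B x k
  ol : ∀ h, B 1 h = 1
  or1 : ∀ x, B x 1 = 1
  ndl : ∀ x, (∀ h, B x h = 1) → x = 1
  ndr : ∀ h, (∀ x, B x h = 1) → h = 1

namespace BiChar

variable {G : Type*} [CommGroup G] {E : Type*} [Field E] (β : BiChar G E)

lemma pow_left (x h : G) (n : ℕ) : β.B (x ^ n) h = β.B x h ^ n := by
  induction n with
  | zero => simp [β.ol]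
  | succ n ih => rw [pow_succ, pow_succ, β.ml, ih]

lemma pow_right (x h : G) (n : ℕ) : β.B x (h ^ n) = β.B x h ^ n := by
  induction n with
  | zero => simp [β.or1]
  | succ n ih => rw [pow_succ, pow_succ, β.mr, ih]

lemma inv_left_mul (x h : G) : β.B x⁻¹ h * β.B x h = 1 := by
  rw [← β.ml, inv_mul_cancel, β.ol]

lemma ne_zero (x h : G) : β.B x h ≠ 0 := right_ne_zero_of_mul_eq_one (β.inv_left_mul x h)

lemma inv_left (x h : G) : β.B x⁻¹ h = (β.B x h)⁻¹ :=
  eq_inv_of_mul_eq_one_left (β.inv_left_mul x h)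

lemma inv_right (x h : G) : β.B x h⁻¹ = (β.B x h)⁻¹ := by
  refine eq_inv_of_mul_eq_one_left ?_
  rw [← β.mr, inv_mul_cancel, β.or1]

/-- The dual bicharacter. -/
def dual : BiChar G E where
  B := fun h g => β.B g⁻¹ h
  ml := fun x y h => β.mr _ _ _
  mr := fun x h k => by rw [mul_inv, β.ml]
  ol := fun h => β.or1 _
  or1 := fun h => by rw [inv_one, β.ol]
  ndl := fun x hx => β.ndr x fun y => by simpa using hx y⁻¹
  ndr := fun x hx => by simpa using β.ndl x⁻¹ hx

variable [Fintype G]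

lemma isIntegral (x h : G) : IsIntegral ℤ (β.B x h) := by
  refine IsIntegral.of_pow (n := Fintype.card G) Fintype.card_pos ?_
  rw [← β.pow_left, pow_card_eq_one, β.ol]
  exact isIntegral_one

open Classical in
lemma sum_left (h : G) : ∑ x, β.B x h = if h = 1 then (Fintype.card G : E) else 0 := by
  split_ifs with hh
  · subst hh; simp [β.or1]
  · obtain ⟨y, hy⟩ : ∃ y, β.B y h ≠ 1 := by
      by_contra hc; push Not at hc; exact hh (β.ndr h hc)
    have : ∑ x, β.B x h = β.B y h * ∑ x, β.B x h := by
      rw [mul_sum, ← Equiv.sum_comp (Equiv.mulLeft y)]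
      simp [β.ml]
    by_contra h0
    exact hy (mul_right_cancel₀ h0 (by rw [← this, one_mul]))

open Classical in
lemma sum_right (x : G) : ∑ h, β.B x h = if x = 1 then (Fintype.card G : E) else 0 := by
  have := β.dual.sum_left x⁻¹
  simpa [dual] using this

/-- Fourier transform. -/
def ft (f : G → ℤ) (h : G) : E := ∑ x, (f x : E) * β.B x h

lemma inversion (f : G → ℤ) (g : G) :
    ∑ h, β.ft f h * β.B g⁻¹ h = (Fintype.card G : E) * f g := by
  classical
  simp only [ft, sum_mul]
  rw [sum_comm]
  have : ∀ x, ∑ h, (f x : E) * β.B x h * β.B g⁻¹ h =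
      if x = g then (Fintype.card G : E) * f g else 0 := by
    intro x
    simp only [mul_assoc, ← β.ml]
    rw [← mul_sum, β.sum_right]
    by_cases hx : x = g
    · subst hx; simp [mul_comm]
    · rw [if_neg, if_neg hx, mul_zero]
      rwa [mul_inv_eq_one]
  simp [this]

lemma ft_shift (f : G → ℤ) (y h : G) :
    ∑ x, (f (x * y) : E) * β.B x h = (β.B y h)⁻¹ * β.ft f h := by
  rw [ft, mul_sum, ← Equiv.sum_comp (Equiv.mulRight y) (fun x => (β.B y h)⁻¹ * ((f x : E) * β.B x h))]
  refine sum_congr rfl fun x _ => ?_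
  have := β.ne_zero y h
  simp only [Equiv.coe_mulRight, β.ml]
  field_simp

lemma sum_eq_zero_of_invariant (f : G → ℤ) (q h : G) (hq : β.B q h ≠ 1)
    (hf : ∀ z, f (z * q) = f z) : β.ft f h = 0 := by
  have h1 := β.ft_shift f q h
  simp only [hf] at h1
  change β.ft f h = _ at h1
  by_contra h0
  apply hq
  have : (β.B q h)⁻¹ = 1 := mul_right_cancel₀ h0 (by rw [← h1, one_mul])
  simpa using this

end BiChar

/-- The structure of the unbalanced Sylow subgroup. -/
structure Setup (G : Type*) [CommGroup G] [Fintype G] (p a b : ℕ) (w : G) : Prop where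
  hp : p.Prime
  hb : 1 ≤ b
  hab : b < a
  hw : w ^ (p ^ a) = 1
  hq : w ^ (p ^ (a - 1)) ≠ 1
  exp : ∀ x : G, x ^ (p ^ (a + b)) = 1 → x ^ (p ^ a) = 1
  cardP : Nat.card (powMonoidHom (p ^ (a + b)) : G →* G).ker = p ^ (a + b)
  cop : ∃ m, Fintype.card G = p ^ (a + b) * m ∧ ¬ p ∣ m

namespace Setup

variable {G : Type*} [CommGroup G] [Fintype G] {p a b : ℕ} {w : G} (S : Setup G p a b w)
  {E : Type*} [Field E] (β : BiChar G E)
include S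

lemma card_range : ¬ p ∣ Nat.card (powMonoidHom (p ^ (a + b)) : G →* G).range := by
  obtain ⟨m, hm, hpm⟩ := S.cop
  have h1 := Subgroup.card_mul_index (powMonoidHom (p ^ (a + b)) : G →* G).ker
  rw [Subgroup.index_ker, S.cardP, Nat.card_eq_fintype_card (α := G), hm] at h1
  have := Nat.eq_of_mul_eq_mul_left (pow_pos S.hp.pos _) h1
  rwa [this]

lemma prim {h : G} (hh : β.B (w ^ (p ^ (a - 1))) h ≠ 1) : IsPrimitiveRoot (β.B w h) (p ^ a) := by
  have hab := S.hab
  obtain ⟨k, rfl⟩ : ∃ k, a = k + 1 := ⟨a - 1, by omega⟩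
  have : Fact p.Prime := ⟨S.hp⟩
  rw [IsPrimitiveRoot.iff_orderOf]
  refine orderOf_eq_prime_pow ?_ ?_
  · rw [← β.pow_left]; simpa using hh
  · rw [← β.pow_left, S.hw, β.ol]

open Classical in
lemma sum_H (g : G) : ∑ y : (powMonoidHom (p ^ (a + b)) : G →* G).range, β.B g y =
    if g ^ (p ^ (a + b)) = 1 then
      (Nat.card (powMonoidHom (p ^ (a + b)) : G →* G).range : E) else 0 := by
  split_ifs with hg
  · have : ∀ y : (powMonoidHom (p ^ (a + b)) : G →* G).range, β.B g y = 1 := by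
      rintro ⟨_, y, rfl⟩
      simp only [powMonoidHom_apply]
      rw [β.pow_right, ← β.pow_left, hg, β.ol]
    simp [this]
  · obtain ⟨y, hy⟩ : ∃ y, β.B (g ^ (p ^ (a + b))) y ≠ 1 := by
      by_contra hc; push Not at hc; exact hg (β.ndl _ hc)
    rw [β.pow_left, ← β.pow_right] at hy
    let y0 : (powMonoidHom (p ^ (a + b)) : G →* G).range := ⟨y ^ (p ^ (a + b)), y, rfl⟩
    set s := ∑ y : (powMonoidHom (p ^ (a + b)) : G →* G).range, β.B g y with hs
    have : s = β.B g y0 * s := by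
      rw [hs, mul_sum, ← Equiv.sum_comp (Equiv.mulLeft y0)]
      simp [β.mr]
    by_contra h0
    exact hy (mul_right_cancel₀ h0 (by rw [one_mul]; exact this.symm))

open Classical in
lemma u_divisible [CharZero E] (f : G → ℤ) (c : ℕ)
    (hf : ∀ h, ∃ t : ℤ, β.ft f h = ((p ^ c : ℕ) : E) * t)
    (h z : G) : ∃ t : E, IsIntegral ℤ t ∧
      ∑ x with x ^ (p ^ (a + b)) = 1, (f (z * x) : E) * β.B x h = (((p ^ c : ℕ) : ℤ) : E) * t := by
  set u : E := ∑ x with x ^ (p ^ (a + b)) = 1, (f (z * x) : E) * β.B x h with hu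
  set M := Nat.card (powMonoidHom (p ^ (a + b)) : G →* G).range with hM
  have key : (M : E) * u = ∑ y : (powMonoidHom (p ^ (a + b)) : G →* G).range,
      β.ft f (h * y) * β.B z⁻¹ (h * y) := by
    simp only [BiChar.ft, sum_mul]
    rw [sum_comm]
    have e1 : ∀ x, ∑ y : (powMonoidHom (p ^ (a + b)) : G →* G).range,
        (f x : E) * β.B x (h * y) * β.B z⁻¹ (h * y) =
        if (z⁻¹ * x) ^ (p ^ (a + b)) = 1 then (M : E) * (f x * β.B (z⁻¹ * x) h) else 0 := by
      intro x
      have : ∀ y : (powMonoidHom (p ^ (a + b)) : G →* G).range,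
        (f x : E) * β.B x (h * y) * β.B z⁻¹ (h * y) =
          (f x * β.B (z⁻¹ * x) h) * β.B (z⁻¹ * x) y := by
        intro y; simp only [β.mr, β.ml]; ring
      simp only [this]
      rw [← mul_sum, S.sum_H β]
      split_ifs <;> ring
    rw [sum_congr rfl fun x _ => e1 x, ← Equiv.sum_comp (Equiv.mulLeft z), hu, mul_sum, sum_filter]
    simp
  choose T hT using hf
  set t0 : E := ∑ y : (powMonoidHom (p ^ (a + b)) : G →* G).range,
      (T (h * y) : E) * β.B z⁻¹ (h * y) with ht0
  have ht0i : IsIntegral ℤ t0 := IsIntegral.sum _ fun y _ =>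
    (isIntegral_algebraMap (R := ℤ) (A := E) (x := T (h * y))).mul (β.isIntegral _ _)
  have key2 : (M : E) * u = ((p ^ c : ℕ) : E) * t0 := by
    rw [key, ht0, mul_sum]
    refine sum_congr rfl fun y _ => ?_
    rw [hT]; ring
  have hui : IsIntegral ℤ u := IsIntegral.sum _ fun y _ =>
    (isIntegral_algebraMap (R := ℤ) (A := E) (x := f (z * y))).mul (β.isIntegral _ _)
  have hcop : IsCoprime (M : ℤ) ((p ^ c : ℕ) : ℤ) := by
    rw [Nat.isCoprime_iff_coprime]
    exact (((Nat.Prime.coprime_iff_not_dvd S.hp).2 S.card_range).symm).pow_right c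
  obtain ⟨α, γ, hαγ⟩ := hcop
  refine ⟨α * t0 + γ * u, ?_, ?_⟩
  · exact ((isIntegral_algebraMap (R := ℤ) (A := E) (x := α)).mul ht0i).add
      ((isIntegral_algebraMap (R := ℤ) (A := E) (x := γ)).mul hui)
  · have : (α : E) * M + γ * ((p ^ c : ℕ) : E) = 1 := by exact_mod_cast hαγ
    rw [Int.cast_natCast]
    linear_combination (-u) * this + α * key2

/-- The kernel set. -/
def Ker (_ : Setup G p a b w) (β : BiChar G E) (h : G) : Subgroup G where
  carrier := {x | x ^ (p ^ (a + b)) = 1 ∧ β.B x h = 1}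
  mul_mem' := by
    rintro x y ⟨hx, hx'⟩ ⟨hy, hy'⟩
    exact ⟨by rw [mul_pow, hx, hy, one_mul], by rw [β.ml, hx', hy', one_mul]⟩
  one_mem' := ⟨one_pow _, β.ol h⟩
  inv_mem' := by
    rintro x ⟨hx, hx'⟩
    exact ⟨by rw [inv_pow, hx, inv_one], by rw [β.inv_left, hx', inv_one]⟩

lemma mem_Ker (h x : G) : x ∈ S.Ker β h ↔ x ^ (p ^ (a + b)) = 1 ∧ β.B x h = 1 := Iff.rfl

lemma w_pow (j : ℕ) : (w ^ j) ^ (p ^ (a + b)) = 1 := by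
  rw [pow_add, ← pow_mul, mul_comm j, mul_assoc, pow_mul, S.hw, one_pow]

lemma card_Ker {h : G} (hh : β.B (w ^ (p ^ (a - 1))) h ≠ 1) :
    Nat.card (S.Ker β h) ≤ p ^ b := by
  have hprim := S.prim β hh
  let φ : (S.Ker β h) × Fin (p ^ a) → (powMonoidHom (p ^ (a + b)) : G →* G).ker := fun x =>
    ⟨x.1 * w ^ (x.2 : ℕ), by
      change (x.1 * w ^ (x.2 : ℕ)) ^ _ = 1
      rw [mul_pow, x.1.2.1, S.w_pow, one_mul]⟩
  have hφ : Function.Injective φ := by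
    rintro ⟨x, i⟩ ⟨y, j⟩ hxy
    have h1 : (x : G) * w ^ (i : ℕ) = y * w ^ (j : ℕ) := congrArg Subtype.val hxy
    have h2 := congrArg (fun g => β.B g h) h1
    simp only [β.ml, β.pow_left, x.2.2, y.2.2, one_mul] at h2
    have h3 := hprim.pow_inj i.2 j.2 h2
    rw [h3] at h1
    have h4 := mul_right_cancel h1
    ext
    · exact h4
    · exact h3
  have := Nat.card_le_card_of_injective φ hφ
  rw [S.cardP, Nat.card_prod, Nat.card_fin, pow_add, mul_comm] at this
  exact Nat.le_of_mul_le_mul_left this (pow_pos S.hp.pos _)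

open Classical in
lemma congruence [CharZero E] (f : G → ℤ) (c : ℕ)
    (hf : ∀ h, ∃ t : ℤ, β.ft f h = ((p ^ c : ℕ) : E) * t)
    {h : G} (hh : β.B (w ^ (p ^ (a - 1))) h ≠ 1) (z : G) :
    ((p ^ c : ℕ) : ℤ) ∣ (∑ x : S.Ker β h, f (z * w ^ (p ^ (a - 1)) * x)) -
      ∑ x : S.Ker β h, f (z * x) := by
  obtain ⟨t, ht, hut⟩ := S.u_divisible β f c hf h z
  have hprim := S.prim β hh
  let cc : ℕ → ℤ := fun j =>
    ∑ x with (x : G) ^ (p ^ (a + b)) = 1, if β.B x h = β.B w h ^ j then f (z * x) else 0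
  have hsum : ∑ j ∈ range (p ^ a), (cc j : E) * (β.B w h) ^ j =
      ∑ x with x ^ (p ^ (a + b)) = 1, (f (z * x) : E) * β.B x h := by
    simp only [cc, Int.cast_sum, sum_mul]
    rw [sum_comm]
    refine sum_congr rfl fun x hx => ?_
    rw [mem_filter] at hx
    have hx1 : β.B x h ^ (p ^ a) = 1 := by
      rw [← β.pow_left, S.exp x hx.2, β.ol]
    have : NeZero (p ^ a) := ⟨(pow_pos S.hp.pos _).ne'⟩
    obtain ⟨i, hi, hix⟩ := hprim.eq_pow_of_pow_eq_one hx1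
    rw [sum_eq_single i]
    · rw [if_pos hix.symm, hix]
    · intro j hj hji
      rw [if_neg, Int.cast_zero, zero_mul]
      intro hxj
      rw [← hix] at hxj
      exact hji (hprim.pow_inj hi (mem_range.1 hj) hxj).symm
    · intro hni; exact absurd (mem_range.2 hi) hni
  have hc0 : ∀ j, cc j = ∑ x : S.Ker β h, f (z * w ^ j * x) := by
    intro j
    simp only [cc]
    rw [← sum_filter, filter_filter]
    symm
    refine sum_bij (fun x _ => w ^ j * (x : G)) ?_ ?_ ?_ ?_
    · intro x _
      rw [mem_filter]
      refine ⟨mem_univ _, ?_, ?_⟩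
      · rw [mul_pow, S.w_pow, x.2.1, one_mul]
      · rw [β.ml, x.2.2, β.pow_left, mul_one]
    · intro x _ y _ hxy
      exact Subtype.ext (mul_left_cancel hxy)
    · intro x hx
      rw [mem_filter] at hx
      refine ⟨⟨(w ^ j)⁻¹ * x, ?_, ?_⟩, mem_univ _, ?_⟩
      · rw [mul_pow, inv_pow, S.w_pow, hx.2.1, inv_one, one_mul]
      · rw [β.ml, β.inv_left, β.pow_left, hx.2.2,
          inv_mul_cancel₀ (pow_ne_zero _ (β.ne_zero w h))]
      · simp
    · intro x _
      rw [mul_assoc]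
  have := S.hab
  have hdv := root_lemma S.hp (by omega) hprim cc _ (by exact_mod_cast (pow_pos S.hp.pos c).ne') t ht
    (hsum.trans hut)
  rw [hc0, hc0] at hdv
  simpa using hdv

end Setup

end

section
open Finset

namespace Setup

variable {G : Type*} [CommGroup G] [Fintype G] {p a b : ℕ} {w : G} (S : Setup G p a b w)
  {E : Type*} [Field E] (β : BiChar G E)
include S

open Classical in
lemma sum_Ker_shift (f : G → ℤ) (h z k : G) (hk : k ∈ S.Ker β h) :
    ∑ x : S.Ker β h, f (z * k * x) = ∑ x : S.Ker β h, f (z * x) := by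
  rw [← Equiv.sum_comp (Equiv.mulLeft (⟨k, hk⟩ : S.Ker β h))
    (fun x : S.Ker β h => f (z * x))]
  simp [mul_assoc]

open Classical in
/-- `∑_z F(z) B(z,h) = |K| * ft f h`. -/
lemma ft_F (f : G → ℤ) (h : G) :
    β.ft (fun z => ∑ x : S.Ker β h, f (z * x)) h = (Nat.card (S.Ker β h) : E) * β.ft f h := by
  simp only [BiChar.ft, Int.cast_sum, sum_mul]
  rw [sum_comm]
  have : ∀ x : S.Ker β h, ∑ z, (f (z * x) : E) * β.B z h = β.ft f h := by
    intro x
    rw [β.ft_shift, x.2.2, inv_one, one_mul]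
  rw [sum_congr rfl fun x _ => this x]
  simp [BiChar.ft]

open Classical in
lemma core_value [CharZero E] (f : G → ℤ) (hf01 : ∀ g, g ≠ 1 → f g = 0 ∨ f g = 1)
    (hf : ∀ h, ∃ t : ℤ, β.ft f h = ((p ^ (b + 1) : ℕ) : E) * t)
    {h : G} (hh : β.B (w ^ (p ^ (a - 1))) h ≠ 1) :
    ∃ s t : ℤ, β.ft f h = ((f 1 + s - t : ℤ) : E) ∧ 0 ≤ s ∧ s + 1 ≤ p ^ b ∧ 0 ≤ t ∧ t ≤ p ^ b := by
  set q := w ^ (p ^ (a - 1)) with hq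
  set F : G → ℤ := fun z => ∑ x : S.Ker β h, f (z * x) with hF
  have hcong : ∀ z, ((p ^ (b + 1) : ℕ) : ℤ) ∣ F (z * q) - F z := fun z =>
    S.congruence β f (b + 1) hf hh z
  have hcard : (Nat.card (S.Ker β h) : ℤ) ≤ p ^ b := by exact_mod_cast S.card_Ker β hh
  have hcard0 : 0 < Nat.card (S.Ker β h) := Nat.card_pos
  have hFK : ∀ z k, k ∈ S.Ker β h → F (z * k) = F z := fun z k hk => S.sum_Ker_shift β f h z k hk
  have hqK : q ∉ S.Ker β h := fun hc => hh hc.2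
  -- bounds
  have hne : ∀ z, z ∉ S.Ker β h → ∀ x : S.Ker β h, z * x ≠ 1 := by
    intro z hz x hx
    apply hz
    rw [mul_eq_one_iff_eq_inv.1 hx]
    exact (S.Ker β h).inv_mem x.2
  have hF0 : ∀ z, z ∉ S.Ker β h → 0 ≤ F z := by
    intro z hz
    refine sum_nonneg fun x _ => ?_
    rcases hf01 _ (hne z hz x) with h | h <;> rw [h]; norm_num
  have hF1 : ∀ z, z ∉ S.Ker β h → F z ≤ p ^ b := by
    intro z hz
    refine le_trans ?_ hcard
    have : F z ≤ ∑ x : S.Ker β h, (1 : ℤ) := by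
      refine sum_le_sum fun x _ => ?_
      rcases hf01 _ (hne z hz x) with h | h <;> rw [h]; norm_num
    simpa using this
  have hpb : (1 : ℤ) ≤ (p : ℤ) ^ b := by exact_mod_cast Nat.one_le_pow _ _ S.hp.pos
  have hp2 : (2 : ℤ) ≤ p := by exact_mod_cast S.hp.two_le
  have hlt : (p : ℤ) ^ b < ((p ^ (b + 1) : ℕ) : ℤ) := by
    push_cast; rw [pow_succ]; nlinarith
  have heq : ∀ z z', z ∉ S.Ker β h → z' ∉ S.Ker β h →
      ((p ^ (b + 1) : ℕ) : ℤ) ∣ F z' - F z → F z' = F z := by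
    intro z z' hz hz' hd
    have a1 := hF0 z hz; have a2 := hF1 z hz; have a3 := hF0 z' hz'; have a4 := hF1 z' hz'
    have := Int.eq_zero_of_abs_lt_dvd hd (by rw [abs_lt]; constructor <;> linarith)
    linarith
  -- main invariance
  let F0 : G → ℤ := fun z => F z - if z ∈ S.Ker β h then F 1 - F q else 0
  have hinv : ∀ z, F0 (z * q) = F0 z := by
    intro z
    simp only [F0]
    by_cases hz : z ∈ S.Ker β h
    · have hzq : z * q ∉ S.Ker β h := fun hc => hqK (by
        have := (S.Ker β h).mul_mem ((S.Ker β h).inv_mem hz) hc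
        simpa using this)
      rw [if_pos hz, if_neg hzq]
      have e1 : F z = F 1 := by simpa using hFK 1 z hz
      have e2 : F (z * q) = F q := by rw [mul_comm]; exact hFK q z hz
      rw [e1, e2]; ring
    · by_cases hzq : z * q ∈ S.Ker β h
      · rw [if_neg hz, if_pos hzq]
        have e1 : F (z * q) = F 1 := by simpa using hFK 1 _ hzq
        have e2 : F q = F z := by
          refine heq z q hz hqK ?_
          have d1 := hcong z
          have d2 := hcong 1
          rw [e1] at d1
          rw [one_mul] at d2
          have := dvd_add d1 d2
          have e : F 1 - F z + (F q - F 1) = F q - F z := by ring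
          rwa [e] at this
        rw [e1, e2]; ring
      · rw [if_neg hz, if_neg hzq, heq z (z * q) hz hzq (hcong z)]
  have hft0 := β.sum_eq_zero_of_invariant F0 q h hh hinv
  have hval : β.ft f h = ((F 1 - F q : ℤ) : E) := by
    have e1 : β.ft F0 h = β.ft F h - (Nat.card (S.Ker β h) : E) * ((F 1 - F q : ℤ) : E) := by
      simp only [BiChar.ft, F0, Int.cast_sub, sub_mul, sum_sub_distrib]
      congr 1
      have : ∀ x : G, ((if x ∈ S.Ker β h then F 1 - F q else 0 : ℤ) : E) * β.B x h =
          if x ∈ S.Ker β h then ((F 1 - F q : ℤ) : E) else 0 := by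
        intro x
        split_ifs with hx
        · rw [hx.2, mul_one]
        · simp
      rw [sum_congr rfl fun x _ => this x, ← sum_filter, sum_const, nsmul_eq_mul]
      rw [Nat.card_eq_fintype_card, Fintype.card_subtype]
      push_cast
      ring
    rw [hft0, S.ft_F β f h, ← mul_sub] at e1
    have hc : (Nat.card (S.Ker β h) : E) ≠ 0 := by exact_mod_cast hcard0.ne'
    have := (mul_eq_zero.1 e1.symm).resolve_left hc
    exact sub_eq_zero.1 this
  refine ⟨F 1 - f 1, F q, ?_, ?_, ?_, hF0 q hqK, hF1 q hqK⟩
  · rw [hval]; push_cast; ring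
  · have : F 1 - f 1 = ∑ x ∈ univ.erase (1 : S.Ker β h), f (1 * (x : G)) := by
      rw [hF]; simp only
      rw [← add_sum_erase univ _ (mem_univ (1 : S.Ker β h))]
      simp
    rw [this]
    refine sum_nonneg fun x hx => ?_
    have hx1 : (x : G) ≠ 1 := by
      intro hc; exact (mem_erase.1 hx).1 (Subtype.ext hc)
    rw [one_mul]
    rcases hf01 _ hx1 with h | h <;> rw [h]; norm_num
  · have : F 1 - f 1 = ∑ x ∈ univ.erase (1 : S.Ker β h), f (1 * (x : G)) := by
      rw [hF]; simp only
      rw [← add_sum_erase univ _ (mem_univ (1 : S.Ker β h))]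
      simp
    rw [this]
    have h2 : ∑ x ∈ univ.erase (1 : S.Ker β h), f (1 * (x : G)) ≤
        ∑ x ∈ univ.erase (1 : S.Ker β h), (1 : ℤ) := by
      refine sum_le_sum fun x hx => ?_
      have hx1 : (x : G) ≠ 1 := by
        intro hc; exact (mem_erase.1 hx).1 (Subtype.ext hc)
      rw [one_mul]
      rcases hf01 _ hx1 with h | h <;> rw [h]; norm_num
    have h3 : ∑ x ∈ univ.erase (1 : S.Ker β h), (1 : ℤ) = (Nat.card (S.Ker β h) : ℤ) - 1 := by
      rw [sum_const, card_erase_of_mem (mem_univ _), Finset.card_univ,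
        ← Nat.card_eq_fintype_card, nsmul_eq_mul, mul_one, Nat.cast_sub hcard0, Nat.cast_one]
    linarith

lemma core [CharZero E] (f : G → ℤ) (hf01 : ∀ g, g ≠ 1 → f g = 0 ∨ f g = 1) (δ : ℤ) (hδ : 0 < δ)
    (hpδ : ((p ^ (b + 1) : ℕ) : ℤ) ∣ δ)
    (hf : ∀ h, ∃ t : ℤ, β.ft f h = ((δ * t : ℤ) : E))
    (hf2 : ∀ h, h ≠ 1 → β.ft f h = 0 ∨ β.ft f h = δ)
    {h h' : G} (hh : β.B (w ^ (p ^ (a - 1))) h ≠ 1) (hh' : β.B (w ^ (p ^ (a - 1))) h' ≠ 1) :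
    β.ft f h = β.ft f h' := by
  have hf' : ∀ h, ∃ t : ℤ, β.ft f h = ((p ^ (b + 1) : ℕ) : E) * t := by
    intro h
    obtain ⟨t, ht⟩ := hf h
    obtain ⟨e, rfl⟩ := hpδ
    exact ⟨e * t, by rw [ht]; push_cast; ring⟩
  have hle : ((p ^ (b + 1) : ℕ) : ℤ) ≤ δ := Int.le_of_dvd hδ hpδ
  have hp2 : (2 : ℤ) ≤ p := by exact_mod_cast S.hp.two_le
  have hpb : (1 : ℤ) ≤ (p : ℤ) ^ b := by exact_mod_cast Nat.one_le_pow _ _ S.hp.pos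
  have hle2 : 2 * (p : ℤ) ^ b ≤ δ := by
    refine le_trans ?_ hle
    push_cast; rw [pow_succ]; nlinarith
  have main : ∀ h h' : G, β.B (w ^ (p ^ (a - 1))) h ≠ 1 → β.B (w ^ (p ^ (a - 1))) h' ≠ 1 →
      β.ft f h = 0 → β.ft f h' = δ → False := by
    intro h h' hh hh' e0 e1
    obtain ⟨s, t, hst, h1, h2, h3, h4⟩ := S.core_value β f hf01 hf' hh
    obtain ⟨s', t', hst', h1', h2', h3', h4'⟩ := S.core_value β f hf01 hf' hh'
    rw [e0] at hst
    rw [e1] at hst'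
    have i0 : (0 : ℤ) = f 1 + s - t := by exact_mod_cast hst
    have i1 : δ = f 1 + s' - t' := by exact_mod_cast hst'
    linarith
  have hn : ∀ h, β.B (w ^ (p ^ (a - 1))) h ≠ 1 → h ≠ 1 := by
    rintro h hh rfl; exact hh (β.or1 _)
  rcases hf2 h (hn h hh) with e | e <;> rcases hf2 h' (hn h' hh') with e' | e'
  · rw [e, e']
  · exact (main h h' hh hh' e e').elim
  · exact (main h' h hh' hh e' e).elim
  · rw [e, e']

end Setup

end

section
open Finset

open Classical in
/-- Integer indicator. -/
noncomputable def ind {G : Type*} (D : Set G) (g : G) : ℤ := if g ∈ D then 1 else 0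

/-- Regular PDS data in terms of sums. -/
structure PD {G : Type*} [CommGroup G] [Fintype G] (D : Set G) (k lam mu : ℤ) : Prop where
  one : (1 : G) ∉ D
  inv : ∀ g ∈ D, g⁻¹ ∈ D
  card : ∑ y, ind D y = k
  c1 : ∀ z, z ∈ D → ∑ y, ind D y * ind D (z * y) = lam
  c2 : ∀ z, z ≠ 1 → z ∉ D → ∑ y, ind D y * ind D (z * y) = mu

lemma ind_mem {G : Type*} {D : Set G} {g : G} (h : g ∈ D) : ind D g = 1 := by simp [ind, h]
lemma ind_not {G : Type*} {D : Set G} {g : G} (h : g ∉ D) : ind D g = 0 := by simp [ind, h]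
lemma ind_01 {G : Type*} (D : Set G) (g : G) : ind D g = 0 ∨ ind D g = 1 := by
  by_cases h : g ∈ D <;> simp [ind, h]
lemma ind_nonneg {G : Type*} (D : Set G) (g : G) : 0 ≤ ind D g := by
  rcases ind_01 D g with h | h <;> rw [h]; norm_num
lemma ind_le {G : Type*} (D : Set G) (g : G) : ind D g ≤ 1 := by
  rcases ind_01 D g with h | h <;> rw [h]; norm_num

namespace PD

variable {G : Type*} [CommGroup G] [Fintype G] {D : Set G} {k lam mu : ℤ} (P : PD D k lam mu)
include P

lemma inv_iff (g : G) : g⁻¹ ∈ D ↔ g ∈ D :=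
  ⟨fun h => by simpa using P.inv _ h, P.inv g⟩

lemma ind_inv (g : G) : ind D g⁻¹ = ind D g := by
  by_cases h : g ∈ D
  · rw [ind_mem h, ind_mem (P.inv g h)]
  · rw [ind_not h, ind_not fun hc => h ((P.inv_iff g).1 hc)]

lemma triv1 (h : k = mu) : IsTrivialPDS D := by
  have key : ∀ z, z ∉ D → ∀ y ∈ D, z * y ∈ D := by
    intro z hz y hy
    by_cases hz1 : z = 1
    · rwa [hz1, one_mul]
    have h1 : ∑ y, ind D y * (1 - ind D (z * y)) = 0 := by
      simp only [mul_sub, sum_sub_distrib, mul_one]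
      rw [P.card, P.c2 z hz1 hz, h, sub_self]
    rw [sum_eq_zero_iff_of_nonneg] at h1
    · have := h1 y (mem_univ _)
      by_contra hc
      rw [ind_mem hy, ind_not hc] at this
      norm_num at this
    · intro y _
      exact mul_nonneg (ind_nonneg _ _) (by linarith [ind_le D (z * y)])
  right
  refine ⟨{ carrier := Dᶜ, mul_mem' := ?_, one_mem' := P.one, inv_mem' := ?_ }, rfl⟩
  · intro x y hx hy hxy
    have h1 := key _ (fun hc => hy ((P.inv_iff y).1 hc)) _ hxy
    rw [mul_comm, mul_inv_cancel_right] at h1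
    exact hx h1
  · intro x hx hc
    exact hx ((P.inv_iff x).1 hc)

lemma triv2 (h : lam = k - 1) : IsTrivialPDS D := by
  classical
  have key : ∀ z, z ∈ D → ∀ y ∈ D, z * y ∈ D ∨ z * y = 1 := by
    intro z hz y hy
    have h1 : ∑ y, ind D y * (1 - ind D (z * y)) = 1 := by
      simp only [mul_sub, sum_sub_distrib, mul_one]
      rw [P.card, P.c1 z hz, h]; ring
    rw [← add_sum_erase univ _ (mem_univ z⁻¹), ind_mem (P.inv z hz), mul_inv_cancel,
      ind_not P.one] at h1
    have h2 : ∑ y ∈ univ.erase z⁻¹, ind D y * (1 - ind D (z * y)) = 0 := by linarith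
    rw [sum_eq_zero_iff_of_nonneg] at h2
    · by_contra hc
      push Not at hc
      have hne : y ≠ z⁻¹ := by
        rintro rfl; exact hc.2 (mul_inv_cancel z)
      have := h2 y (mem_erase.2 ⟨hne, mem_univ _⟩)
      rw [ind_mem hy, ind_not hc.1] at this
      norm_num at this
    · intro y _
      exact mul_nonneg (ind_nonneg _ _) (by linarith [ind_le D (z * y)])
  left
  refine ⟨{ carrier := D ∪ {1}, mul_mem' := ?_, one_mem' := Or.inr rfl, inv_mem' := ?_ }, rfl⟩
  · rintro x y (hx | hx) (hy | hy)
    · exact key x hx y hy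
    · rw [Set.mem_singleton_iff] at hy; rw [hy, mul_one]; exact Or.inl hx
    · rw [Set.mem_singleton_iff] at hx; rw [hx, one_mul]; exact Or.inl hy
    · rw [Set.mem_singleton_iff] at hx hy; rw [hx, one_mul]; exact Or.inr hy
  · rintro x (hx | hx)
    · exact Or.inl (P.inv x hx)
    · rw [Set.mem_singleton_iff] at hx; right; simp [hx]

lemma triv3 (M : Subgroup G) (z0 : G) (hz0 : z0 ∉ M) (hD : ∀ g ∈ D, g ∈ M) : IsTrivialPDS D := by
  have hmu : mu = 0 := by
    rw [← P.c2 z0 (fun h => hz0 (h ▸ M.one_mem)) (fun h => hz0 (hD _ h))]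
    refine sum_eq_zero fun y _ => ?_
    by_cases hy : y ∈ D
    · rw [ind_not (g := z0 * y), mul_zero]
      intro hc
      exact hz0 ((M.mul_mem_cancel_right (hD _ hy)).1 (hD _ hc))
    · rw [ind_not hy, zero_mul]
  have key : ∀ z, z ∈ D → ∀ y ∈ D, z * y ∈ D ∨ z * y = 1 := by
    intro z hz y hy
    by_contra hc
    push Not at hc
    have h1 := P.c2 _ hc.2 hc.1
    rw [hmu, sum_eq_zero_iff_of_nonneg] at h1
    · have := h1 y⁻¹ (mem_univ _)
      rw [mul_inv_cancel_right, ind_mem hz, ind_mem (P.inv y hy)] at this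
      norm_num at this
    · intro y _
      exact mul_nonneg (ind_nonneg _ _) (ind_nonneg _ _)
  left
  refine ⟨{ carrier := D ∪ {1}, mul_mem' := ?_, one_mem' := Or.inr rfl, inv_mem' := ?_ }, rfl⟩
  · rintro x y (hx | hx) (hy | hy)
    · exact key x hx y hy
    · rw [Set.mem_singleton_iff] at hy; rw [hy, mul_one]; exact Or.inl hx
    · rw [Set.mem_singleton_iff] at hx; rw [hx, one_mul]; exact Or.inl hy
    · rw [Set.mem_singleton_iff] at hx hy; rw [hx, one_mul]; exact Or.inr hy
  · rintro x (hx | hx)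
    · exact Or.inl (P.inv x hx)
    · rw [Set.mem_singleton_iff] at hx; right; simp [hx]

lemma triv4 (M : Subgroup G) (z0 : G) (hz0 : z0 ∉ M) (hD : ∀ g, g ∉ M → g ∈ D) :
    IsTrivialPDS D := by
  have hsum : ∀ z, ∑ y, (1 - ind D y) * (1 - ind D (z * y)) =
      (Fintype.card G : ℤ) - 2 * k + ∑ y, ind D y * ind D (z * y) := by
    intro z
    have e : ∑ y, ind D (z * y) = k := by
      rw [← P.card]; exact Equiv.sum_comp (Equiv.mulLeft z) (ind D)
    have : ∀ y, (1 - ind D y) * (1 - ind D (z * y)) =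
      1 - ind D y - ind D (z * y) + ind D y * ind D (z * y) := fun y => by ring
    simp only [this, sum_add_distrib, sum_sub_distrib, e, P.card]
    simp; ring
  have h0 : ∑ y, (1 - ind D y) * (1 - ind D (z0 * y)) = 0 := by
    refine sum_eq_zero fun y _ => ?_
    by_cases hy : y ∈ D
    · rw [ind_mem hy]; ring
    · have hyM : y ∈ M := by by_contra hc; exact hy (hD _ hc)
      rw [ind_mem (hD (z0 * y) fun hc => hz0 ((M.mul_mem_cancel_right hyM).1 hc))]; ring
  rw [hsum, P.c1 z0 (hD z0 hz0)] at h0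
  right
  refine ⟨{ carrier := Dᶜ, mul_mem' := ?_, one_mem' := P.one, inv_mem' := ?_ }, rfl⟩
  · intro x y hx hy hxy
    have h1 := hsum (x * y)
    rw [P.c1 _ hxy, h0, sum_eq_zero_iff_of_nonneg] at h1
    · have := h1 y⁻¹ (mem_univ _)
      rw [mul_inv_cancel_right, ind_not hx, ind_not (fun hc => hy ((P.inv_iff y).1 hc))] at this
      norm_num at this
    · intro t _
      exact mul_nonneg (by linarith [ind_le D t]) (by linarith [ind_le D (x * y * t)])
  · intro x hx hc
    exact hx ((P.inv_iff x).1 hc)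

open Classical in
lemma conv (z : G) : ∑ y, ind D y * ind D (z * y) =
    mu + (lam - mu) * ind D z + (k - mu) * (if z = 1 then 1 else 0) := by
  by_cases h1 : z = 1
  · subst h1
    rw [ind_not P.one, if_pos rfl, ← P.card]
    have : ∀ y, ind D y * ind D (1 * y) = ind D y := by
      intro y; rw [one_mul]; rcases ind_01 D y with h | h <;> rw [h] <;> norm_num
    rw [sum_congr rfl fun y _ => this y]; ring
  · rw [if_neg h1]
    by_cases h : z ∈ D
    · rw [P.c1 z h, ind_mem h]; ring
    · rw [P.c2 z h1 h, ind_not h]; ring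

variable {E : Type*} [Field E] (β : BiChar G E)

lemma ft_inv (h : G) : β.ft (ind D) h⁻¹ = β.ft (ind D) h := by
  rw [BiChar.ft, BiChar.ft, ← Equiv.sum_comp (Equiv.inv G)]
  refine sum_congr rfl fun x _ => ?_
  simp only [Equiv.inv_apply, P.ind_inv, β.inv_left, β.inv_right, inv_inv]

lemma quad {h : G} (hh : h ≠ 1) :
    β.ft (ind D) h ^ 2 = ((k - mu : ℤ) : E) + ((lam - mu : ℤ) : E) * β.ft (ind D) h := by
  classical
  have e1 : ∑ z, ((∑ y, ind D y * ind D (z * y) : ℤ) : E) * β.B z h = β.ft (ind D) h ^ 2 := by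
    simp only [Int.cast_sum, sum_mul]
    rw [sum_comm]
    have : ∀ y, ∑ z, ((ind D y * ind D (z * y) : ℤ) : E) * β.B z h =
        (ind D y * β.B y h⁻¹) * β.ft (ind D) h := by
      intro y
      rw [β.inv_right, mul_assoc, ← β.ft_shift, mul_sum]
      refine sum_congr rfl fun z _ => ?_
      push_cast; ring
    rw [sum_congr rfl fun y _ => this y, ← sum_mul]
    change β.ft (ind D) h⁻¹ * _ = _
    rw [P.ft_inv]; ring
  rw [← e1]
  simp only [P.conv]
  have : ∀ z, ((mu + (lam - mu) * ind D z + (k - mu) * (if z = 1 then 1 else 0) : ℤ) : E) * β.B z h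
     = (mu : E) * β.B z h + ((lam - mu : ℤ) : E) * (ind D z * β.B z h) +
        if z = 1 then ((k - mu : ℤ) : E) else 0 := by
    intro z
    by_cases hz : z = 1
    · subst hz; simp only [if_true, β.ol]; push_cast; ring
    · simp only [hz, if_false]; push_cast; ring
  rw [sum_congr rfl fun z _ => this z, sum_add_distrib, sum_add_distrib, ← mul_sum, ← mul_sum,
    β.sum_left, if_neg hh, sum_ite_eq' univ 1, if_pos (mem_univ _)]
  simp only [BiChar.ft]
  ring

end PD

end

section
open Finset

lemma int_dvd_of_integral {E : Type*} [Field E] [CharZero E] (n d : ℤ) (hd : d ≠ 0) (t : E)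
    (ht : IsIntegral ℤ t) (h : (n : E) = d * t) : d ∣ n := by
  have hd' : (d : E) ≠ 0 := by exact_mod_cast hd
  have e : t = algebraMap ℚ E ((n : ℚ) / d) := by
    rw [map_div₀, map_intCast, map_intCast, h]; field_simp
  rw [e, isIntegral_algebraMap_iff (algebraMap ℚ E).injective] at ht
  obtain ⟨y, hy⟩ := IsIntegrallyClosed.isIntegral_iff.1 ht
  refine ⟨y, ?_⟩
  have hdq : (d : ℚ) ≠ 0 := by exact_mod_cast hd
  simp only [algebraMap_int_eq, eq_intCast] at hy
  have : (n : ℚ) = d * y := by rw [hy]; field_simp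
  exact_mod_cast this

lemma prime_pow_split {p a b : ℕ} (hp : p.Prime) (hab : b < a) {x y : ℕ}
    (h : p ^ (a + b) ∣ x * y) : p ^ (b + 1) ∣ x ∨ p ^ (b + 1) ∣ y := by
  obtain ⟨y', z', h1, h2, h3⟩ := (Nat.dvd_mul).1 h
  obtain ⟨i, -, rfl⟩ := (Nat.dvd_prime_pow hp).1 (Dvd.intro _ h3)
  obtain ⟨j, -, rfl⟩ := (Nat.dvd_prime_pow hp).1 (Dvd.intro_left _ h3)
  rw [← pow_add] at h3
  have := Nat.pow_right_injective hp.two_le h3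
  by_cases hi : b + 1 ≤ i
  · left; exact (pow_dvd_pow p hi).trans h1
  · right; exact (pow_dvd_pow p (by omega)).trans h2

open Classical in
theorem square_case {G : Type*} [CommGroup G] [Fintype G] {p a b : ℕ} {w : G}
    (S : Setup G p a b w) {E : Type*} [Field E] [CharZero E] (β : BiChar G E)
    {D : Set G} {k lam mu : ℤ} (P : PD D k lam mu) (δ : ℤ) (hδ0 : 0 ≤ δ)
    (hΔ : (lam - mu) ^ 2 + 4 * (k - mu) = δ ^ 2) (g0 : G) (hg0 : g0 ∈ D) (g1 : G) (hg1 : g1 ∉ D)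
    (hg11 : g1 ≠ 1) : IsTrivialPDS D := by
  obtain ⟨θ, hθ⟩ : ∃ θ, lam - mu - δ = 2 * θ := by
    have h1 : Even ((lam - mu) ^ 2 - δ ^ 2) := by
      rw [show (lam - mu) ^ 2 - δ ^ 2 = 2 * (-2 * (k - mu)) by linarith]
      exact even_two_mul _
    have : Even (lam - mu - δ) := by
      rw [Int.even_sub] at h1 ⊢
      simpa [Int.even_pow] using h1
    obtain ⟨r, hr⟩ := this
    exact ⟨r, by rw [hr]; ring⟩
  have hroot : k - mu = θ ^ 2 - (lam - mu) * θ := by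
    have : δ = lam - mu - 2 * θ := by linarith
    subst this
    nlinarith
  set f : G → ℤ := fun g => ind D g - if g = 1 then θ else 0 with hf
  have hfn : ∀ g, g ≠ 1 → f g = ind D g := by intro g hg; simp [hf, hg]
  have hf1 : f 1 = -θ := by simp [hf, ind_not P.one]
  have hg01 : g0 ≠ 1 := by rintro rfl; exact P.one hg0
  have hft : ∀ h, β.ft f h = β.ft (ind D) h - θ := by
    intro h
    simp only [BiChar.ft, hf, Int.cast_sub, sub_mul, sum_sub_distrib]
    congr 1
    rw [sum_eq_single 1]
    · simp [β.ol]
    · intro x _ hx; simp [hx]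
    · simp
  have hft01 : ∀ h, h ≠ 1 → β.ft f h = 0 ∨ β.ft f h = δ := by
    intro h hh
    have h1 := P.quad β hh
    rw [hroot] at h1
    have h2 : β.ft f h * (β.ft f h - δ) = 0 := by
      rw [hft h]
      have : δ = lam - mu - 2 * θ := by linarith
      rw [this]
      push_cast at h1 ⊢
      linear_combination h1
    rcases mul_eq_zero.1 h2 with h | h
    · exact Or.inl h
    · exact Or.inr (sub_eq_zero.1 h)
  have hft1 : β.ft f 1 = ((k - θ : ℤ) : E) := by
    rw [hft]
    simp only [BiChar.ft, β.or1, mul_one]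
    rw [← Int.cast_sum, P.card]; push_cast; ring
  set v := Fintype.card G with hv
  have hvpos : 0 < v := Fintype.card_pos
  let N1 : G → ℤ := fun h => if h = 1 then 0 else if β.ft f h = 0 then 0 else 1
  have hN1 : ∀ h, h ≠ 1 → β.ft f h = δ * N1 h := by
    intro h hh
    simp only [N1, if_neg hh]
    split_ifs with h0
    · simp [h0]
    · rw [(hft01 h hh).resolve_left h0]; simp
  have hinv : ∀ g, ∃ T : E, IsIntegral ℤ T ∧ (v : E) * f g = ((k - θ : ℤ) : E) + δ * T := by
    intro g
    refine ⟨∑ h, (N1 h : E) * β.B g⁻¹ h, IsIntegral.sum _ fun h _ =>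
      (isIntegral_algebraMap (R := ℤ) (A := E) (x := N1 h)).mul (β.isIntegral _ _), ?_⟩
    rw [← β.inversion f g, ← add_sum_erase univ _ (mem_univ (1 : G)), hft1, β.or1, mul_one,
      ← add_sum_erase univ (fun h => (N1 h : E) * β.B g⁻¹ h) (mem_univ (1 : G))]
    congr 1
    have hN10 : N1 1 = 0 := if_pos rfl
    rw [hN10, Int.cast_zero, zero_mul, zero_add, mul_sum]
    refine sum_congr rfl fun h hh => ?_
    rw [hN1 h (mem_erase.1 hh).1]; ring
  obtain ⟨T0, hT0, e0⟩ := hinv g0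
  obtain ⟨T1, hT1, e1⟩ := hinv g1
  rw [hfn g0 hg01, ind_mem hg0] at e0
  rw [hfn g1 hg11, ind_not hg1] at e1
  have hδne : δ ≠ 0 := by
    intro h0
    rw [h0] at e0 e1
    have : (v : E) = 0 := by
      push_cast at e0 e1
      linear_combination e0 - e1
    exact hvpos.ne' (by exact_mod_cast this)
  have hδpos : 0 < δ := lt_of_le_of_ne hδ0 hδne.symm
  obtain ⟨δ', hδ'⟩ : δ ∣ (v : ℤ) := by
    refine int_dvd_of_integral (E := E) _ _ hδne (T0 - T1) (hT0.sub hT1) ?_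
    push_cast at e0 e1 ⊢
    linear_combination e0 - e1
  obtain ⟨e, he⟩ : δ ∣ k - θ := by
    refine int_dvd_of_integral (E := E) _ _ hδne (-T1) hT1.neg ?_
    push_cast at e0 e1 ⊢
    linear_combination -e1
  let N : G → ℤ := fun h => if h = 1 then e else N1 h
  have hN : ∀ h, β.ft f h = ((δ * N h : ℤ) : E) := by
    intro h
    by_cases hh : h = 1
    · subst hh; simp only [N, if_true]; rw [hft1, he]
    · simp only [N, if_neg hh]; rw [hN1 h hh]; push_cast; ring
  have hδ'pos : 0 < δ' := by
    have : 0 < δ * δ' := by rw [← hδ']; exact_mod_cast hvpos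
    exact (pos_iff_pos_of_mul_pos this).1 hδpos
  have hδE : (δ : E) ≠ 0 := by exact_mod_cast hδne
  have hdual : ∀ g, β.dual.ft N g = ((δ' * f g : ℤ) : E) := by
    intro g
    have h1 := β.inversion f g
    have h2 : ∑ h, β.ft f h * β.B g⁻¹ h = δ * β.dual.ft N g := by
      rw [BiChar.ft, mul_sum]
      refine sum_congr rfl fun h _ => ?_
      rw [hN h]; simp only [BiChar.dual]; push_cast; ring
    rw [h2] at h1
    have h3 : (v : E) = δ * δ' := by exact_mod_cast congrArg (Int.cast : ℤ → E) hδ'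
    rw [← hv, h3, mul_assoc] at h1
    rw [mul_left_cancel₀ hδE h1]; push_cast; rfl
  set q := w ^ (p ^ (a - 1)) with hq
  obtain ⟨h0, hh0⟩ : ∃ h, β.B q h ≠ 1 := by
    by_contra hc; push Not at hc; exact S.hq (β.ndl q hc)
  lift δ to ℕ using hδ0
  lift δ' to ℕ using hδ'pos.le
  have hsplit : p ^ (b + 1) ∣ δ ∨ p ^ (b + 1) ∣ δ' := by
    obtain ⟨m, hm, -⟩ := S.cop
    refine prime_pow_split S.hp S.hab ⟨m, ?_⟩
    rw [← hm]; exact_mod_cast hδ'.symm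
  rcases hsplit with hs | hs
  · have hconst : ∀ h, β.B q h ≠ 1 → β.ft f h = β.ft f h0 := by
      intro h hh
      refine S.core β f ?_ δ hδpos (by exact_mod_cast hs) (fun h => ⟨N h, hN h⟩) hft01 hh hh0
      intro g hg
      rw [hfn g hg]; exact ind_01 D g
    have i1 := β.inversion f 1
    have i2 := β.inversion f q⁻¹
    have i3 := β.inversion (fun g => if g = 1 then 1 else 0) 1
    have i4 := β.inversion (fun g => if g = 1 then 1 else 0) q⁻¹
    have hq1 : q⁻¹ ≠ 1 := by simpa using S.hq
    have hone : ∀ h, β.ft (fun g => if g = 1 then 1 else 0) h = 1 := by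
      intro h
      rw [BiChar.ft, sum_eq_single 1]
      · simp [β.ol]
      · intro x _ hx; simp [hx]
      · simp
    simp only [hone, if_neg hq1, if_true] at i3 i4
    have key : ∑ h, (β.ft f h - β.ft f h0) * (β.B 1⁻¹ h - β.B q⁻¹⁻¹ h) = 0 := by
      refine sum_eq_zero fun h _ => ?_
      by_cases hh : β.B q h = 1
      · rw [inv_inv, inv_one, β.ol, hh, sub_self, mul_zero]
      · rw [hconst h hh, sub_self, zero_mul]
    have key2 : ∑ h, (β.ft f h - β.ft f h0) * (β.B 1⁻¹ h - β.B q⁻¹⁻¹ h) =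
        (∑ h, β.ft f h * β.B 1⁻¹ h) - (∑ h, β.ft f h * β.B q⁻¹⁻¹ h) -
        β.ft f h0 * ((∑ h, 1 * β.B 1⁻¹ h) - ∑ h, 1 * β.B q⁻¹⁻¹ h) := by
      rw [← sum_sub_distrib, ← sum_sub_distrib, mul_sum, ← sum_sub_distrib]
      refine sum_congr rfl fun h _ => ?_
      ring
    rw [key, i1, i2, i3, i4, hf1, hfn _ hq1] at key2
    have hvE : (v : E) ≠ 0 := by exact_mod_cast hvpos.ne'
    have hval : β.ft f h0 = ((-θ - ind D q⁻¹ : ℤ) : E) := by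
      apply mul_left_cancel₀ hvE
      push_cast at key2 ⊢
      linear_combination key2
    have h0n : h0 ≠ 1 := by rintro rfl; exact hh0 (β.or1 _)
    rcases hft01 h0 h0n with hz | hz
    · rw [hz] at hval
      have : (0 : ℤ) = -θ - ind D q⁻¹ := by exact_mod_cast hval
      rcases ind_01 D q⁻¹ with hi | hi
      · rw [hi] at this
        apply P.triv1
        have : θ = 0 := by linarith
        rw [this] at hroot; linarith
      · rw [hi] at this
        apply P.triv2
        have : θ = -1 := by linarith
        rw [this] at hroot; linarith
    · rw [hz] at hval
      have : (δ : ℤ) = -θ - ind D q⁻¹ := by exact_mod_cast hval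
      rcases ind_01 D q⁻¹ with hi | hi
      · rw [hi] at this
        apply P.triv1
        have : lam - mu = θ := by linarith
        rw [this] at hroot; linarith [hroot]
      · rw [hi] at this
        apply P.triv2
        have : lam - mu = θ - 1 := by linarith
        rw [this] at hroot
        have : k - mu = θ := by rw [hroot]; ring
        linarith
  · have hconst : ∀ g g', β.B g q ≠ 1 → β.B g' q ≠ 1 → f g = f g' := by
      intro g g' hg hg'
      have hB : ∀ x, β.B x q ≠ 1 → β.B x⁻¹ q ≠ 1 := by
        intro x hx; rw [β.inv_left]; simpa using hx
      have := S.core β.dual N ?_ δ' hδ'pos (by exact_mod_cast hs) (fun g => ⟨f g, hdual g⟩) ?_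
        (h := g) (h' := g') (hB g hg) (hB g' hg')
      · rw [hdual, hdual] at this
        have h3 : (δ' : ℤ) * f g = δ' * f g' := by exact_mod_cast this
        exact mul_left_cancel₀ hδ'pos.ne' h3
      · intro g hg
        simp only [N, N1, if_neg hg]
        split_ifs
        · exact Or.inl rfl
        · exact Or.inr rfl
      · intro g hg
        rw [hdual, hfn g hg]
        rcases ind_01 D g with h | h <;> rw [h] <;> simp
    let M : Subgroup G :=
      { carrier := {g | β.B g q = 1}
        mul_mem' := by
          intro x y hx hy
          simp only [Set.mem_ofPred_eq] at hx hy ⊢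
          rw [β.ml, hx, hy, one_mul]
        one_mem' := β.ol q
        inv_mem' := by
          intro x hx
          simp only [Set.mem_ofPred_eq] at hx ⊢
          rw [β.inv_left, hx, inv_one] }
    have hM : ∀ g, g ∈ M ↔ β.B g q = 1 := fun g => Iff.rfl
    obtain ⟨z0, hz0⟩ : ∃ g, β.B g q ≠ 1 := by
      by_contra hc; push Not at hc; exact S.hq (β.ndr q hc)
    have hn1 : ∀ g, β.B g q ≠ 1 → g ≠ 1 := by rintro g hg rfl; exact hg (β.ol q)
    have hiff : ∀ g, g ∉ M → ind D g = ind D z0 := by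
      intro g hg
      rw [← hfn g (hn1 g hg), ← hfn z0 (hn1 z0 hz0)]
      exact hconst _ _ hg hz0
    by_cases hzD : z0 ∈ D
    · refine P.triv4 M z0 hz0 fun g hg => ?_
      by_contra hc
      have := hiff g hg
      rw [ind_mem hzD, ind_not hc] at this
      norm_num at this
    · refine P.triv3 M z0 hz0 fun g hg => ?_
      by_contra hc
      have := hiff g hc
      rw [ind_mem hg, ind_not hzD] at this
      norm_num at this

end

section
open Finset

/-- The signed function arising when the discriminant is not a square. -/
structure Sig {G : Type*} [CommGroup G] [Fintype G] {E : Type*} [Field E] (β : BiChar G E)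
    (f : G → ℤ) : Prop where
  f1 : f 1 = 0
  pm : ∀ g, g ≠ 1 → f g = 1 ∨ f g = -1
  inv : ∀ g, f g⁻¹ = f g
  ft1 : β.ft f 1 = 0
  sq : ∀ h, h ≠ 1 → β.ft f h ^ 2 = (Fintype.card G : E)
  nsq : ¬ IsSquare (Fintype.card G : ℤ)

lemma nonsq_lin {E : Type*} [Field E] [CharZero E] (Δ n m : ℤ) (hΔ : ¬ IsSquare Δ) (r : E)
    (hr : r ^ 2 = Δ) (h : (n : E) = m * r) : n = 0 := by
  have h1 : n ^ 2 = m ^ 2 * Δ := by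
    have : (n : E) ^ 2 = m ^ 2 * Δ := by rw [h, mul_pow, hr]
    exact_mod_cast this
  by_cases hm : m = 0
  · rw [hm] at h1; simpa using h1
  · exfalso
    have : m ∣ n := (Int.pow_dvd_pow_iff (two_ne_zero)).1 (Dvd.intro _ h1.symm)
    obtain ⟨c, rfl⟩ := this
    apply hΔ
    refine ⟨c, ?_⟩
    have : m ^ 2 * (c * c) = m ^ 2 * Δ := by rw [← h1]; ring
    exact (mul_left_cancel₀ (pow_ne_zero 2 hm) this).symm

open Classical in
theorem sig_of_nonsquare {G : Type*} [CommGroup G] [Fintype G]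
    {E : Type*} [Field E] [CharZero E] (β : BiChar G E)
    {D : Set G} {k lam mu : ℤ} (P : PD D k lam mu)
    (hΔ : ¬ IsSquare ((lam - mu) ^ 2 + 4 * (k - mu)))
    (g0 : G) (hg0 : g0 ∈ D) (g1 : G) (hg1 : g1 ∉ D)
    (hg11 : g1 ≠ 1) : ∃ f : G → ℤ, Sig β f := by
  set v := Fintype.card G with hv
  have hg01 : g0 ≠ 1 := by rintro rfl; exact P.one hg0
  set Δ := (lam - mu) ^ 2 + 4 * (k - mu) with hΔd
  set c := lam - mu with hc
  have hr : ∀ h, h ≠ 1 → (2 * β.ft (ind D) h - c) ^ 2 = (Δ : E) := by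
    intro h hh
    have := P.quad β hh
    rw [← hc] at this
    rw [hΔd]
    push_cast at this ⊢
    linear_combination 4 * this
  set r := 2 * β.ft (ind D) g0 - c with hrd
  have hsgn : ∀ h, ∃ e : ℤ, h ≠ 1 → 2 * β.ft (ind D) h - c = e * r := by
    intro h
    by_cases hh : h = 1
    · exact ⟨0, fun h => absurd hh h⟩
    have h1 : (2 * β.ft (ind D) h - c) ^ 2 = r ^ 2 := by rw [hr h hh, hrd, hr g0 hg01]
    rcases sq_eq_sq_iff_eq_or_eq_neg.1 h1 with h | h
    · exact ⟨1, fun _ => by rw [h]; simp⟩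
    · exact ⟨-1, fun _ => by rw [h]; simp⟩
  choose e he using hsgn
  have hft1 : β.ft (ind D) 1 = (k : E) := by
    simp only [BiChar.ft, β.or1, mul_one]
    rw [← Int.cast_sum, P.card]
  have i1 := β.inversion (ind D) 1
  have i2 := β.sum_right 1
  rw [ind_not P.one] at i1
  rw [if_pos rfl] at i2
  have i3 : ∑ h, (2 * β.ft (ind D) h - c) = -(v : E) * c := by
    simp only [inv_one, β.ol, mul_one] at i1
    rw [sum_sub_distrib, ← mul_sum, i1]
    simp [hv]
  rw [← add_sum_erase univ _ (mem_univ (1 : G)), hft1,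
    sum_congr rfl fun h hh => he h (mem_erase.1 hh).1, ← sum_mul, ← Int.cast_sum] at i3
  have hk2 : (2 * k - c + v * c : ℤ) = 0 := by
    refine nonsq_lin Δ _ (-(∑ h ∈ univ.erase (1 : G), e h)) hΔ r (hr g0 hg01) ?_
    push_cast at i3 ⊢
    linear_combination i3
  -- bounds on k
  have hkpos : 0 < k := by
    rw [← P.card]
    refine sum_pos' (fun y _ => ind_nonneg D y) ⟨g0, mem_univ _, ?_⟩
    rw [ind_mem hg0]; norm_num
  have hklt : k < v - 1 := by
    have h1 : ∑ y, (1 - ind D y) = v - k := by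
      rw [sum_sub_distrib, P.card]; simp [hv]
    rw [← add_sum_erase univ _ (mem_univ (1 : G)),
      ← add_sum_erase (univ.erase 1) _ (mem_erase.2 ⟨hg11, mem_univ g1⟩), ind_not P.one,
      ind_not hg1] at h1
    have : 0 ≤ ∑ y ∈ (univ.erase (1 : G)).erase g1, (1 - ind D y) :=
      sum_nonneg fun y _ => by linarith [ind_le D y]
    linarith
  have hvp : (0 : ℤ) < v - 1 := by linarith
  have hcm : c = -1 := by
    have e1 : 2 * k = -c * (v - 1) := by linarith
    have c1 : 0 < -c := by
      by_contra hcon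
      nlinarith
    have c2 : -c < 2 := by
      by_contra hcon
      nlinarith
    omega
  have hk : 2 * k = v - 1 := by rw [hcm] at hk2; linarith
  have hcount : k * k = mu * v + c * k + (k - mu) := by
    have h1 : ∑ z, ∑ y, ind D y * ind D (z * y) = k * k := by
      rw [sum_comm]
      have : ∀ y, ∑ z, ind D y * ind D (z * y) = ind D y * k := by
        intro y
        rw [← mul_sum, ← P.card]
        congr 1
        exact Equiv.sum_comp (Equiv.mulRight y) (ind D)
      rw [sum_congr rfl fun y _ => this y, ← sum_mul, P.card]
    rw [← h1]
    simp only [P.conv, sum_add_distrib, ← mul_sum, P.card]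
    simp [hv, hc]
    ring
  have hkmu : k = 2 * mu := by
    have : k * k = k * (2 * mu) := by rw [hcount, hcm]; linear_combination (-mu) * hk
    exact mul_left_cancel₀ hkpos.ne' this
  have hΔv : Δ = v := by rw [hΔd, hcm]; linarith
  refine ⟨fun g => 2 * ind D g - 1 + if g = 1 then 1 else 0, ?_⟩
  have hft : ∀ h, β.ft (fun g => 2 * ind D g - 1 + if g = 1 then 1 else 0) h =
      2 * β.ft (ind D) h - (if h = 1 then (v : E) else 0) + 1 := by
    intro h
    rw [← β.sum_left]
    simp only [BiChar.ft]
    have : ∀ x : G, ((2 * ind D x - 1 + (if x = 1 then 1 else 0) : ℤ) : E) * β.B x h =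
        2 * (ind D x * β.B x h) - β.B x h + if x = 1 then 1 else 0 := by
      intro x
      by_cases hx : x = 1
      · subst hx; simp only [if_true, β.ol]; push_cast; ring
      · simp only [if_neg hx]; push_cast; ring
    rw [sum_congr rfl fun x _ => this x, sum_add_distrib, sum_sub_distrib, ← mul_sum]
    simp
  refine ⟨?_, ?_, ?_, ?_, ?_, ?_⟩
  · simp [ind_not P.one]
  · intro g hg
    rcases ind_01 D g with h | h <;> simp [h, hg]
  · intro g
    simp only [P.ind_inv, inv_eq_one]
  · rw [hft, hft1, if_pos rfl]
    have : (2 * k : E) = v - 1 := by exact_mod_cast congrArg (Int.cast : ℤ → E) hk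
    rw [this]; ring
  · intro h hh
    rw [hft, if_neg hh]
    have := hr h hh
    rw [hcm, hΔv] at this
    rw [← hv]
    push_cast at this
    linear_combination this
  · rw [← hv, ← hΔv]; exact hΔ

/-- Galois action hypotheses. -/
structure Gal {G : Type*} [CommGroup G] [Fintype G] {E : Type*} [Field E] [CharZero E]
    (β : BiChar G E) : Prop where
  ex : ∀ s, (Fintype.card G).Coprime s → ∃ σ : E →+* E, ∀ x h, σ (β.B x h) = β.B x h ^ s
  rat : ∀ e : E, (∀ s, (Fintype.card G).Coprime s → ∀ σ : E →+* E,
    (∀ x h, σ (β.B x h) = β.B x h ^ s) → σ e = e) → ∃ r : ℚ, e = (r : E)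

namespace Sig

variable {G : Type*} [CommGroup G] [Fintype G] {E : Type*} [Field E] [CharZero E]
  {β : BiChar G E} {f : G → ℤ} (F : Sig β f) (Γ : Gal β)
include F Γ

lemma ft_pow_left (h : G) (s : ℕ) (σ : E →+* E) (hσ : ∀ x h, σ (β.B x h) = β.B x h ^ s) :
    σ (β.ft f h) = β.ft f (h ^ s) := by
  simp only [BiChar.ft, map_sum, map_mul, map_intCast, hσ, β.pow_right]

lemma ft_ne (h : G) (hh : h ≠ 1) : β.ft f h ≠ 0 := by
  intro h0
  have := F.sq h hh
  rw [h0] at this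
  have h1 : (Fintype.card G : E) ≠ 0 := by exact_mod_cast Fintype.card_ne_zero
  apply h1; rw [← this]; ring

lemma eps (s : ℕ) (hs : (Fintype.card G).Coprime s) (h0 : G) (hh0 : h0 ≠ 1) :
    ∃ ε : ℤ, (ε = 1 ∨ ε = -1) ∧ ∀ g, f (g ^ s) = ε * f g := by
  obtain ⟨σ, hσ⟩ := Γ.ex s hs
  have hsq : ∀ h, h ≠ 1 → ∀ h', h' ≠ 1 → β.ft f h = β.ft f h' ∨ β.ft f h = - β.ft f h' := by
    intro h hh h' hh'
    exact sq_eq_sq_iff_eq_or_eq_neg.1 (by rw [F.sq h hh, F.sq h' hh'])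
  obtain ⟨ε, hε, h1⟩ : ∃ ε : ℤ, (ε = 1 ∨ ε = -1) ∧ σ (β.ft f h0) = ε * β.ft f h0 := by
    have : (σ (β.ft f h0)) ^ 2 = β.ft f h0 ^ 2 := by
      rw [← map_pow, F.sq h0 hh0, map_natCast]
    rcases sq_eq_sq_iff_eq_or_eq_neg.1 this with h | h
    · exact ⟨1, Or.inl rfl, by rw [h]; simp⟩
    · exact ⟨-1, Or.inr rfl, by rw [h]; simp⟩
  have h2 : ∀ h, β.ft f (h ^ s) = ε * β.ft f h := by
    intro h
    rw [← F.ft_pow_left Γ h s σ hσ]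
    by_cases hh : h = 1
    · rw [hh, F.ft1]; simp
    · rcases hsq h hh h0 hh0 with e | e
      · rw [e, h1]
      · rw [e, map_neg, h1]; ring
  refine ⟨ε, hε, fun g => ?_⟩
  have hεε : (ε : E) * ε = 1 := by rcases hε with h | h <;> rw [h] <;> norm_num
  have hv : (Fintype.card G : E) ≠ 0 := by exact_mod_cast Fintype.card_ne_zero
  have e1 : (Fintype.card G : E) * f (g ^ s) = (Fintype.card G : E) * (ε * f g : ℤ) := by
    push_cast
    rw [mul_left_comm, ← β.inversion, ← β.inversion, mul_sum,
      ← Equiv.sum_comp (powCoprime (G := G) (n := s) (by rwa [Nat.card_eq_fintype_card]))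
        (fun h => (ε : E) * (β.ft f h * β.B g⁻¹ h))]
    refine sum_congr rfl fun h _ => ?_
    simp only [powCoprime_apply]
    rw [h2, ← inv_pow, β.pow_left, β.pow_right]
    linear_combination (-(β.ft f h * β.B g⁻¹ h ^ s)) * hεε
  exact_mod_cast mul_left_cancel₀ hv e1

lemma ex_s0 (h0 : G) (hh0 : h0 ≠ 1) :
    ∃ s, (Fintype.card G).Coprime s ∧ ∀ g, f (g ^ s) = - f g := by
  by_contra hcon
  push Not at hcon
  have hall : ∀ s, (Fintype.card G).Coprime s → ∀ g, f (g ^ s) = f g := by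
    intro s hs
    obtain ⟨ε, hε, h⟩ := F.eps Γ s hs h0 hh0
    rcases hε with rfl | rfl
    · simpa using h
    · obtain ⟨g, hg⟩ := hcon s hs
      exact absurd (by rw [h]; ring) hg
  obtain ⟨r, hr⟩ := Γ.rat (β.ft f h0) (by
    intro s hs σ hσ
    rw [F.ft_pow_left Γ h0 s σ hσ]
    simp only [BiChar.ft]
    rw [← Equiv.sum_comp (powCoprime (G := G) (n := s) (by rwa [Nat.card_eq_fintype_card]))
        (fun x => (f x : E) * β.B x h0)]
    refine sum_congr rfl fun h _ => ?_
    simp only [powCoprime_apply]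
    rw [hall s hs, β.pow_left, β.pow_right])
  have h1 := F.sq h0 hh0
  rw [hr] at h1
  apply F.nsq
  have h2 : r ^ 2 = ((Fintype.card G : ℤ) : ℚ) := by
    push_cast
    exact_mod_cast h1
  rw [← Rat.isSquare_intCast_iff]
  exact ⟨r, by rw [← h2]; ring⟩

end Sig

end

section
open Finset

namespace Sig

variable {G : Type*} [CommGroup G] [Fintype G] {E : Type*} [Field E] [CharZero E]
  {β : BiChar G E} {f : G → ℤ} (F : Sig β f) (Γ : Gal β)
  {p a b : ℕ} {w : G} (S : Setup G p a b w)
include F Γ S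

omit Γ S in
lemma f_ne {g : G} (hg : g ≠ 1) : f g ≠ 0 := by
  rcases F.pm g hg with h | h <;> rw [h] <;> norm_num

omit F Γ in
lemma q_pow : (w ^ (p ^ (a - 1))) ^ p = 1 := by
  have := S.hab
  rw [← pow_mul, ← pow_succ, show a - 1 + 1 = a by omega, S.hw]

lemma one_mod (s : ℕ) (hs : (Fintype.card G).Coprime s) (hsp : s ≡ 1 [MOD p]) (g : G) :
    f (g ^ s) = f g := by
  obtain ⟨ε, hε, h⟩ := F.eps Γ s hs _ S.hq
  rcases hε with rfl | rfl
  · simpa using h g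
  · exfalso
    have h1 := h (w ^ (p ^ (a - 1)))
    rw [pow_eq_pow_mod s (q_pow S), hsp, ← pow_eq_pow_mod 1 (q_pow S), pow_one] at h1
    exact F.f_ne S.hq (by linarith)

lemma pgroup (y : G) : y ^ (p ^ (a + b)) = 1 := by
  by_contra hy
  obtain ⟨s0, hs0, hf0⟩ := F.ex_s0 Γ _ S.hq
  obtain ⟨m, hm, hpm⟩ := S.cop
  have hcop : Nat.Coprime (p ^ (a + b)) m :=
    Nat.Coprime.pow_left _ ((Nat.Prime.coprime_iff_not_dvd S.hp).2 hpm)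
  obtain ⟨s, hs1, hs2⟩ := Nat.chineseRemainder hcop s0 1
  have hsv : (Fintype.card G).Coprime s := by
    rw [hm] at hs0 ⊢
    refine Nat.Coprime.mul_left ?_ ?_
    · have h1 := Nat.Coprime.coprime_mul_right hs0
      rw [Nat.Coprime, Nat.gcd_comm] at h1 ⊢
      rw [hs1.gcd_eq]; exact h1
    · rw [Nat.Coprime, Nat.gcd_comm, hs2.gcd_eq]; simp
  obtain ⟨ε, hε, h⟩ := F.eps Γ s hsv _ S.hq
  have h1 := h (w ^ (p ^ (a - 1)))
  have hsp : s ≡ s0 [MOD p] :=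
    hs1.of_dvd (dvd_pow_self p (by have := S.hb; omega))
  rw [pow_eq_pow_mod s (q_pow S), hsp, ← pow_eq_pow_mod s0 (q_pow S), hf0] at h1
  have h2 := h (y ^ (p ^ (a + b)))
  have hym : (y ^ (p ^ (a + b))) ^ m = 1 := by rw [← pow_mul, ← hm, pow_card_eq_one]
  rw [pow_eq_pow_mod s hym, hs2, ← pow_eq_pow_mod 1 hym, pow_one] at h2
  have n1 := F.f_ne S.hq
  have n2 := F.f_ne hy
  rcases hε with rfl | rfl
  · apply n1; linarith
  · apply n2; linarith

lemma cardG : Fintype.card G = p ^ (a + b) := by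
  rw [← S.cardP]
  have : (powMonoidHom (p ^ (a + b)) : G →* G).ker = ⊤ := by
    rw [eq_top_iff]
    intro y _
    exact F.pgroup Γ S y
  rw [this, Subgroup.card_top, Nat.card_eq_fintype_card]

lemma cop_iff {s : ℕ} (hs : ¬ p ∣ s) : (Fintype.card G).Coprime s := by
  rw [F.cardG Γ S]
  exact Nat.Coprime.pow_left _ ((Nat.Prime.coprime_iff_not_dvd S.hp).2 hs)

open Classical in
lemma sum_pow (h z : G) (s : ℕ) (hs : (Fintype.card G).Coprime s) :
    ∑ x : S.Ker β h, f (z ^ s * x) = ∑ x : S.Ker β h, f ((z * x) ^ s) := by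
  have hc : (Nat.card (S.Ker β h)).Coprime s := by
    refine Nat.Coprime.of_dvd_left (Subgroup.card_subgroup_dvd_card _) ?_
    rwa [Nat.card_eq_fintype_card]
  rw [← Equiv.sum_comp (powCoprime hc) (fun x : S.Ker β h => f (z ^ s * x))]
  refine sum_congr rfl fun x _ => ?_
  simp [mul_pow]

open Classical in
lemma F_inv_q {h : G} (hh : β.B (w ^ (p ^ (a - 1))) h ≠ 1) (z : G) (hz : β.B z h ^ p ≠ 1) :
    ∑ x : S.Ker β h, f (z * w ^ (p ^ (a - 1)) * x) = ∑ x : S.Ker β h, f (z * x) := by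
  set q := w ^ (p ^ (a - 1)) with hq
  have hp := S.hp
  have : NeZero p := ⟨hp.ne_zero⟩
  have hz1 : β.B z h ^ (p ^ (a + b)) = 1 := by rw [← β.pow_left, F.pgroup Γ S, β.ol]
  obtain ⟨c, -, hc⟩ := (Nat.dvd_prime_pow hp).1 (orderOf_dvd_of_pow_eq_one hz1)
  have hc2 : 2 ≤ c := by
    by_contra hcon
    apply hz
    apply orderOf_dvd_iff_pow_eq_one.1
    rw [hc]
    calc p ^ c ∣ p ^ 1 := pow_dvd_pow p (by omega)
      _ = p := pow_one p
  have hprim : IsPrimitiveRoot (β.B z h) (p ^ c) := hc ▸ IsPrimitiveRoot.orderOf _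
  have hprim2 : IsPrimitiveRoot (β.B z h ^ (p ^ (c - 1))) p :=
    hprim.pow (pow_pos hp.pos _) (by rw [← pow_succ]; congr 1; omega)
  have hqp : β.B q h ^ p = 1 := by rw [← β.pow_left, q_pow S, β.ol]
  obtain ⟨j, -, hj⟩ := hprim2.eq_pow_of_pow_eq_one hqp
  set s := 1 + p ^ (c - 1) * j with hs
  have hps : s ≡ 1 [MOD p] := by
    have : p ∣ p ^ (c - 1) * j := (dvd_pow_self p (by omega)).mul_right _
    rw [hs]
    exact (Nat.modEq_iff_dvd' (by omega)).2 (by simpa using this) |>.symm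
  have hsp : ¬ p ∣ s := by
    intro hd
    have h1 := (Nat.modEq_zero_iff_dvd.2 hd).symm.trans hps
    have := (Nat.modEq_iff_dvd' (by omega)).1 h1
    exact hp.one_lt.ne' (Nat.dvd_one.1 (by simpa using this))
  have hcs := F.cop_iff Γ S hsp
  have e1 : ∑ x : S.Ker β h, f (z ^ s * x) = ∑ x : S.Ker β h, f (z * x) := by
    rw [F.sum_pow Γ S h z s hcs]
    exact sum_congr rfl fun x _ => F.one_mod Γ S s hcs hps _
  rw [← e1]
  have hk : (z * q)⁻¹ * z ^ s ∈ S.Ker β h := by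
    refine ⟨F.pgroup Γ S _, ?_⟩
    rw [β.ml, β.inv_left, β.ml, β.pow_left z, hs, pow_add, pow_one, pow_mul, hj]
    have h1 := β.ne_zero z h
    have h2 := β.ne_zero q h
    field_simp
  have e2 := S.sum_Ker_shift β f h (z * q) _ hk
  rw [mul_inv_cancel_left] at e2
  exact e2.symm

open Classical in
lemma ft_formula {h : G} (hh : β.B (w ^ (p ^ (a - 1))) h ≠ 1) :
    β.ft f h = ∑ r : Subgroup.zpowers (w ^ (p ^ (a - 1))),
      ((∑ x : S.Ker β h, f (r * x) : ℤ) : E) * β.B r h := by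
  set q := w ^ (p ^ (a - 1)) with hq
  have hp := S.hp
  have : NeZero p := ⟨hp.ne_zero⟩
  have : Fact p.Prime := ⟨hp⟩
  set Fz : G → ℤ := fun z => ∑ x : S.Ker β h, f (z * x) with hFz
  have hqp : β.B q h ^ p = 1 := by rw [← β.pow_left, q_pow S, β.ol]
  have hprim : IsPrimitiveRoot (β.B q h) p := by
    rw [IsPrimitiveRoot.iff_orderOf]; exact orderOf_eq_prime hqp hh
  have h0 : β.ft (fun z => if β.B z h ^ p = 1 then 0 else Fz z) h = 0 := by
    refine β.sum_eq_zero_of_invariant _ q h hh fun z => ?_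
    simp only [β.ml, mul_pow, hqp, mul_one]
    split_ifs with hz
    · rfl
    · exact F.F_inv_q Γ S hh z hz
  have h1 : β.ft Fz h = ∑ z with β.B z h ^ p = 1, (Fz z : E) * β.B z h := by
    have : β.ft Fz h = β.ft (fun z => if β.B z h ^ p = 1 then 0 else Fz z) h +
        ∑ z with β.B z h ^ p = 1, (Fz z : E) * β.B z h := by
      simp only [BiChar.ft]
      rw [sum_filter, ← sum_add_distrib]
      refine sum_congr rfl fun z _ => ?_
      split_ifs <;> simp
    rw [this, h0, zero_add]
  have h2 : ∑ z with β.B z h ^ p = 1, (Fz z : E) * β.B z h =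
      ∑ rx : Subgroup.zpowers q × S.Ker β h, (Fz rx.1 : E) * β.B rx.1 h := by
    symm
    refine sum_bij (fun rx _ => (rx.1 : G) * (rx.2 : G)) ?_ ?_ ?_ ?_
    · rintro ⟨⟨r, hr⟩, x⟩ _
      obtain ⟨i, rfl⟩ := (Submonoid.mem_powers_iff _ _).1
        (mem_powers_iff_mem_zpowers.2 hr)
      simp only [mem_filter, mem_univ, true_and]
      rw [β.ml, x.2.2, mul_one, β.pow_left, ← pow_mul, mul_comm, pow_mul, hqp, one_pow]
    · rintro ⟨⟨r, hr⟩, x⟩ _ ⟨⟨r', hr'⟩, x'⟩ _ hrx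
      simp only at hrx
      obtain ⟨i, rfl⟩ := (Submonoid.mem_powers_iff _ _).1
        (mem_powers_iff_mem_zpowers.2 hr)
      obtain ⟨i', rfl⟩ := (Submonoid.mem_powers_iff _ _).1
        (mem_powers_iff_mem_zpowers.2 hr')
      have := congrArg (fun g => β.B g h) hrx
      simp only [β.ml, x.2.2, x'.2.2, mul_one, β.pow_left] at this
      have hii : q ^ i = q ^ i' := by
        have h3 : i ≡ i' [MOD p] := by
          rw [pow_eq_pow_mod i hqp, pow_eq_pow_mod i' hqp] at this
          exact hprim.pow_inj (Nat.mod_lt _ hp.pos) (Nat.mod_lt _ hp.pos) this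
        rw [pow_eq_pow_mod i (q_pow S), h3, ← pow_eq_pow_mod i' (q_pow S)]
      rw [hii] at hrx
      have h4 := mul_left_cancel hrx
      ext
      · exact hii
      · exact h4
    · intro z hz
      rw [mem_filter] at hz
      obtain ⟨i, -, hi⟩ := hprim.eq_pow_of_pow_eq_one hz.2
      refine ⟨(⟨q ^ i, Subgroup.pow_mem _ (Subgroup.mem_zpowers q) i⟩,
        ⟨(q ^ i)⁻¹ * z, F.pgroup Γ S _, ?_⟩), mem_univ _, ?_⟩
      · rw [β.ml, β.inv_left, β.pow_left, hi, inv_mul_cancel₀ (β.ne_zero z h)]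
      · simp
    · rintro ⟨r, x⟩ _
      simp only
      rw [β.ml, x.2.2, mul_one]
      congr 2
      exact (S.sum_Ker_shift β f h r x x.2).symm
  have h3 := S.ft_F β f h
  rw [h1, h2, Fintype.sum_prod_type] at h3
  simp only [sum_const, card_univ, nsmul_eq_mul] at h3
  rw [← mul_sum, ← Nat.card_eq_fintype_card] at h3
  have hc : (Nat.card (S.Ker β h) : E) ≠ 0 := by exact_mod_cast Nat.card_pos.ne'
  exact (mul_left_cancel₀ hc h3).symm

end Sig

end

section
open Finset

namespace Sig

variable {G : Type*} [CommGroup G] [Fintype G] {E : Type*} [Field E] [CharZero E]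
  {β : BiChar G E} {f : G → ℤ} (F : Sig β f) (Γ : Gal β)
  {p a b : ℕ} {w : G} (S : Setup G p a b w)
include F Γ S

omit F Γ in
lemma zp {h : G} (hh : β.B (w ^ (p ^ (a - 1))) h ≠ 1)
    (t : Subgroup.zpowers (w ^ (p ^ (a - 1)))) :
    (t : G) ^ p = 1 ∧ (β.B t h = 1 → t = 1) := by
  obtain ⟨t, ht⟩ := t
  obtain ⟨i, rfl⟩ := (Submonoid.mem_powers_iff _ _).1 (mem_powers_iff_mem_zpowers.2 ht)
  have : Fact p.Prime := ⟨S.hp⟩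
  have hqp : β.B (w ^ (p ^ (a - 1))) h ^ p = 1 := by rw [← β.pow_left, q_pow S, β.ol]
  have hprim : IsPrimitiveRoot (β.B (w ^ (p ^ (a - 1))) h) p := by
    rw [IsPrimitiveRoot.iff_orderOf]; exact orderOf_eq_prime hqp hh
  constructor
  · simp only
    rw [← pow_mul, mul_comm, pow_mul, q_pow S, one_pow]
  · intro h1
    simp only at h1
    rw [β.pow_left] at h1
    obtain ⟨e, rfl⟩ := hprim.dvd_of_pow_eq_one i h1
    ext
    simp only [Subgroup.coe_one]
    rw [pow_mul, q_pow S, one_pow]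

open Classical in
lemma parseval {h : G} (hh : β.B (w ^ (p ^ (a - 1))) h ≠ 1) :
    ((p : ℤ) - 1) * Fintype.card G ≤ p * ∑ r : Subgroup.zpowers (w ^ (p ^ (a - 1))),
      (∑ x : S.Ker β h, f (r * x)) ^ 2 := by
  set q := w ^ (p ^ (a - 1)) with hq
  have hp := S.hp
  set Φ : Subgroup.zpowers q → ℤ := fun r => ∑ x : S.Ker β h, f (r * x) with hΦ
  have hft : β.ft f h = ∑ r : Subgroup.zpowers q, (Φ r : E) * β.B r h := F.ft_formula Γ S hh
  let g : ℕ → E := fun s => ∑ r : Subgroup.zpowers q, (Φ r : E) * β.B r h ^ s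
  have hh1 : h ≠ 1 := by rintro rfl; exact hh (β.or1 _)
  have hg : ∀ s, ¬ p ∣ s → g s ^ 2 = (Fintype.card G : E) := by
    intro s hs
    obtain ⟨σ, hσ⟩ := Γ.ex s (F.cop_iff Γ S hs)
    have e1 : σ (β.ft f h) = g s := by
      rw [hft]
      simp only [g, map_sum, map_mul, map_intCast, hσ]
    rw [← e1, ← map_pow, F.sq h hh1, map_natCast]
  have hsym : ∀ r, Φ r⁻¹ = Φ r := by
    intro r
    simp only [hΦ]
    rw [← Equiv.sum_comp (Equiv.inv (S.Ker β h))]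
    refine sum_congr rfl fun x _ => ?_
    rw [← F.inv]
    congr 1
    simp [mul_comm]
  have hgsym : ∀ s, g s = ∑ r : Subgroup.zpowers q, (Φ r : E) * (β.B r h)⁻¹ ^ s := by
    intro s
    simp only [g]
    rw [← Equiv.sum_comp (Equiv.inv (Subgroup.zpowers q))]
    refine sum_congr rfl fun x _ => ?_
    simp only [Equiv.inv_apply, hsym]
    rw [Subgroup.coe_inv, β.inv_left]
  have hgeom : ∀ r r' : Subgroup.zpowers q, ∑ s ∈ range p, (β.B r h * (β.B r' h)⁻¹) ^ s =
      if r = r' then (p : E) else 0 := by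
    intro r r'
    split_ifs with hr
    · subst hr; rw [mul_inv_cancel₀ (β.ne_zero _ _)]; simp
    · have e1 : β.B r h * (β.B r' h)⁻¹ = β.B (r * r'⁻¹ : Subgroup.zpowers q) h := by
        rw [← β.inv_left, ← β.ml]; simp
      obtain ⟨z1, z2⟩ := zp S hh (r * r'⁻¹)
      have hne : β.B r h * (β.B r' h)⁻¹ ≠ 1 := by
        intro hc
        rw [e1] at hc
        exact hr (mul_inv_eq_one.1 (z2 hc))
      have e2 : (β.B r h * (β.B r' h)⁻¹) ^ p = 1 := by
        rw [e1, ← β.pow_left, z1, β.ol]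
      have := geom_sum_mul (β.B r h * (β.B r' h)⁻¹) p
      rw [e2, sub_self] at this
      exact (mul_eq_zero.1 this).resolve_right (sub_ne_zero.2 hne)
  have hpars : ∑ s ∈ range p, g s ^ 2 = p * ∑ r, (Φ r : E) ^ 2 := by
    have e1 : ∀ s, g s ^ 2 = ∑ r, ∑ r', (Φ r : E) * Φ r' * (β.B r h * (β.B r' h)⁻¹) ^ s := by
      intro s
      rw [pow_two]
      nth_rewrite 2 [hgsym s]
      simp only [g]
      rw [sum_mul_sum]
      refine sum_congr rfl fun r _ => sum_congr rfl fun r' _ => ?_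
      rw [mul_pow]; ring
    simp only [e1]
    rw [sum_comm, mul_sum]
    refine sum_congr rfl fun r _ => ?_
    rw [sum_comm]
    simp only [← mul_sum, hgeom]
    simp
    ring
  have hp1 : p = (p - 1) + 1 := by have := hp.pos; omega
  have hg0 : g 0 = ((∑ r, Φ r : ℤ) : E) := by simp [g]
  have hsum : ∑ s ∈ range p, g s ^ 2 = ((p : E) - 1) * Fintype.card G + ((∑ r, Φ r : ℤ) : E) ^ 2 := by
    conv_lhs => rw [hp1]
    rw [sum_range_succ', hg0]
    congr 1
    have : ∀ s ∈ range (p - 1), g (s + 1) ^ 2 = (Fintype.card G : E) := by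
      intro s hs
      refine hg _ fun hd => ?_
      have := Nat.le_of_dvd (by omega) hd
      have := mem_range.1 hs
      omega
    rw [sum_congr rfl this, sum_const, card_range, nsmul_eq_mul, Nat.cast_sub hp.pos, Nat.cast_one]
  rw [hsum] at hpars
  have h_integer : ((p : ℤ) - 1) * Fintype.card G + (∑ r, Φ r) ^ 2 = p * ∑ r, Φ r ^ 2 := by
    exact_mod_cast hpars
  nlinarith [sq_nonneg (∑ r, Φ r)]

open Classical in
lemma F_abs {h : G} (hh : β.B (w ^ (p ^ (a - 1))) h ≠ 1)
    : ∀ (r : Subgroup.zpowers (w ^ (p ^ (a - 1)))), r ≠ 1 →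
    |∑ x : S.Ker β h, f (r * x)| = (p : ℤ) ^ b := by
  set q := w ^ (p ^ (a - 1)) with hq
  have hp := S.hp
  have : Fact p.Prime := ⟨hp⟩
  set Φ : Subgroup.zpowers q → ℤ := fun r => ∑ x : S.Ker β h, f (r * x) with hΦ
  have hpars := F.parseval Γ S hh
  change _ ≤ (p : ℤ) * ∑ r, Φ r ^ 2 at hpars
  have hΦ1 : Φ 1 = 0 := by
    obtain ⟨s0, hs0, hf0⟩ := F.ex_s0 Γ _ S.hq
    have := F.sum_pow Γ S h 1 s0 hs0
    simp only [hf0, one_pow, sum_neg_distrib] at this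
    simp only [hΦ, Subgroup.coe_one]
    linarith
  have hbound : ∀ r, |Φ r| ≤ (p : ℤ) ^ b := by
    intro r
    calc |Φ r| ≤ ∑ x : S.Ker β h, |f (r * x)| := abs_sum_le_sum_abs _ _
      _ ≤ ∑ x : S.Ker β h, (1 : ℤ) := by
        refine sum_le_sum fun x _ => ?_
        by_cases h1 : (r : G) * x = 1
        · rw [h1, F.f1]; norm_num
        · rcases F.pm _ h1 with h | h <;> rw [h] <;> norm_num
      _ = (Nat.card (S.Ker β h) : ℤ) := by simp
      _ ≤ _ := by exact_mod_cast S.card_Ker β hh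
  intro r hr
  refine le_antisymm (hbound r) ?_
  by_contra hcon
  push Not at hcon
  have hcardR : Fintype.card (Subgroup.zpowers q) = p := by
    rw [Fintype.card_zpowers]
    exact orderOf_eq_prime (q_pow S) S.hq
  have hlt : ∑ r, Φ r ^ 2 < (p - 1) * ((p : ℤ) ^ b) ^ 2 := by
    rw [← add_sum_erase univ _ (mem_univ 1), hΦ1]
    have : ∑ r ∈ univ.erase 1, Φ r ^ 2 < ∑ r ∈ univ.erase (1 : Subgroup.zpowers q), ((p : ℤ) ^ b) ^ 2 := by
      refine sum_lt_sum (fun r _ => ?_) ⟨r, mem_erase.2 ⟨hr, mem_univ _⟩, ?_⟩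
      · rw [← sq_abs]; exact pow_le_pow_left₀ (abs_nonneg _) (hbound r) 2
      · rw [← sq_abs]; exact pow_lt_pow_left₀ hcon (abs_nonneg _) two_ne_zero
    rw [sum_const, card_erase_of_mem (mem_univ _), Finset.card_univ, hcardR, nsmul_eq_mul,
      Nat.cast_sub hp.pos, Nat.cast_one] at this
    linarith
  have hp2 : (2 : ℤ) ≤ p := by exact_mod_cast hp.two_le
  have hcardG : (p : ℤ) * ((p : ℤ) ^ b) ^ 2 ≤ Fintype.card G := by
    rw [F.cardG Γ S]
    have : p * (p ^ b) ^ 2 ≤ p ^ (a + b) := by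
      rw [← pow_mul, ← pow_succ']
      have := S.hab
      exact Nat.pow_le_pow_right hp.pos (by omega)
    exact_mod_cast this
  have h1 : (p : ℤ) * ∑ r, Φ r ^ 2 < p * ((p - 1) * ((p : ℤ) ^ b) ^ 2) :=
    mul_lt_mul_of_pos_left hlt (by linarith)
  have h2 : ((p : ℤ) - 1) * (p * ((p : ℤ) ^ b) ^ 2) ≤ (p - 1) * Fintype.card G :=
    mul_le_mul_of_nonneg_left hcardG (by linarith)
  linarith

lemma const_coset {h : G} (hh : β.B (w ^ (p ^ (a - 1))) h ≠ 1)
    (r : G) (hrq : r ∈ Subgroup.zpowers (w ^ (p ^ (a - 1)))) (hr : r ≠ 1) :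
    Nat.card (S.Ker β h) = p ^ b ∧ ∀ x ∈ S.Ker β h, f (r * x) = f r := by
  classical
  have habs := F.F_abs Γ S hh ⟨r, hrq⟩ (by simpa [Subtype.ext_iff] using hr)
  simp only at habs
  have hrK : r ∉ S.Ker β h := by
    intro hc
    have := (zp S hh ⟨r, hrq⟩).2 hc.2
    exact hr (congrArg Subtype.val this)
  have hpm : ∀ x : S.Ker β h, f (r * x) = 1 ∨ f (r * x) = -1 := by
    intro x
    apply F.pm
    intro hc
    apply hrK
    rw [mul_eq_one_iff_eq_inv.1 hc]
    exact (S.Ker β h).inv_mem x.2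
  have hcle : (Nat.card (S.Ker β h) : ℤ) ≤ (p : ℤ) ^ b := by exact_mod_cast S.card_Ker β hh
  have hone : ∑ x : S.Ker β h, (1 : ℤ) = Nat.card (S.Ker β h) := by simp
  -- sign e
  obtain ⟨e, he, hs⟩ : ∃ e : ℤ, (e = 1 ∨ e = -1) ∧ ∑ x : S.Ker β h, e * f (r * x) = (p : ℤ) ^ b := by
    rcases abs_choice (∑ x : S.Ker β h, f (r * x)) with h1 | h1
    · exact ⟨1, Or.inl rfl, by rw [← mul_sum, one_mul, ← habs, h1]⟩
    · exact ⟨-1, Or.inr rfl, by rw [← mul_sum, ← habs, h1]; ring⟩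
  have hle : ∀ x : S.Ker β h, 0 ≤ 1 - e * f (r * x) := by
    intro x
    rcases he with rfl | rfl <;> rcases hpm x with h | h <;> rw [h] <;> norm_num
  have hz : ∑ x : S.Ker β h, (1 - e * f (r * x)) = Nat.card (S.Ker β h) - (p : ℤ) ^ b := by
    rw [sum_sub_distrib, hone, hs]
  have hz0 : 0 ≤ ∑ x : S.Ker β h, (1 - e * f (r * x)) := sum_nonneg fun x _ => hle x
  have hcard : (Nat.card (S.Ker β h) : ℤ) = (p : ℤ) ^ b := by linarith
  rw [hcard, sub_self, sum_eq_zero_iff_of_nonneg fun x _ => hle x] at hz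
  refine ⟨by exact_mod_cast hcard, fun x hx => ?_⟩
  have e1 := hz ⟨x, hx⟩ (mem_univ _)
  have e2 := hz 1 (mem_univ _)
  simp only [Subgroup.coe_one, mul_one] at e1 e2
  rcases he with rfl | rfl <;> linarith

theorem contra : False := by
  have hp := S.hp
  have : Fact p.Prime := ⟨hp⟩
  have : NeZero p := ⟨hp.ne_zero⟩
  obtain ⟨h1, hh1⟩ : ∃ h, β.B (w ^ (p ^ (a - 1))) h ≠ 1 := by
    by_contra hc; push Not at hc; exact S.hq (β.ndl _ hc)
  obtain ⟨s0, hs0, hf0⟩ := F.ex_s0 Γ _ S.hq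
  have hzq : w ^ (p ^ (a - 1)) ∈ Subgroup.zpowers (w ^ (p ^ (a - 1))) := Subgroup.mem_zpowers _
  set q := w ^ (p ^ (a - 1)) with hq
  obtain ⟨hcard, hc1⟩ := F.const_coset Γ S hh1 q hzq S.hq
  obtain ⟨κ, hκ⟩ := exists_prime_orderOf_dvd_card' (G := S.Ker β h1) p
    (by rw [hcard]; exact dvd_pow_self p (by have := S.hb; omega))
  have hκ1 : (κ : G) ≠ 1 := by
    intro hc
    have : κ = 1 := Subtype.ext hc
    rw [this, orderOf_one] at hκ
    exact hp.one_lt.ne hκ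
  have hκp : (κ : G) ^ p = 1 := by
    have h3 := pow_orderOf_eq_one κ
    rw [hκ] at h3
    exact congrArg Subtype.val h3
  obtain ⟨h2, hκ2, hh2⟩ : ∃ h, β.B κ h ≠ 1 ∧ β.B q h ≠ 1 := by
    obtain ⟨h', hh'⟩ : ∃ h, β.B (κ : G) h ≠ 1 := by
      by_contra hc; push Not at hc; exact hκ1 (β.ndl _ hc)
    by_cases hq' : β.B q h' = 1
    · refine ⟨h1 * h', ?_, ?_⟩
      · rw [β.mr, κ.2.2, one_mul]; exact hh'
      · rw [β.mr, hq', mul_one]; exact hh1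
    · exact ⟨h', hh', hq'⟩
  have hprim : IsPrimitiveRoot (β.B (κ : G) h2) p := by
    rw [IsPrimitiveRoot.iff_orderOf]
    exact orderOf_eq_prime (by rw [← β.pow_left, hκp, β.ol]) hκ2
  have hqsq : (q ^ s0 * q⁻¹) ^ p = 1 := by
    rw [mul_pow, inv_pow, ← pow_mul, mul_comm s0, pow_mul, q_pow S, one_pow, inv_one, one_mul]
  obtain ⟨i, -, hi⟩ := hprim.eq_pow_of_pow_eq_one
    (ξ := β.B (q ^ s0 * q⁻¹) h2) (by rw [← β.pow_left, hqsq, β.ol])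
  have hqs1 : q ^ s0 ≠ 1 := by
    intro hc
    have := hf0 q
    rw [hc, F.f1] at this
    exact F.f_ne S.hq (by linarith)
  obtain ⟨-, hc2⟩ := F.const_coset Γ S hh2 (q ^ s0) (Subgroup.pow_mem _ hzq s0) hqs1
  have e1 := hc1 ((κ : G) ^ i) (Subgroup.pow_mem _ κ.2 i)
  have e2 := hc2 ((q ^ s0)⁻¹ * (q * (κ : G) ^ i)) ⟨F.pgroup Γ S _, by
    rw [β.ml, β.ml, β.pow_left (κ : G), hi, β.ml, β.inv_left, β.inv_left]
    have n1 := β.ne_zero q h2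
    have n2 := β.ne_zero (q ^ s0) h2
    field_simp⟩
  rw [mul_inv_cancel_left, e1, hf0] at e2
  exact F.f_ne S.hq (by linarith)

end Sig

end

section
open Finset

theorem exists_bichar_aux (G : Type*) [CommGroup G] [Fintype G] (n : ℕ) [NeZero n]
    (hn : Fintype.card G = n) (E : Type) [Field E] [CharZero E] [Algebra ℚ E]
    [IsCyclotomicExtension {n} ℚ E] : ∃ β : BiChar G E, Gal β := by
  have hζ : IsPrimitiveRoot (IsCyclotomicExtension.zeta n ℚ E) n :=
    IsCyclotomicExtension.zeta_spec n ℚ E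
  have hen : HasEnoughRootsOfUnity E n := ⟨⟨_, hζ⟩, rootsOfUnity.isCyclic E n⟩
  have hen2 : HasEnoughRootsOfUnity E (Monoid.exponent G) :=
    HasEnoughRootsOfUnity.of_dvd E (hn ▸ Group.exponent_dvd_card)
  obtain ⟨φ⟩ := CommGroup.monoidHom_mulEquiv_of_hasEnoughRootsOfUnity G E
  let β : BiChar G E :=
    { B := fun x h => (φ.symm h x : E)
      ml := fun x y h => by simp
      mr := fun x h k => by simp
      ol := fun h => by simp
      or1 := fun x => by simp
      ndl := fun x hx => by
        by_contra hne
        obtain ⟨ψ, hψ⟩ := CommGroup.exists_apply_ne_one_of_hasEnoughRootsOfUnity G E hne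
        apply hψ
        have := hx (φ ψ)
        simpa using this
      ndr := fun h hh => by
        have : φ.symm h = 1 := by
          ext x
          simpa using hh x
        simpa using this }
  have hpow : ∀ x h, ∃ i, β.B x h = (IsCyclotomicExtension.zeta n ℚ E) ^ i := by
    intro x h
    have h1 : β.B x h ^ n = 1 := by rw [← β.pow_left, ← hn, pow_card_eq_one, β.ol]
    obtain ⟨i, -, hi⟩ := hζ.eq_pow_of_pow_eq_one h1
    exact ⟨i, hi.symm⟩
  refine ⟨β, ?_, ?_⟩
  · intro s hs
    have hirr := Polynomial.cyclotomic.irreducible_rat (NeZero.pos n)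
    have hμ := hζ.pow_of_coprime s (hn ▸ hs.symm)
    refine ⟨(IsCyclotomicExtension.fromZetaAut hμ hirr : E ≃ₐ[ℚ] E).toAlgHom.toRingHom, ?_⟩
    intro x h
    obtain ⟨i, hi⟩ := hpow x h
    rw [hi]
    change (IsCyclotomicExtension.fromZetaAut hμ hirr : E ≃ₐ[ℚ] E) _ = _
    rw [map_pow, IsCyclotomicExtension.fromZetaAut_spec, ← pow_mul, ← pow_mul, mul_comm]
  · intro e he
    have hgal : IsGalois ℚ E := IsCyclotomicExtension.isGalois {n} ℚ E
    have hfd : FiniteDimensional ℚ E := IsCyclotomicExtension.finiteDimensional {n} ℚ E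
    have : e ∈ (⊥ : IntermediateField ℚ E) := by
      rw [IsGalois.mem_bot_iff_fixed]
      intro σ
      have h1 : IsPrimitiveRoot (σ (IsCyclotomicExtension.zeta n ℚ E)) n :=
        hζ.map_of_injective σ.injective
      obtain ⟨s, -, hs, hs2⟩ := (hζ.isPrimitiveRoot_iff).1 h1
      refine he s (hn ▸ hs.symm) σ.toAlgHom.toRingHom ?_
      intro x h
      obtain ⟨i, hi⟩ := hpow x h
      rw [hi]
      change σ _ = _
      rw [map_pow, ← hs2, ← pow_mul, ← pow_mul, mul_comm]
    obtain ⟨r, hr⟩ := IntermediateField.mem_bot.1 this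
    exact ⟨r, by rw [← hr]; simp⟩

theorem exists_bichar (G : Type*) [CommGroup G] [Fintype G] :
    ∃ (E : Type) (_ : Field E) (_ : CharZero E) (β : BiChar G E), Gal β := by
  have : NeZero (Fintype.card G) := ⟨Fintype.card_ne_zero⟩
  have : NeZero ((Fintype.card G : ℕ) : ℚ) := ⟨Nat.cast_ne_zero.2 Fintype.card_ne_zero⟩
  have hc := CyclotomicField.isCyclotomicExtension (Fintype.card G) ℚ
  exact ⟨CyclotomicField (Fintype.card G) ℚ, inferInstance, inferInstance,
    @exists_bichar_aux G _ _ (Fintype.card G) _ rfl (CyclotomicField (Fintype.card G) ℚ) _ _ _ hc⟩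

lemma sum_ind_ncard {G : Type*} [Fintype G] (A : Set G) : ∑ y, ind A y = (A.ncard : ℤ) := by
  classical
  rw [Set.ncard_eq_toFinset_card']
  simp only [ind]
  rw [sum_boole]
  congr 2
  ext x; simp

lemma pd_of_pds {G : Type*} [CommGroup G] [Fintype G] {D : Set G} {v k lam mu : ℕ}
    (hpds : IsPDS D v k lam mu) (hreg : IsRegularPDS D) : PD D k lam mu := by
  obtain ⟨-, hk, h1, h2⟩ := hpds
  have key : ∀ z : G, z ≠ 1 → ∑ y, ind D y * ind D (z * y) =
      ({p : G × G | p.1 ∈ D ∧ p.2 ∈ D ∧ p.1 ≠ p.2 ∧ p.1 * p.2⁻¹ = z}.ncard : ℤ) := by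
    intro z hz
    have e1 : {p : G × G | p.1 ∈ D ∧ p.2 ∈ D ∧ p.1 ≠ p.2 ∧ p.1 * p.2⁻¹ = z} =
        (fun y => (z * y, y)) '' {y | y ∈ D ∧ z * y ∈ D} := by
      ext ⟨x, y⟩
      constructor
      · rintro ⟨hx, hy, -, hxy⟩
        simp only at hx hy hxy
        have : x = z * y := by rw [← hxy]; simp
        subst this
        exact ⟨y, ⟨hy, hx⟩, rfl⟩
      · rintro ⟨y', ⟨hy, hx⟩, he⟩
        obtain ⟨rfl, rfl⟩ := Prod.mk.inj he
        refine ⟨hx, hy, ?_, ?_⟩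
        · intro hc; exact hz (by simpa using hc)
        · simp
    rw [e1, Set.ncard_image_of_injective _ (fun a b hab => (Prod.mk.inj hab).2), ← sum_ind_ncard]
    refine sum_congr rfl fun y _ => ?_
    by_cases hy : y ∈ D
    · by_cases hzy : z * y ∈ D
      · rw [ind_mem hy, ind_mem hzy, ind_mem]
        · norm_num
        · exact ⟨hy, hzy⟩
      · rw [ind_mem hy, ind_not hzy, ind_not]
        · norm_num
        · exact fun hc => hzy hc.2
    · rw [ind_not hy, zero_mul, ind_not]
      intro hc
      exact hy hc.1
  refine ⟨hreg.1, hreg.2, ?_, ?_, ?_⟩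
  · rw [sum_ind_ncard, hk]
  · intro z hz
    have hz1 : z ≠ 1 := by rintro rfl; exact hreg.1 hz
    rw [key z hz1, h1 z hz1 hz]
  · intro z hz1 hz
    rw [key z hz1, h2 z hz1 hz]

lemma setup_of {G : Type*} [CommGroup G] [Fintype G] {p a b : ℕ} (hp : p.Prime) (hb : 1 ≤ b)
    (hab : b < a) (P : Sylow p G)
    (e : P ≃* Multiplicative (ZMod (p ^ a) × ZMod (p ^ b))) : ∃ w, Setup G p a b w := by
  have : Fact p.Prime := ⟨hp⟩
  have hexp : ∀ y : Multiplicative (ZMod (p ^ a) × ZMod (p ^ b)), y ^ (p ^ a) = 1 := by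
    intro y
    apply Multiplicative.toAdd.injective
    rw [toAdd_pow, toAdd_one]
    ext
    · change (p ^ a) • (Multiplicative.toAdd y).1 = 0
      rw [nsmul_eq_mul, ZMod.natCast_self, zero_mul]
    · change (p ^ a) • (Multiplicative.toAdd y).2 = 0
      rw [nsmul_eq_mul, (ZMod.natCast_eq_zero_iff _ _).2 (pow_dvd_pow p hab.le), zero_mul]
  have hexpP : ∀ x ∈ P, x ^ (p ^ a) = 1 := by
    intro x hx
    have h1 : (⟨x, hx⟩ : P) ^ (p ^ a) = 1 := by
      apply e.injective
      rw [map_pow, hexp, map_one]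
    exact congrArg Subtype.val h1
  have hcard : Nat.card P = p ^ (a + b) := by
    rw [Nat.card_congr e.toEquiv, Nat.card_congr Multiplicative.toAdd, Nat.card_prod,
      Nat.card_zmod, Nat.card_zmod, pow_add]
  have hmem : ∀ x : G, x ^ (p ^ (a + b)) = 1 → x ∈ P := by
    intro x hx
    have hpg : IsPGroup p (Subgroup.zpowers x) := by
      rw [IsPGroup.iff_card]
      obtain ⟨c, -, hc⟩ := (Nat.dvd_prime_pow hp).1 (orderOf_dvd_of_pow_eq_one hx)
      exact ⟨c, by rw [Nat.card_zpowers, hc]⟩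
    obtain ⟨Q, hQ⟩ := hpg.exists_le_sylow
    have := Sylow.unique_of_normal P inferInstance
    rw [Subsingleton.elim P Q]
    exact hQ (Subgroup.mem_zpowers x)
  have hker : (powMonoidHom (p ^ (a + b)) : G →* G).ker = (P : Subgroup G) := by
    ext x
    constructor
    · intro hx; exact hmem x hx
    · intro hx
      change x ^ _ = 1
      rw [pow_add, pow_mul, hexpP x hx, one_pow]
  let w : P := e.symm (Multiplicative.ofAdd (1, 0))
  refine ⟨w, hp, hb, hab, hexpP _ w.2, ?_, fun x hx => hexpP x (hmem x hx), ?_, ?_⟩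
  · intro hc
    have h1 : w ^ (p ^ (a - 1)) = 1 := Subtype.ext hc
    have h2 := congrArg e h1
    rw [map_pow, map_one, MulEquiv.apply_symm_apply] at h2
    have h3 := congrArg Multiplicative.toAdd h2
    rw [toAdd_pow, toAdd_one, toAdd_ofAdd] at h3
    have h4 := congrArg Prod.fst h3
    change (p ^ (a - 1)) • (1 : ZMod (p ^ a)) = 0 at h4
    rw [nsmul_eq_mul, mul_one, ZMod.natCast_eq_zero_iff] at h4
    have := (Nat.pow_dvd_pow_iff_le_right hp.one_lt).1 h4
    omega
  · rw [hker]; exact hcard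
  · refine ⟨(P : Subgroup G).index, ?_, P.not_dvd_index⟩
    rw [← hcard, ← Nat.card_eq_fintype_card]
    exact (Subgroup.card_mul_index _).symm

theorem main_thm
    (G : Type*) [CommGroup G] [Fintype G] (v : ℕ) (hv : Fintype.card G = v)
    (p : ℕ) (hp : p.Prime) (a b : ℕ) (ha : 1 ≤ a) (hb : 1 ≤ b) (hab : a ≠ b)
    (hsyl : ∀ P : Sylow p G,
      Nonempty (P ≃* Multiplicative (ZMod (p ^ a) × ZMod (p ^ b))))
    (k lam mu : ℕ) (D : Set G)
    (hpds : IsPDS D v k lam mu) (hreg : IsRegularPDS D) :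
    IsTrivialPDS D := by
  have P := pd_of_pds hpds hreg
  obtain ⟨a', b', w, S⟩ : ∃ a' b' w, Setup G p a' b' w := by
    obtain ⟨Q⟩ : Nonempty (Sylow p G) := inferInstance
    obtain ⟨e⟩ := hsyl Q
    rcases lt_or_gt_of_ne hab with h | h
    · exact ⟨b, a, setup_of hp ha h Q (e.trans (AddEquiv.toMultiplicative AddEquiv.prodComm))⟩
    · exact ⟨a, b, setup_of hp hb h Q e⟩
  obtain ⟨E, _, _, β, Γ⟩ := exists_bichar G
  by_cases h0 : ∃ g, g ∈ D
  swap
  · push Not at h0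
    left
    refine ⟨⊥, ?_⟩
    ext x
    simp [h0]
  by_cases h1 : ∃ g, g ∉ D ∧ g ≠ 1
  swap
  · push Not at h1
    left
    refine ⟨⊤, ?_⟩
    ext x
    by_cases hx : x ∈ D
    · simp [hx]
    · simp [h1 x hx]
  obtain ⟨g0, hg0⟩ := h0
  obtain ⟨g1, hg1, hg11⟩ := h1
  by_cases hsq : IsSquare (((lam : ℤ) - mu) ^ 2 + 4 * ((k : ℤ) - mu))
  · obtain ⟨δ, hδ⟩ := hsq
    exact square_case S β P |δ| (abs_nonneg δ) (by rw [hδ, sq_abs]; ring) g0 hg0 g1 hg1 hg11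
  · obtain ⟨f, F⟩ := sig_of_nonsquare β P hsq g0 hg0 g1 hg1 hg11
    exact (F.contra Γ S).elim

end

/-- Ma: if the abelian group `G` of order `v` has, for some prime `p`, a
Sylow `p`-subgroup isomorphic to `ℤ_{p^a} × ℤ_{p^b}` with `a ≠ b` (`a, b ≥ 1`), then every
regular partial difference set in `G` is trivial. -/
theorem no_nontrivial_pds_of_unbalanced_sylow
    (G : Type*) [CommGroup G] [Fintype G] (v : ℕ) (hv : Fintype.card G = v)
    (p : ℕ) (hp : p.Prime) (a b : ℕ) (ha : 1 ≤ a) (hb : 1 ≤ b) (hab : a ≠ b)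
    (hsyl : ∀ P : Sylow p G,
      Nonempty (P ≃* Multiplicative (ZMod (p ^ a) × ZMod (p ^ b))))
    (k lam mu : ℕ) (D : Set G)
    (hpds : IsPDS D v k lam mu) (hreg : IsRegularPDS D) :
    IsTrivialPDS D := by
  exact main_thm G v hv p hp a b ha hb hab hsyl k lam mu D hpds hreg
end

section
/- Let D be a nontrivial regular (v,k,λ,μ)-partial difference set in a finite abelian group G of order v, and set Δ = (λ−μ)² + 4(k−μ). Then Δ divides v², and the three integers v, Δ, and v²/Δ have exactly the same prime divisors: for every prime p, p ∣ v ⇔ p ∣ Δ ⇔ p ∣ v²/Δ. -/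
open Finset in
theorem pds_ring {G R : Type*} [CommGroup G] [Fintype G] [DecidableEq G] [CommRing R]
    (D : Finset G) (k lam mu : ℕ) (hk : #D = k)
    (hl : ∀ z ∈ D, #{h ∈ D | z * h ∈ D} = lam)
    (hm : ∀ z ∉ D, z ≠ 1 → #{h ∈ D | z * h ∈ D} = mu)
    (h1 : (1 : G) ∉ D) (hinv : ∀ g ∈ D, g⁻¹ ∈ D) (φ : G →* R) :
    (∑ g ∈ D, φ g) ^ 2 = ((k : R) - mu) + ((lam : R) - mu) * ∑ g ∈ D, φ g
      + mu * ∑ g, φ g := by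
  have e1 : ∑ h ∈ D, φ h = ∑ h ∈ D, φ h⁻¹ := by
    refine Finset.sum_nbij' (fun x => x⁻¹) (fun x => x⁻¹) ?_ ?_ ?_ ?_ ?_ <;> simp +contextual [hinv]
  have e2 : (∑ g ∈ D, φ g) ^ 2 = ∑ z : G, (#{h ∈ D | z * h ∈ D} : R) * φ z := by
    rw [sq]
    nth_rewrite 2 [e1]
    rw [Finset.sum_mul_sum, Finset.sum_comm]
    have : ∀ z : G, (#{h ∈ D | z * h ∈ D} : R) * φ z
        = ∑ h ∈ D, if z * h ∈ D then φ z else 0 := by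
      intro z
      rw [← Finset.sum_filter, Finset.sum_const, nsmul_eq_mul]
    simp_rw [this]
    rw [Finset.sum_comm (s := univ)]
    refine Finset.sum_congr rfl fun h _ => ?_
    rw [← Finset.sum_filter]
    refine Finset.sum_nbij' (fun x => x * h⁻¹) (fun x => x * h) ?_ ?_ ?_ ?_ ?_ <;> simp
  have e3 : ∀ z : G, (#{h ∈ D | z * h ∈ D} : R) * φ z
      = ((k : R) - mu) * (if z = 1 then 1 else 0)
        + ((lam : R) - mu) * (if z ∈ D then φ z else 0) + mu * φ z := by
    intro z
    by_cases hz1 : z = 1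
    · subst hz1
      have : #{h ∈ D | (1 : G) * h ∈ D} = k := by
        rw [← hk]; congr 1; ext; simp
      rw [this]; simp [h1]
    · by_cases hz : z ∈ D
      · rw [hl z hz]; simp [hz, hz1]; ring
      · rw [hm z hz hz1]; simp [hz, hz1]
  rw [e2]
  simp_rw [e3]
  rw [Finset.sum_add_distrib, Finset.sum_add_distrib, ← Finset.mul_sum, ← Finset.mul_sum,
    ← Finset.mul_sum]
  simp

theorem dvd_sum_pow {R ι : Type*} [CommRing R] (p : ℕ) (hp : p.Prime) (s : Finset ι) (a : ι → R)
    (h : ∀ i ∈ s, (p : R) ∣ a i ^ p) : (p : R) ∣ (∑ i ∈ s, a i) ^ p := by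
  classical
  induction s using Finset.induction_on with
  | empty => simp [hp.ne_zero]
  | insert i s hi ih =>
    rw [Finset.sum_insert hi]
    obtain ⟨r, hr⟩ := exists_add_pow_prime_eq hp (a i) (∑ j ∈ s, a j)
    rw [hr]
    refine dvd_add (dvd_add (h i (by simp)) (ih fun j hj => h j (by simp [hj]))) ?_
    exact ⟨a i * (∑ j ∈ s, a j) * r, by ring⟩

theorem dvd_root_sub {R : Type*} [CommRing R] (p : ℕ) (hp : p.Prime) (z y : R) (hz : z ^ p = 1) :
    (p : R) ∣ (z * y - y) ^ p := by
  obtain ⟨r, hr⟩ := exists_add_pow_prime_eq hp (z - 1) 1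
  have : z * y - y = (z - 1) * y := by ring
  rw [this, mul_pow]
  refine Dvd.dvd.mul_right ?_ _
  rw [sub_add_cancel, hz] at hr
  refine ⟨-((z-1)*1*r), ?_⟩
  linear_combination -hr + (one_pow p : (1:R)^p = 1)

theorem int_of_integral (n : ℚ) (h : IsIntegral ℤ (n : ℂ)) : ∃ m : ℤ, (m : ℚ) = n := by
  have : IsIntegral ℤ n := by
    have h2 : IsIntegral ℤ (algebraMap ℚ ℂ n) := by simpa using h
    exact (isIntegral_algebraMap_iff (algebraMap ℚ ℂ).injective).1 h2
  obtain ⟨m, hm⟩ := IsIntegrallyClosed.isIntegral_iff.1 this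
  exact ⟨m, by simpa using hm⟩

open Finset in
/-- The dual function. -/
theorem exists_F {G : Type*} [CommGroup G] [Fintype G] [DecidableEq G]
    (D : Finset G) (k lam mu : ℕ) (hk : #D = k)
    (hl : ∀ z ∈ D, #{h ∈ D | z * h ∈ D} = lam)
    (hm : ∀ z ∉ D, z ≠ 1 → #{h ∈ D | z * h ∈ D} = mu)
    (h1 : (1 : G) ∉ D) (hinv : ∀ g ∈ D, g⁻¹ ∈ D) (s : ℂ) (hs0 : s ≠ 0)
    (hs : s ^ 2 = ((lam : ℂ) - mu) ^ 2 + 4 * ((k : ℂ) - mu)) :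
    ∃ A : Finset (AddChar (Additive G) ℂ), ∀ h : G, h ≠ 1 →
      s * ∑ χ ∈ A, χ (Additive.ofMul h) = (Fintype.card G : ℂ) * (if h ∈ D then 1 else 0) - k
        + ((lam : ℂ) - mu - s) / 2 := by
  classical
  set t : ℂ := ((lam : ℂ) - mu - s) / 2 with ht
  let f : AddChar (Additive G) ℂ → ℂ := fun χ => ∑ g ∈ D, χ (Additive.ofMul g)
  have hf : ∀ χ : AddChar (Additive G) ℂ, χ ≠ 0 → f χ = t ∨ f χ = t + s := by
    intro χ hχ
    let φ : G →* ℂ :=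
      { toFun := fun g => χ (Additive.ofMul g)
        map_one' := by simp
        map_mul' := by intro a b; rw [ofMul_mul, AddChar.map_add_eq_mul] }
    have := pds_ring D k lam mu hk hl hm h1 hinv φ
    have hsum : ∑ g, φ g = 0 := by
      have h2 := AddChar.sum_eq_ite χ
      rw [if_neg hχ] at h2
      rw [← h2]
      exact Fintype.sum_equiv Additive.ofMul _ _ (fun _ => rfl)
    have hfe : ∑ g ∈ D, φ g = f χ := rfl
    rw [hsum, hfe] at this
    have h3 : (f χ - t) * (f χ - (t + s)) = 0 := by
      rw [ht]
      linear_combination this - hs / 4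
    rcases mul_eq_zero.1 h3 with h4 | h4
    · left; exact sub_eq_zero.1 h4
    · right; exact sub_eq_zero.1 h4
  refine ⟨Finset.univ.filter (fun χ => χ ≠ 0 ∧ f χ = t + s), fun h hh => ?_⟩
  have e1 : ∀ χ : AddChar (Additive G) ℂ, s * (if χ ≠ 0 ∧ f χ = t + s then χ (Additive.ofMul h) else 0)
      = f χ * χ (Additive.ofMul h) - t * χ (Additive.ofMul h) - (if χ = 0 then (k - t) else 0) := by
    intro χ
    by_cases h0 : χ = 0
    · subst h0
      simp [f, hk]
    · rcases hf χ h0 with h5 | h5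
      · simp [h0, h5, hs0]
      · simp [h0, h5]; ring
  rw [Finset.sum_filter, Finset.mul_sum]
  simp_rw [e1]
  rw [Finset.sum_sub_distrib, Finset.sum_sub_distrib, ← Finset.mul_sum, AddChar.sum_apply_eq_ite]
  have e2 : ∑ χ : AddChar (Additive G) ℂ, f χ * χ (Additive.ofMul h)
      = (Fintype.card G : ℂ) * (if h ∈ D then 1 else 0) := by
    have : ∀ χ : AddChar (Additive G) ℂ, f χ * χ (Additive.ofMul h)
        = ∑ g ∈ D, χ (Additive.ofMul (g * h)) := by
      intro χ
      simp only [f, Finset.sum_mul]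
      refine Finset.sum_congr rfl fun g _ => ?_
      rw [ofMul_mul, AddChar.map_add_eq_mul]
    simp_rw [this]
    rw [Finset.sum_comm]
    simp_rw [AddChar.sum_apply_eq_ite]
    have h6 : ∀ g : G, (Additive.ofMul (g * h) = 0) ↔ g = h⁻¹ := by
      intro g
      rw [ofMul_eq_zero, mul_eq_one_iff_eq_inv]
    simp_rw [h6]
    have h7 : h⁻¹ ∈ D ↔ h ∈ D := ⟨fun q => by simpa using hinv _ q, hinv h⟩
    simp [h7]
  rw [e2]
  simp [hh]
  ring

open Finset in
theorem mem_of_dvd {G : Type*} [CommGroup G] [Fintype G] [DecidableEq G]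
    (D : Finset G) (k lam mu : ℕ) (hk : #D = k)
    (hl : ∀ z ∈ D, #{h ∈ D | z * h ∈ D} = lam)
    (hm : ∀ z ∉ D, z ≠ 1 → #{h ∈ D | z * h ∈ D} = mu)
    (h1 : (1 : G) ∉ D) (hinv : ∀ g ∈ D, g⁻¹ ∈ D)
    (nt1 : ¬ ∀ a ∈ D, ∀ b ∈ D, a * b ≠ 1 → a * b ∈ D)
    (nt2 : ¬ ∀ a ∉ D, ∀ b ∉ D, a * b⁻¹ ∉ D) (x : G) (hx1 : x ≠ 1) :
    ∃ y, y ≠ 1 ∧ x * y ≠ 1 ∧ ¬ (x * y ∈ D ↔ y ∈ D) := by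
  by_contra! hcon
  by_cases hx : x ∈ D
  · apply nt1
    have key : ∀ z ∈ D, #{h ∈ D | z * h ∈ D} + #{h ∈ D | z * h ∉ D} = k := by
      intro z _
      rw [← hk]; exact Finset.card_filter_add_card_filter_not _
    have hx2 : #{h ∈ D | x * h ∉ D} = 1 := by
      rw [Finset.card_eq_one]
      refine ⟨x⁻¹, ?_⟩
      ext y
      simp only [mem_filter, mem_singleton]
      constructor
      · rintro ⟨hy, hxy⟩
        by_contra hne
        have := hcon y (by rintro rfl; exact h1 hy) (by
          intro h; exact hne (eq_inv_of_mul_eq_one_right h))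
        tauto
      · rintro rfl
        exact ⟨hinv _ hx, by simpa using h1⟩
    intro a ha b hb hab
    by_contra hab2
    have h3 := key x hx
    have h4 := key a ha
    rw [hl x hx] at h3
    rw [hl a ha] at h4
    have h5 : #{h ∈ D | a * h ∉ D} = 1 := by omega
    have h6 := Finset.card_le_one.1 h5.le b (by simp [hb, hab2]) a⁻¹ (by simp [hinv _ ha, h1])
    apply hab; rw [h6]; simp
  · apply nt2
    have hkm : mu = k := by
      rw [← hm x hx hx1, ← hk]
      congr 1
      rw [Finset.filter_eq_self]
      intro y hy
      refine (hcon y (by rintro rfl; exact h1 hy) ?_).2 hy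
      intro h
      have := hinv _ hy
      rw [← eq_inv_of_mul_eq_one_left h] at this
      exact hx this
    have key : ∀ a ∉ D, ∀ h ∈ D, a * h ∈ D := by
      intro a ha h hh
      by_cases ha1 : a = 1
      · simpa [ha1] using hh
      · have h3 := hm a ha ha1
        rw [hkm, ← hk] at h3
        exact (Finset.card_filter_eq_iff.1 h3) h hh
    intro a ha b hb hab
    have := key b hb _ hab
    rw [mul_comm, inv_mul_cancel_right] at this
    exact ha this

theorem char_integral {G : Type*} [CommGroup G] [Fintype G]
    (χ : AddChar (Additive G) ℂ) (g : G) : IsIntegral ℤ (χ (Additive.ofMul g)) := by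
  refine IsIntegral.of_pow (n := Fintype.card G) Fintype.card_pos ?_
  rw [← AddChar.map_nsmul_eq_pow, ← ofMul_pow, pow_card_eq_one]
  simpa using isIntegral_one

open Finset in
theorem part_dual {G : Type*} [CommGroup G] [Fintype G] [DecidableEq G]
    (D : Finset G) (k lam mu : ℕ) (hk : #D = k)
    (hl : ∀ z ∈ D, #{h ∈ D | z * h ∈ D} = lam)
    (hm : ∀ z ∉ D, z ≠ 1 → #{h ∈ D | z * h ∈ D} = mu)
    (h1 : (1 : G) ∉ D) (hinv : ∀ g ∈ D, g⁻¹ ∈ D)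
    (nt1 : ¬ ∀ a ∈ D, ∀ b ∈ D, a * b ≠ 1 → a * b ∈ D)
    (nt2 : ¬ ∀ a ∉ D, ∀ b ∉ D, a * b⁻¹ ∉ D)
    (Δ : ℤ) (hΔ : Δ = ((lam : ℤ) - mu) ^ 2 + 4 * ((k : ℤ) - mu)) (hΔ0 : Δ ≠ 0) :
    ∃ n : ℤ, (Fintype.card G : ℤ) ^ 2 = Δ * n ∧
      ∀ p : ℕ, p.Prime → p ∣ Fintype.card G → (p : ℤ) ∣ n := by
  classical
  obtain ⟨s, hs⟩ := IsAlgClosed.exists_pow_nat_eq (Δ : ℂ) (n := 2) (by norm_num)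
  have hs0 : s ≠ 0 := by
    rintro rfl
    apply hΔ0
    have : (Δ : ℂ) = 0 := by rw [← hs]; simp
    exact_mod_cast this
  obtain ⟨A, hA⟩ := exists_F D k lam mu hk hl hm h1 hinv s hs0 (by
    rw [hs, hΔ]; push_cast; ring)
  set v := Fintype.card G with hv
  have hdiff : ∀ a b : G, a ≠ 1 → b ≠ 1 → ¬ (a ∈ D ↔ b ∈ D) →
      (∑ χ ∈ A, (χ (Additive.ofMul a) - χ (Additive.ofMul b))) ^ 2
        = (((v : ℚ) ^ 2 / Δ : ℚ) : ℂ) := by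
    intro a b ha hb hab
    have ea := hA a ha
    have eb := hA b hb
    push_cast
    rw [Finset.sum_sub_distrib, ← hs, eq_div_iff (pow_ne_zero _ hs0), ← mul_pow, sub_mul,
      mul_comm _ s, mul_comm _ s, ea, eb]
    by_cases hda : a ∈ D
    · have : b ∉ D := by tauto
      simp [hda, this]
    · have : b ∈ D := by tauto
      simp [hda, this]
      ring
  have hint : ∃ n : ℤ, (n : ℚ) = (v : ℚ) ^ 2 / Δ := by
    have : ∃ x : G, x ≠ 1 := by
      by_contra! h
      apply nt1
      intro a ha
      rw [h a] at ha
      exact absurd ha h1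
    obtain ⟨x, hx⟩ := this
    obtain ⟨y, hy, hxy, hh⟩ := mem_of_dvd D k lam mu hk hl hm h1 hinv nt1 nt2 x hx
    apply int_of_integral
    rw [← hdiff _ _ hxy hy hh]
    exact (IsIntegral.sum _ fun χ _ => (char_integral χ _).sub (char_integral χ _)).pow 2
  obtain ⟨n, hn⟩ := hint
  have hΔq : (Δ : ℚ) ≠ 0 := by exact_mod_cast hΔ0
  refine ⟨n, ?_, ?_⟩
  · have : ((v : ℚ)) ^ 2 = Δ * n := by rw [hn]; field_simp
    exact_mod_cast this
  · intro p hp hpv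
    have := Fact.mk hp
    obtain ⟨x, hx⟩ := exists_prime_orderOf_dvd_card p hpv
    have hx1 : x ≠ 1 := by
      rintro rfl
      rw [orderOf_one] at hx
      exact hp.one_lt.ne hx
    obtain ⟨y, hy, hxy, hh⟩ := mem_of_dvd D k lam mu hk hl hm h1 hinv nt1 nt2 x hx1
    have hd := hdiff _ _ hxy hy hh
    let R := integralClosure ℤ ℂ
    let c : AddChar (Additive G) ℂ → G → R := fun χ g => ⟨χ (Additive.ofMul g), char_integral χ g⟩
    have hdv : (p : R) ∣ (∑ χ ∈ A, (c χ x * c χ y - c χ y)) ^ p := by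
      apply dvd_sum_pow p hp
      intro χ _
      apply dvd_root_sub p hp
      apply Subtype.ext
      change (χ (Additive.ofMul x)) ^ p = 1
      rw [← AddChar.map_nsmul_eq_pow, ← ofMul_pow, ← hx, pow_orderOf_eq_one]
      simp
    obtain ⟨w, hw⟩ := hdv
    have hw' : (∑ χ ∈ A, (χ (Additive.ofMul (x * y)) - χ (Additive.ofMul y))) ^ p = p * (w : ℂ) := by
      have h8 := congrArg (algebraMap R ℂ) hw
      rw [map_pow, map_sum, map_mul, map_natCast] at h8
      rw [← show algebraMap R ℂ w = (w : ℂ) from rfl, ← h8]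
      congr 1
      refine Finset.sum_congr rfl fun χ _ => ?_
      rw [ofMul_mul, AddChar.map_add_eq_mul]
      rfl
    have h9 : ((((n : ℚ) ^ p / p ^ 2 : ℚ)) : ℂ) = (w : ℂ) ^ 2 := by
      have hp0 : (p : ℂ) ≠ 0 := by exact_mod_cast hp.ne_zero
      rw [hn]
      rw [Rat.cast_div, Rat.cast_pow, ← hd, ← pow_mul, mul_comm 2 p, pow_mul, hw']
      push_cast
      field_simp
    obtain ⟨m, hm'⟩ := int_of_integral ((n : ℚ) ^ p / p ^ 2) (by
      rw [h9]; exact (show IsIntegral ℤ (w : ℂ) from w.2).pow 2)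
    have hp0 : (p : ℚ) ≠ 0 := by exact_mod_cast hp.ne_zero
    have h10 : (n : ℚ) ^ p = p * (p * m) := by
      rw [hm']; field_simp
    have h11 : n ^ p = p * (p * m) := by exact_mod_cast h10
    exact (Nat.prime_iff_prime_int.1 hp).dvd_of_dvd_pow ⟨_, h11⟩

open Finset in
theorem frob_rel {G R : Type*} [CommGroup G] [Fintype G] [DecidableEq G] [CommRing R]
    (D : Finset G) (k lam mu : ℕ) (hk : #D = k)
    (hl : ∀ z ∈ D, #{h ∈ D | z * h ∈ D} = lam)
    (hm : ∀ z ∉ D, z ≠ 1 → #{h ∈ D | z * h ∈ D} = mu)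
    (h1 : (1 : G) ∉ D) (hinv : ∀ g ∈ D, g⁻¹ ∈ D)
    (Δ : ℤ) (hΔ : Δ = ((lam : ℤ) - mu) ^ 2 + 4 * ((k : ℤ) - mu))
    (p : ℕ) (hp : p.Prime) (hpΔ : ¬ (p : ℤ) ∣ Δ) [CharP R p] (φ : G →* R) :
    ∃ a' a b c : ℤ, ¬ (p : ℤ) ∣ a ∧
      a' * (∑ g ∈ D, φ (g ^ p)) = a * (∑ g ∈ D, φ g) + b + c * ∑ g, φ g := by
  have := Fact.mk hp
  have hpp : Prime (p : ℤ) := Nat.prime_iff_prime_int.1 hp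
  have hX := pds_ring D k lam mu hk hl hm h1 hinv φ
  have hF : ∑ g ∈ D, φ (g ^ p) = (∑ g ∈ D, φ g) ^ p := by
    rw [sum_pow_char]
    simp only [map_pow]
  rw [hF]
  have hφJ : ∀ g, φ g * (∑ g, φ g) = ∑ g, φ g := by
    intro g
    rw [Finset.mul_sum]
    exact Fintype.sum_equiv (Equiv.mulLeft g) _ _ (fun _ => by simp)
  have hXJ : (∑ g ∈ D, φ g) * (∑ g, φ g) = k * (∑ g, φ g) := by
    rw [Finset.sum_mul, Finset.sum_congr rfl (fun g _ => hφJ g), Finset.sum_const, hk,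
      nsmul_eq_mul]
  have hJJ : (∑ g, φ g) * (∑ g, φ g) = (Fintype.card G : R) * (∑ g, φ g) := by
    rw [Finset.sum_mul, Finset.sum_congr rfl (fun g _ => hφJ g), Finset.sum_const,
      Finset.card_univ, nsmul_eq_mul]
  generalize (∑ g ∈ D, φ g) = X at *
  generalize (∑ g, φ g) = J at *
  rcases hp.eq_two_or_odd' with h2 | ⟨m, hmp⟩
  · refine ⟨1, (lam : ℤ) - mu, (k : ℤ) - mu, mu, ?_, ?_⟩
    · intro hd
      apply hpΔ
      rw [hΔ]
      refine dvd_add (dvd_pow hd (by norm_num)) ?_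
      rw [h2]
      exact ⟨2 * ((k : ℤ) - mu), by push_cast; ring⟩
    · subst h2
      rw [hX]; push_cast; ring
  · set β : ℤ := (lam : ℤ) - mu with hβ
    have hT : (2 * X - (β : R)) ^ 2 = (Δ : R) + ((4 * mu : ℤ) : R) * J := by
      rw [hΔ, hβ]; push_cast; linear_combination 4 * hX
    have hTm : ∀ m : ℕ, ∃ c : ℤ, ((2 * X - (β : R)) ^ 2) ^ m = (Δ : R) ^ m + (c : R) * J := by
      intro m
      induction m with
      | zero => exact ⟨0, by simp⟩
      | succ m ih =>
        obtain ⟨c, hc⟩ := ih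
        refine ⟨c * Δ + Δ ^ m * (4 * mu) + c * (4 * mu) * Fintype.card G, ?_⟩
        rw [pow_succ, hc, hT]
        push_cast
        linear_combination (c : R) * (4 * mu) * hJJ
    obtain ⟨c, hc⟩ := hTm m
    have hTp : (2 * X - (β : R)) ^ p = 2 * X ^ p - β := by
      rw [sub_pow_char, mul_pow]
      congr 1
      · congr 1
        have h3 := congrArg (ZMod.castHom (dvd_refl p) R) (ZMod.pow_card (2 : ZMod p))
        rw [map_pow, map_ofNat] at h3
        exact h3
      · have h3 := congrArg (ZMod.castHom (dvd_refl p) R) (ZMod.pow_card (β : ZMod p))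
        rw [map_pow, map_intCast] at h3
        exact h3
    have hTp2 : (2 * X - (β : R)) ^ p = ((Δ : R) ^ m + c * J) * (2 * X - β) := by
      rw [← hc, ← pow_mul, ← pow_succ, hmp]
    refine ⟨2, 2 * Δ ^ m, β - Δ ^ m * β, c * (2 * k - β), ?_, ?_⟩
    · intro hd
      rcases hpp.dvd_or_dvd hd with h | h
      · have h4 : p ∣ 2 := by exact_mod_cast h
        have h5 := (Nat.prime_dvd_prime_iff_eq hp Nat.prime_two).1 h4
        omega
      · exact hpΔ (hpp.dvd_of_dvd_pow h)
    · push_cast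
      linear_combination hTp2 - hTp + 2 * (c : R) * hXJ

open Finset in
/-- The direct half. -/
theorem part_direct {G : Type*} [CommGroup G] [Fintype G] [DecidableEq G]
    (D : Finset G) (k lam mu : ℕ) (hk : #D = k)
    (hl : ∀ z ∈ D, #{h ∈ D | z * h ∈ D} = lam)
    (hm : ∀ z ∉ D, z ≠ 1 → #{h ∈ D | z * h ∈ D} = mu)
    (h1 : (1 : G) ∉ D) (hinv : ∀ g ∈ D, g⁻¹ ∈ D)
    (Δ : ℤ) (hΔ : Δ = ((lam : ℤ) - mu) ^ 2 + 4 * ((k : ℤ) - mu))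
    (p : ℕ) (hp : p.Prime) (hpΔ : ¬ (p : ℤ) ∣ Δ) :
    ∀ x y : G, (∀ g, g ^ p ≠ x) → (∀ g, g ^ p ≠ y) → (x ∈ D ↔ y ∈ D) := by
  have := Fact.mk hp
  have hch : CharP (MonoidAlgebra (ZMod p) G) p :=
    charP_of_injective_algebraMap (algebraMap (ZMod p) (MonoidAlgebra (ZMod p) G)).injective p
  obtain ⟨a', a, b, c, ha, hrel⟩ := frob_rel D k lam mu hk hl hm h1 hinv Δ hΔ p hp hpΔ
    (MonoidAlgebra.of (ZMod p) G)
  have hco : ∀ x : G, (∀ g, g ^ p ≠ x) →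
      (0 : ZMod p) = a * (if x ∈ D then 1 else 0) + c := by
    intro x hx
    let L : MonoidAlgebra (ZMod p) G →+ ZMod p :=
      (Finsupp.applyAddHom x).comp MonoidAlgebra.coeffAddEquiv.toAddMonoidHom
    have hL : ∀ g : G, L (MonoidAlgebra.of (ZMod p) G g) = if g = x then 1 else 0 := by
      intro g
      change (MonoidAlgebra.single g (1 : ZMod p)).coeff x = _
      rw [MonoidAlgebra.coeff_single, Finsupp.single_apply]
    have hx1 : (1 : G) ≠ x := by
      intro h; exact hx 1 (by simpa using h)
    have h2 := congrArg L hrel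
    have hb : (b : MonoidAlgebra (ZMod p) G) = b • MonoidAlgebra.of (ZMod p) G 1 := by
      rw [map_one, zsmul_one]
    rw [hb, ← zsmul_eq_mul, ← zsmul_eq_mul, ← zsmul_eq_mul, map_add, map_add, map_zsmul,
      map_zsmul, map_zsmul, map_zsmul, map_sum, map_sum, map_sum] at h2
    simp only [hL, hx, hx1] at h2
    simpa using h2
  intro x y hx hy
  have h3 := (hco x hx).symm.trans (hco y hy)
  have ha0 : (a : ZMod p) ≠ 0 := by
    rwa [Ne, ZMod.intCast_zmod_eq_zero_iff_dvd]
  by_cases hxD : x ∈ D <;> by_cases hyD : y ∈ D <;> simp [hxD, hyD, ha0] at h3 ⊢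

open Finset in
theorem part_direct' {G : Type*} [CommGroup G] [Fintype G] [DecidableEq G]
    (D : Finset G) (k lam mu : ℕ) (hk : #D = k)
    (hl : ∀ z ∈ D, #{h ∈ D | z * h ∈ D} = lam)
    (hm : ∀ z ∉ D, z ≠ 1 → #{h ∈ D | z * h ∈ D} = mu)
    (h1 : (1 : G) ∉ D) (hinv : ∀ g ∈ D, g⁻¹ ∈ D)
    (nt1 : ¬ ∀ a ∈ D, ∀ b ∈ D, a * b ≠ 1 → a * b ∈ D)
    (nt2 : ¬ ∀ a ∉ D, ∀ b ∉ D, a * b⁻¹ ∉ D)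
    (Δ : ℤ) (hΔ : Δ = ((lam : ℤ) - mu) ^ 2 + 4 * ((k : ℤ) - mu))
    (p : ℕ) (hp : p.Prime) (hpv : p ∣ Fintype.card G) : (p : ℤ) ∣ Δ := by
  by_contra hpΔ
  have hc := part_direct D k lam mu hk hl hm h1 hinv Δ hΔ p hp hpΔ
  have := Fact.mk hp
  let K : Subgroup G := (powMonoidHom p : G →* G).range
  have hK : ∀ x, (∀ g, g ^ p ≠ x) ↔ x ∉ K := by
    intro x; simp [K, MonoidHom.mem_range]
  obtain ⟨x, hx⟩ : ∃ x, x ∉ K := by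
    by_contra! hall
    have hsurj : Function.Surjective (fun g : G => g ^ p) := by
      intro y
      obtain ⟨g, hg⟩ := hall y
      exact ⟨g, hg⟩
    have hinj := Finite.injective_iff_surjective.2 hsurj
    obtain ⟨x, hx⟩ := exists_prime_orderOf_dvd_card p hpv
    have hx1 : x = 1 := hinj (by simp [← hx, pow_orderOf_eq_one])
    rw [hx1, orderOf_one] at hx
    exact hp.one_lt.ne hx
  have hx1 : x ≠ 1 := by rintro rfl; exact hx K.one_mem
  by_cases hxD : x ∈ D
  · have hE : ∀ y, y ∉ D → y ∈ K := by
      intro y hy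
      by_contra hyK
      exact hy ((hc x y ((hK x).2 hx) ((hK y).2 hyK)).1 hxD)
    have key : ∀ z : G, #{h ∈ D | z * h ∈ D} + Fintype.card G
        = 2 * k + #{h : G | h ∉ D ∧ z * h ∉ D} := by
      intro z
      have e1 : #{h : G | z * h ∈ D} = k := by
        rw [← hk]
        refine Finset.card_nbij' (fun h => z * h) (fun h => z⁻¹ * h) ?_ ?_ ?_ ?_ <;>
          simp [Set.MapsTo, Set.LeftInvOn]
      have e2 : #(D ∪ ({h : G | z * h ∈ D} : Finset G)) + #(D ∩ ({h : G | z * h ∈ D} : Finset G))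
          = #D + #{h : G | z * h ∈ D} := Finset.card_union_add_card_inter _ _
      have e3 : D ∩ ({h : G | z * h ∈ D} : Finset G) = {h ∈ D | z * h ∈ D} := by ext; simp
      have e4 := Finset.card_add_card_compl (D ∪ ({h : G | z * h ∈ D} : Finset G))
      have e5 : (D ∪ ({h : G | z * h ∈ D} : Finset G))ᶜ = ({h : G | h ∉ D ∧ z * h ∉ D} : Finset G) := by
        ext; simp
      rw [e5] at e4
      rw [e3] at e2
      omega
    have hx0 : #{h : G | h ∉ D ∧ x * h ∉ D} = 0 := by
      rw [Finset.card_eq_zero, Finset.filter_eq_empty_iff]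
      rintro h - ⟨h2, h3⟩
      exact hx ((Subgroup.mul_mem_cancel_right K (hE h h2)).1 (hE _ h3))
    apply nt2
    intro a ha b hb hab
    have k1 := key x
    have k2 := key (a * b⁻¹)
    rw [hl x hxD] at k1
    rw [hl _ hab] at k2
    have h0 : #{h : G | h ∉ D ∧ (a * b⁻¹) * h ∉ D} = 0 := by omega
    rw [Finset.card_eq_zero, Finset.filter_eq_empty_iff] at h0
    exact h0 (mem_univ b) ⟨hb, by simpa using ha⟩
  · have hD : ∀ y ∈ D, y ∈ K := by
      intro y hy
      by_contra hyK
      exact hxD ((hc x y ((hK x).2 hx) ((hK y).2 hyK)).2 hy)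
    have hmu : mu = 0 := by
      rw [← hm x hxD hx1, Finset.card_eq_zero, Finset.filter_eq_empty_iff]
      intro h hh h3
      exact hx ((Subgroup.mul_mem_cancel_right K (hD h hh)).1 (hD _ h3))
    apply nt1
    intro a ha b hb hab
    by_contra hab2
    have h0 := hm _ hab2 hab
    rw [hmu, Finset.card_eq_zero, Finset.filter_eq_empty_iff] at h0
    exact h0 (hinv b hb) (by simpa using ha)

open Finset in
theorem delta_pos {G : Type*} [CommGroup G] [Fintype G] [DecidableEq G]
    (D : Finset G) (k lam mu : ℕ) (hk : #D = k)
    (hl : ∀ z ∈ D, #{h ∈ D | z * h ∈ D} = lam)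
    (hm : ∀ z ∉ D, z ≠ 1 → #{h ∈ D | z * h ∈ D} = mu)
    (h1 : (1 : G) ∉ D) (hinv : ∀ g ∈ D, g⁻¹ ∈ D)
    (nt1 : ¬ ∀ a ∈ D, ∀ b ∈ D, a * b ≠ 1 → a * b ∈ D)
    (Δ : ℤ) (hΔ : Δ = ((lam : ℤ) - mu) ^ 2 + 4 * ((k : ℤ) - mu)) : 0 < Δ := by
  push Not at nt1
  obtain ⟨a, ha, b, hb, hab, habD⟩ := nt1
  have h2 : mu ≤ k := by
    rw [← hm _ habD hab, ← hk]; exact Finset.card_filter_le _ _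
  have h3 : lam < k := by
    rw [← hl a ha, ← hk]
    apply Finset.card_lt_card
    rw [Finset.filter_ssubset]
    exact ⟨a⁻¹, hinv a ha, by simpa using h1⟩
  rw [hΔ]
  rcases h2.lt_or_eq with h | h
  · have : (mu : ℤ) < k := by exact_mod_cast h
    nlinarith [sq_nonneg ((lam : ℤ) - mu)]
  · have h4 : (lam : ℤ) < k := by exact_mod_cast h3
    have h5 : (mu : ℤ) = k := by exact_mod_cast h
    have : (0 : ℤ) < ((lam : ℤ) - mu) ^ 2 := by
      have h6 : (lam : ℤ) - mu ≠ 0 := by omega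
      positivity
    linarith

/-- Ma: if `D` is a nontrivial regular `(v,k,λ,μ)` partial difference set
in a finite abelian group `G` and `Δ = (λ-μ)² + 4(k-μ)`, then `Δ ∣ v²` and `v`, `Δ` and
`v²/Δ` have exactly the same prime divisors. -/
theorem same_prime_divisors_v_delta
    (G : Type*) [CommGroup G] [Fintype G] (v k lam mu : ℕ) (D : Set G)
    (hpds : IsPDS D v k lam mu) (hreg : IsRegularPDS D) (hnt : ¬ IsTrivialPDS D)
    (Δ : ℤ) (hΔ : Δ = ((lam : ℤ) - mu) ^ 2 + 4 * ((k : ℤ) - mu)) :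
    Δ ∣ (v : ℤ) ^ 2 ∧
    ∀ q : ℕ, q.Prime →
      (((q : ℤ) ∣ (v : ℤ)) ↔ ((q : ℤ) ∣ Δ)) ∧
      (((q : ℤ) ∣ Δ) ↔ ((q : ℤ) ∣ (v : ℤ) ^ 2 / Δ)) := by
  classical
  obtain ⟨hv, hk, hl, hm⟩ := hpds
  obtain ⟨h1, hinv⟩ := hreg
  have hN : ∀ z : G, z ≠ 1 →
      {p : G × G | p.1 ∈ D ∧ p.2 ∈ D ∧ p.1 ≠ p.2 ∧ p.1 * p.2⁻¹ = z}.ncard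
        = (D.toFinset.filter (fun h => z * h ∈ D.toFinset)).card := by
    intro z hz
    rw [← Set.ncard_coe_finset]
    refine Set.ncard_congr (fun p _ => p.2) ?_ ?_ ?_
    · rintro ⟨g, h⟩ ⟨hg, hh, -, hgh⟩
      simp only at hg hh hgh
      simp [hh, ← hgh, hg]
    · rintro ⟨g, h⟩ ⟨g', h'⟩ ⟨-, -, -, e⟩ ⟨-, -, -, e'⟩ hhh
      simp only at e e' hhh
      subst hhh
      have : g = g' := mul_right_cancel (e.trans e'.symm)
      rw [this]
    · intro h hh
      simp only [Finset.coe_filter, Set.mem_toFinset, Set.mem_ofPred_eq] at hh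
      refine ⟨(z * h, h), ⟨hh.2, hh.1, ?_, by simp⟩, rfl⟩
      simpa using hz
  have hk' : D.toFinset.card = k := by rw [← hk, Set.ncard_eq_toFinset_card']
  have h1' : (1 : G) ∉ D.toFinset := by simpa using h1
  have hl' : ∀ z ∈ D.toFinset, (D.toFinset.filter (fun h => z * h ∈ D.toFinset)).card = lam := by
    intro z hz
    have hz1 : z ≠ 1 := by rintro rfl; exact h1' hz
    rw [← hN z hz1]
    exact hl z hz1 (by simpa using hz)
  have hm' : ∀ z ∉ D.toFinset, z ≠ 1 →
      (D.toFinset.filter (fun h => z * h ∈ D.toFinset)).card = mu := by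
    intro z hz hz1
    rw [← hN z hz1]
    exact hm z hz1 (by simpa using hz)
  have hinv' : ∀ g ∈ D.toFinset, g⁻¹ ∈ D.toFinset := by
    intro g hg
    simpa using hinv g (by simpa using hg)
  have nt1 : ¬ ∀ a ∈ D.toFinset, ∀ b ∈ D.toFinset, a * b ≠ 1 → a * b ∈ D.toFinset := by
    intro h
    simp only [Set.mem_toFinset] at h
    apply hnt
    left
    refine ⟨{ carrier := D ∪ {1}, mul_mem' := ?_, one_mem' := by simp, inv_mem' := ?_ }, rfl⟩
    · rintro a b (ha | ha) (hb | hb)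
      · by_cases hab : a * b = 1
        · right; exact hab
        · left; exact h a ha b hb hab
      · rw [Set.mem_singleton_iff] at hb; subst hb; left; simpa using ha
      · rw [Set.mem_singleton_iff] at ha; subst ha; left; simpa using hb
      · rw [Set.mem_singleton_iff] at ha hb; subst ha hb; right; simp
    · rintro a (ha | ha)
      · left; exact hinv a ha
      · rw [Set.mem_singleton_iff] at ha; subst ha; right; simp
  have nt2 : ¬ ∀ a ∉ D.toFinset, ∀ b ∉ D.toFinset, a * b⁻¹ ∉ D.toFinset := by
    intro h
    simp only [Set.mem_toFinset] at h
    apply hnt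
    right
    have hi : ∀ a ∉ D, a⁻¹ ∉ D := fun a ha => by simpa using h 1 h1 a ha
    refine ⟨{ carrier := Dᶜ, mul_mem' := ?_, one_mem' := h1, inv_mem' := ?_ }, rfl⟩
    · intro a b ha hb
      have := h a ha b⁻¹ (hi b hb)
      rwa [inv_inv] at this
    · intro a ha
      exact hi a ha
  have hpos := delta_pos D.toFinset k lam mu hk' hl' hm' h1' hinv' nt1 Δ hΔ
  have hdir := part_direct' D.toFinset k lam mu hk' hl' hm' h1' hinv' nt1 nt2 Δ hΔ
  obtain ⟨n, hn, hdual⟩ :=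
    part_dual D.toFinset k lam mu hk' hl' hm' h1' hinv' nt1 nt2 Δ hΔ hpos.ne'
  rw [Nat.card_eq_fintype_card] at hv
  rw [hv] at hn hdir hdual
  have hdiv : (v : ℤ) ^ 2 / Δ = n := by
    rw [hn]; exact Int.mul_ediv_cancel_left _ hpos.ne'
  refine ⟨⟨n, hn⟩, fun q hq => ?_⟩
  have hqp : Prime (q : ℤ) := Nat.prime_iff_prime_int.1 hq
  have a1 : (q : ℤ) ∣ v → (q : ℤ) ∣ Δ := fun h => hdir q hq (by exact_mod_cast h)
  have a2 : (q : ℤ) ∣ v → (q : ℤ) ∣ n := fun h => hdual q hq (by exact_mod_cast h)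
  have a3 : (q : ℤ) ∣ Δ → (q : ℤ) ∣ v := fun h =>
    hqp.dvd_of_dvd_pow (hn ▸ Dvd.dvd.mul_right h n)
  have a4 : (q : ℤ) ∣ n → (q : ℤ) ∣ v := fun h =>
    hqp.dvd_of_dvd_pow (hn ▸ Dvd.dvd.mul_left h Δ)
  rw [hdiv]
  exact ⟨⟨a1, a3⟩, ⟨fun h => a2 (a3 h), fun h => a1 (a4 h)⟩⟩
end
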